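/- Let κ > 0, η > 0, M > 20 and β ∈ (0,1). Then there exists f₀ > 0 such that for every f ∈ (0, f₀) and every z ∈ ℂ with Im z ≤ 0 and D_f(z) = 0, at least one of the following holds (Arg denotes the principal argument with values in (−π, π], and log the natural logarithm): (a) f^{2/(3β)} ≤ |z| ≤ f^{β/2}; (b) |z| > f^{β/2} and |Arg(z) + 2π/3| < |z|⁻¹·(1 + |z|^{−1/2})·M·f·log(f⁻¹ + |z|); (c) |z| > f^{β/2} and |Arg(z)| < |z|^{−3/2}·M·f·log(f⁻¹ + |z|). -/

import Mathlib

open Real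

/-- Taylor coefficients of the Airy function `Ai`:
`a₀ = 3^{−2/3}/Γ(2/3)`, `a₁ = −3^{−1/3}/Γ(1/3)`, `a₂ = 0`,
`a_{k+3} = a_k/((k+3)(k+2))`. -/
noncomputable def airyCoeff : ℕ → ℂ
  | 0 => (3 : ℂ) ^ (-(2 : ℂ) / 3) / Complex.Gamma (2 / 3)
  | 1 => -((3 : ℂ) ^ (-(1 : ℂ) / 3) / Complex.Gamma (1 / 3))
  | 2 => 0
  | (k + 3) => airyCoeff k / (((k : ℂ) + 3) * ((k : ℂ) + 2))

/-- The Airy function `Ai`, as the entire function with the above Taylor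
coefficients at `0`. -/
noncomputable def Ai (z : ℂ) : ℂ := ∑' k : ℕ, airyCoeff k * z ^ k

/-- `ω = e^{2πi/3}` -/
noncomputable def ωc : ℂ := Complex.exp (2 * π * Complex.I / 3)

/-- `W = f^{1/3}·e^{−iπ/6}/(2π)` -/
noncomputable def Wf (f : ℝ) : ℂ :=
  ((f ^ ((1 : ℝ) / 3) : ℝ) : ℂ) * Complex.exp (-(π : ℂ) * Complex.I / 6) / (2 * π)

/-- `α₊(z) = Ai(−ω(z − κf)f^{−2/3})·Ai(−(z − κf)f^{−2/3})` -/
noncomputable def alphaP (κ f : ℝ) (z : ℂ) : ℂ :=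
  Ai (-ωc * (z - κ * f) * ((f ^ (-(2 : ℝ) / 3) : ℝ) : ℂ)) *
    Ai (-(z - κ * f) * ((f ^ (-(2 : ℝ) / 3) : ℝ) : ℂ))

/-- `α₋(z) = Ai(−ω(z + κf)f^{−2/3})·Ai(−(z + κf)f^{−2/3})` -/
noncomputable def alphaM (κ f : ℝ) (z : ℂ) : ℂ :=
  Ai (-ωc * (z + κ * f) * ((f ^ (-(2 : ℝ) / 3) : ℝ) : ℂ)) *
    Ai (-(z + κ * f) * ((f ^ (-(2 : ℝ) / 3) : ℝ) : ℂ))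

/-- `β₊(z) = Ai(−ω(z + κf)f^{−2/3})·Ai(−(z − κf)f^{−2/3})` -/
noncomputable def betaP (κ f : ℝ) (z : ℂ) : ℂ :=
  Ai (-ωc * (z + κ * f) * ((f ^ (-(2 : ℝ) / 3) : ℝ) : ℂ)) *
    Ai (-(z - κ * f) * ((f ^ (-(2 : ℝ) / 3) : ℝ) : ℂ))

/-- `β₋(z) = Ai(−ω(z − κf)f^{−2/3})·Ai(−(z + κf)f^{−2/3})` -/
noncomputable def betaM (κ f : ℝ) (z : ℂ) : ℂ :=
  Ai (-ωc * (z - κ * f) * ((f ^ (-(2 : ℝ) / 3) : ℝ) : ℂ)) *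
    Ai (-(z + κ * f) * ((f ^ (-(2 : ℝ) / 3) : ℝ) : ℂ))

/-- The resonance determinant `D_f` of the Stark Hamiltonian
`p² + fx + η⁻¹(δ_κ + δ_{−κ})`:
`D_f(z) = 1 + (α₊ + α₋)/(ηW) + β₊(β₋ − β₊)/(η²W²)`. -/
noncomputable def Df (κ η f : ℝ) (z : ℂ) : ℂ :=
  1 + (alphaP κ f z + alphaM κ f z) / (η * Wf f)
    + betaP κ f z * (betaM κ f z - betaP κ f z) / (η ^ 2 * (Wf f) ^ 2)

open MeasureTheory Set Filter Topology

/-- Laplace-type integrals `∫₀^∞ s^k exp(-s³/3 - w s) ds`. -/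
noncomputable def cubicLaplace (k : ℕ) (w : ℂ) : ℂ :=
  ∫ s in Ioi (0 : ℝ), (s : ℂ) ^ k * Complex.exp (-(s : ℂ) ^ 3 / 3 - w * s)

lemma integrableOn_pow_mul_exp_cubic (k : ℕ) (c : ℝ) :
    IntegrableOn (fun s : ℝ => s ^ k * Real.exp (-s ^ 3 / 3 + c * s)) (Ioi 0) := by
  have h1 : IntegrableOn (fun s : ℝ => Real.exp (3 * (|c| + 2) ^ 2) *
      (s ^ (k : ℝ) * Real.exp (-s ^ (1 : ℝ)))) (Ioi 0) :=
    (integrableOn_rpow_mul_exp_neg_rpow (p := 1) (s := k)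
      (by have : (0 : ℝ) ≤ k := Nat.cast_nonneg k
          linarith) one_pos).const_mul _
  refine Integrable.mono' h1 (by fun_prop) ?_
  filter_upwards [self_mem_ae_restrict (measurableSet_Ioi)] with s hs
  have hs : 0 < s := hs
  have hc := abs_nonneg c
  rw [Real.norm_of_nonneg (by positivity), Real.rpow_natCast, Real.rpow_one, mul_left_comm,
    ← Real.exp_add]
  refine mul_le_mul_of_nonneg_left (Real.exp_le_exp.2 ?_) (by positivity)
  have h2 : c * s ≤ |c| * s := mul_le_mul_of_nonneg_right (le_abs_self c) hs.le
  have h3 : (|c| + 1) * s ≤ s ^ 3 / 3 + 3 * (|c| + 2) ^ 2 := by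
    rcases le_total s (3 * (|c| + 2)) with h | h
    · have : 0 < s ^ 3 := by positivity
      nlinarith
    · have h4 : 3 * (|c| + 2) * s ≤ s ^ 3 := by
        have h5 : s * s ≤ s ^ 3 := by nlinarith [mul_pos hs hs]
        nlinarith
      nlinarith [sq_nonneg (|c| + 2)]
  linarith

lemma norm_cubicLaplace_integrand (k : ℕ) (w : ℂ) {s : ℝ} (hs : 0 < s) :
    ‖(s : ℂ) ^ k * Complex.exp (-(s : ℂ) ^ 3 / 3 - w * s)‖
      = s ^ k * Real.exp (-s ^ 3 / 3 + -w.re * s) := by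
  have : (-(s : ℂ) ^ 3 / 3 - w * s).re = -s ^ 3 / 3 + -w.re * s := by
    have : -(s : ℂ) ^ 3 / 3 - w * s = ((-s ^ 3 / 3 : ℝ) : ℂ) - w * s := by push_cast; ring
    rw [this, Complex.sub_re, Complex.ofReal_re, Complex.re_mul_ofReal]
    ring
  rw [norm_mul, norm_pow, Complex.norm_exp, this, Complex.norm_real, Real.norm_of_nonneg hs.le]

lemma integrableOn_cubicLaplace (k : ℕ) (w : ℂ) :
    IntegrableOn (fun s : ℝ => (s : ℂ) ^ k * Complex.exp (-(s : ℂ) ^ 3 / 3 - w * s)) (Ioi 0) := by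
  refine Integrable.mono' (integrableOn_pow_mul_exp_cubic k (-w.re)) (by fun_prop) ?_
  filter_upwards [self_mem_ae_restrict (measurableSet_Ioi)] with s hs
  exact (norm_cubicLaplace_integrand k w hs).le

lemma hasDerivAt_cubicLaplace (k : ℕ) (w : ℂ) :
    HasDerivAt (cubicLaplace k) (-cubicLaplace (k + 1) w) w := by
  have key := hasDerivAt_integral_of_dominated_loc_of_deriv_le
    (μ := volume.restrict (Ioi (0 : ℝ))) (s := Metric.ball w 1) (x₀ := w)
    (F := fun w s => (s : ℂ) ^ k * Complex.exp (-(s : ℂ) ^ 3 / 3 - w * s))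
    (F' := fun w s => -((s : ℂ) ^ (k + 1) * Complex.exp (-(s : ℂ) ^ 3 / 3 - w * s)))
    (bound := fun s => s ^ (k + 1) * Real.exp (-s ^ 3 / 3 + (‖w‖ + 1) * s))
    (Metric.ball_mem_nhds w one_pos) (Eventually.of_forall fun w => by fun_prop)
    (integrableOn_cubicLaplace k w) (by fun_prop) ?_
    (integrableOn_pow_mul_exp_cubic (k + 1) (‖w‖ + 1)) ?_
  · have h := key.2
    rw [integral_neg] at h
    exact h
  · filter_upwards [self_mem_ae_restrict (measurableSet_Ioi)] with s hs x hx
    have hs : 0 < s := hs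
    rw [norm_neg, norm_cubicLaplace_integrand _ _ hs]
    refine mul_le_mul_of_nonneg_left (Real.exp_le_exp.2 ?_) (by positivity)
    have h1 : -x.re ≤ ‖w‖ + 1 := by
      have h2 : ‖x‖ ≤ ‖w‖ + ‖x - w‖ := by simpa using norm_add_le w (x - w)
      have h3 : ‖x - w‖ < 1 := by simpa [dist_eq_norm] using hx
      have h4 := (abs_le.1 (Complex.abs_re_le_norm x)).1
      linarith
    have := mul_le_mul_of_nonneg_right h1 hs.le
    linarith
  · filter_upwards with s x _
    have h1 : HasDerivAt (fun x : ℂ => -(s : ℂ) ^ 3 / 3 - x * s) (-(s : ℂ)) x := by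
      simpa using ((hasDerivAt_id x).mul_const (s : ℂ)).const_sub (-(s : ℂ) ^ 3 / 3)
    have h2 := (h1.cexp).const_mul ((s : ℂ) ^ k)
    convert! h2 using 1
    ring

lemma cubicLaplace_two (w : ℂ) : cubicLaplace 2 w = 1 - w * cubicLaplace 0 w := by
  have hd : ∀ s ∈ Ici (0 : ℝ), HasDerivAt (fun s : ℝ => Complex.exp (-(s : ℂ) ^ 3 / 3 - w * s))
      (-((s : ℂ) ^ 2 * Complex.exp (-(s : ℂ) ^ 3 / 3 - w * s)) -
        w * ((s : ℂ) ^ 0 * Complex.exp (-(s : ℂ) ^ 3 / 3 - w * s))) s := by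
    intro s _
    have h1 : HasDerivAt (fun x : ℂ => -x ^ 3 / 3 - w * x) (-(s : ℂ) ^ 2 - w) (s : ℂ) := by
      have := (((hasDerivAt_pow 3 (s : ℂ)).neg).div_const 3).sub
        ((hasDerivAt_id (s : ℂ)).const_mul w)
      convert! this using 1
      norm_num
      ring
    convert! (h1.cexp).comp_ofReal using 1
    ring
  have hi := ((integrableOn_cubicLaplace 2 w).neg).sub ((integrableOn_cubicLaplace 0 w).const_mul w)
  have hlim := tendsto_zero_of_hasDerivAt_of_integrableOn_Ioi (a := 0)
    (fun s hs => hd s (Ioi_subset_Ici_self hs)) hi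
    (by simpa using integrableOn_cubicLaplace 0 w)
  have := integral_Ioi_of_hasDerivAt_of_tendsto' hd hi hlim
  rw [integral_sub (f := fun s : ℝ => -((s : ℂ) ^ 2 * Complex.exp (-(s : ℂ) ^ 3 / 3 - w * s)))
    ((integrableOn_cubicLaplace 2 w).neg)
    ((integrableOn_cubicLaplace 0 w).const_mul w), integral_neg, integral_const_mul] at this
  simp only [Complex.ofReal_zero] at this
  norm_num at this
  unfold cubicLaplace
  simp only [pow_zero, one_mul]
  linear_combination -this

lemma norm_cubicLaplace_le (k : ℕ) {w : ℂ} (hw : 0 < w.re) :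
    ‖cubicLaplace k w‖ ≤ w.re ^ (-((k : ℝ) + 1)) * Real.Gamma (k + 1) := by
  have hk : (0 : ℝ) ≤ k := Nat.cast_nonneg k
  have h := integral_rpow_mul_exp_neg_mul_rpow (p := 1) (q := k) (b := w.re) one_pos
    (by linarith) hw
  have hi := integrableOn_rpow_mul_exp_neg_mul_rpow (p := 1) (s := k) (b := w.re)
    (by linarith) one_pos hw
  simp only [div_one, mul_one, Real.rpow_one, Real.rpow_natCast] at h hi
  rw [← h]
  refine norm_integral_le_of_norm_le hi ?_
  filter_upwards [self_mem_ae_restrict (measurableSet_Ioi)] with s hs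
  have hs : 0 < s := hs
  rw [norm_cubicLaplace_integrand _ _ hs]
  refine mul_le_mul_of_nonneg_left (Real.exp_le_exp.2 ?_) (by positivity)
  have : 0 < s ^ 3 := by positivity
  linarith

/-- The moments `∫₀^∞ s^k exp(-s³/3) ds`. -/
noncomputable def cubicMoment (k : ℕ) : ℝ :=
  ((1 : ℝ) / 3) ^ (-((k : ℝ) + 1) / 3) * (1 / 3) * Real.Gamma (((k : ℝ) + 1) / 3)

lemma integral_cubicMoment (k : ℕ) :
    ∫ s in Ioi (0 : ℝ), (s : ℂ) ^ k * Complex.exp (-(s : ℂ) ^ 3 / 3) = (cubicMoment k : ℂ) := by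
  have hk : (0 : ℝ) ≤ k := Nat.cast_nonneg k
  rw [cubicMoment, ← integral_rpow_mul_exp_neg_mul_rpow (p := 3) (q := k) (b := 1 / 3)
    (by norm_num) (by linarith) (by norm_num), ← integral_complex_ofReal]
  refine setIntegral_congr_fun measurableSet_Ioi fun s _ => ?_
  have : s ^ (3 : ℝ) = s ^ 3 := by exact_mod_cast Real.rpow_natCast s 3
  simp only [this, Real.rpow_natCast]
  push_cast
  congr 2
  ring

lemma cubicMoment_add_three (k : ℕ) : cubicMoment (k + 3) = (k + 1) * cubicMoment k := by
  have hk : (0 : ℝ) ≤ k := Nat.cast_nonneg k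
  unfold cubicMoment
  have h1 : (((k + 3 : ℕ) : ℝ) + 1) / 3 = ((k : ℝ) + 1) / 3 + 1 := by push_cast; ring
  have h2 : -(((k + 3 : ℕ) : ℝ) + 1) / 3 = -((k : ℝ) + 1) / 3 + (-1) := by push_cast; ring
  rw [h1, h2, Real.Gamma_add_one (by positivity), Real.rpow_add (by norm_num), Real.rpow_neg_one]
  ring

lemma hasSum_cubicLaplace (w : ℂ) :
    HasSum (fun k : ℕ => (-w) ^ k / (k.factorial : ℂ) * (cubicMoment k : ℂ))
      (cubicLaplace 0 w) := by
  have hb : ∀ s : ℝ, HasSum (fun k : ℕ => Real.exp (-s ^ 3 / 3) * ((‖w‖ * s) ^ k / k.factorial))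
      (Real.exp (-s ^ 3 / 3 + ‖w‖ * s)) := by
    intro s
    rw [Real.exp_add, congrFun Real.exp_eq_exp_ℝ (‖w‖ * s)]
    exact (NormedSpace.expSeries_div_hasSum_exp (‖w‖ * s)).mul_left _
  have key := hasSum_integral_of_dominated_convergence (μ := volume.restrict (Ioi (0 : ℝ)))
    (F := fun (k : ℕ) (s : ℝ) => (-w) ^ k / (k.factorial : ℂ) *
      ((s : ℂ) ^ k * Complex.exp (-(s : ℂ) ^ 3 / 3)))
    (f := fun s : ℝ => (s : ℂ) ^ 0 * Complex.exp (-(s : ℂ) ^ 3 / 3 - w * s))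
    (fun k s => Real.exp (-s ^ 3 / 3) * ((‖w‖ * s) ^ k / k.factorial))
    (fun k => by fun_prop) ?_ (Eventually.of_forall fun s => (hb s).summable) ?_ ?_
  · simp only [integral_const_mul, integral_cubicMoment] at key
    exact key
  · intro k
    filter_upwards [self_mem_ae_restrict (measurableSet_Ioi)] with s hs
    have h := norm_cubicLaplace_integrand k 0 hs
    simp only [zero_mul, sub_zero, Complex.zero_re, neg_zero, add_zero] at h
    rw [norm_mul, h, norm_div, norm_pow, norm_neg, Complex.norm_natCast]
    apply le_of_eq
    ring
  · simp only [(hb _).tsum_eq]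
    simpa [IntegrableOn] using integrableOn_pow_mul_exp_cubic 0 ‖w‖
  · refine Eventually.of_forall fun s => ?_
    have h := (NormedSpace.expSeries_div_hasSum_exp (-w * s)).mul_left
      (Complex.exp (-(s : ℂ) ^ 3 / 3))
    rw [← Complex.exp_eq_exp_ℂ, ← Complex.exp_add] at h
    have e : (s : ℂ) ^ 0 * Complex.exp (-(s : ℂ) ^ 3 / 3 - w * s)
        = Complex.exp (-(s : ℂ) ^ 3 / 3 + -w * s) := by
      rw [pow_zero, one_mul]
      congr 1
      ring
    rw [e]
    refine h.congr_fun fun k => ?_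
    rw [mul_pow]
    ring

lemma ωc_eq : ωc = -1 / 2 + (√3 / 2 : ℝ) * Complex.I := by
  have h : (2 * (π : ℂ) * Complex.I / 3) = ((π - π / 3 : ℝ) : ℂ) * Complex.I := by
    push_cast; ring
  rw [ωc, h, Complex.exp_mul_I, ← Complex.ofReal_cos, ← Complex.ofReal_sin, Real.cos_pi_sub,
    Real.sin_pi_sub, Real.cos_pi_div_three, Real.sin_pi_div_three]
  push_cast; ring

lemma ofReal_sqrt_three_sq : ((√3 : ℝ) : ℂ) ^ 2 = 3 := by
  rw [← Complex.ofReal_pow, Real.sq_sqrt (by norm_num)]; norm_num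

lemma ωc_sq : ωc ^ 2 = -1 - ωc := by
  rw [ωc_eq]
  push_cast
  linear_combination (-1 / 4 : ℂ) * ofReal_sqrt_three_sq
    + ((√3 : ℝ) : ℂ) ^ 2 / 4 * Complex.I_sq

lemma ωc_cube : ωc ^ 3 = 1 := by
  linear_combination (ωc - 1) * ωc_sq

lemma one_add_two_mul_ωc : 1 + 2 * ωc = √3 * Complex.I := by
  rw [ωc_eq]; push_cast; ring

lemma Gamma_third_mul : Real.Gamma (1 / 3) * Real.Gamma (2 / 3) = 2 * π / √3 := by
  have h := Real.Gamma_mul_Gamma_one_sub (1 / 3)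
  rw [show (1 : ℝ) - 1 / 3 = 2 / 3 by norm_num, show π * (1 / 3) = π / 3 by ring,
    Real.sin_pi_div_three] at h
  rw [h]
  have : √(3 : ℝ) ≠ 0 := by positivity
  field_simp

lemma airyCoeff_zero : airyCoeff 0 = ((3 ^ (-(2 : ℝ) / 3) / Real.Gamma (2 / 3) : ℝ) : ℂ) := by
  rw [airyCoeff]
  push_cast [Complex.ofReal_cpow (by norm_num : (0 : ℝ) ≤ 3), ← Complex.Gamma_ofReal]
  rfl

lemma airyCoeff_one : airyCoeff 1 = ((-(3 ^ (-(1 : ℝ) / 3) / Real.Gamma (1 / 3)) : ℝ) : ℂ) := by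
  rw [airyCoeff]
  push_cast [Complex.ofReal_cpow (by norm_num : (0 : ℝ) ≤ 3), ← Complex.Gamma_ofReal]
  rfl

lemma airyCoeff_zero_mul_one : airyCoeff 0 * airyCoeff 1 = -(1 / (2 * π * √3)) := by
  rw [airyCoeff_zero, airyCoeff_one, ← Complex.ofReal_mul]
  have h : (3 : ℝ) ^ (-(2 : ℝ) / 3) * 3 ^ (-(1 : ℝ) / 3) = 1 / 3 := by
    rw [← Real.rpow_add (by norm_num)]
    norm_num [Real.rpow_neg_one]
  have h3 : √(3 : ℝ) ^ 2 = 3 := Real.sq_sqrt (by norm_num)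
  have h1 : (3 ^ (-(2 : ℝ) / 3) / Real.Gamma (2 / 3)) * -(3 ^ (-(1 : ℝ) / 3) / Real.Gamma (1 / 3))
      = -(1 / (2 * π * √3)) := by
    have e : (3 ^ (-(2 : ℝ) / 3) / Real.Gamma (2 / 3)) *
        -(3 ^ (-(1 : ℝ) / 3) / Real.Gamma (1 / 3))
        = -((3 : ℝ) ^ (-(2 : ℝ) / 3) * 3 ^ (-(1 : ℝ) / 3)) /
          (Real.Gamma (1 / 3) * Real.Gamma (2 / 3)) := by
      have := Real.Gamma_pos_of_pos (show (0 : ℝ) < 1 / 3 by norm_num)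
      have := Real.Gamma_pos_of_pos (show (0 : ℝ) < 2 / 3 by norm_num)
      field_simp
    rw [e, h, Gamma_third_mul]
    have : √(3 : ℝ) ≠ 0 := by positivity
    have := Real.pi_ne_zero
    field_simp
    linarith
  rw [h1]
  push_cast; rfl

lemma airyCoeff_zero_eq : airyCoeff 0 = √3 / (2 * π) * cubicMoment 0 := by
  rw [airyCoeff_zero, cubicMoment]
  rw [show (√3 : ℂ) / (2 * π) = ((√3 / (2 * π) : ℝ) : ℂ) by push_cast; rfl, ← Complex.ofReal_mul]
  congr 1
  have hg := Gamma_third_mul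
  have h2 := Real.Gamma_pos_of_pos (show (0 : ℝ) < 2 / 3 by norm_num)
  have h : ((1 : ℝ) / 3) ^ (-(((0 : ℕ) : ℝ) + 1) / 3) * (1 / 3) = 3 ^ (-(2 : ℝ) / 3) := by
    rw [one_div, Real.inv_rpow (by norm_num), ← Real.rpow_neg (by norm_num),
      ← Real.rpow_neg_one 3, ← Real.rpow_add (by norm_num)]
    norm_num
  rw [h]
  have h3 : √(3 : ℝ) ≠ 0 := by positivity
  have h4 := Real.pi_ne_zero
  rw [show (((0 : ℕ) : ℝ) + 1) / 3 = 1 / 3 by norm_num, div_eq_iff h2.ne']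
  calc (3 : ℝ) ^ (-(2 : ℝ) / 3) = √3 / (2 * π) * 3 ^ (-(2 : ℝ) / 3) * (2 * π / √3) := by
        field_simp
    _ = _ := by rw [← hg]; ring

lemma airyCoeff_one_eq : airyCoeff 1 = -(√3 / (2 * π)) * cubicMoment 1 := by
  rw [airyCoeff_one, cubicMoment]
  rw [show -((√3 : ℂ) / (2 * π)) = ((-(√3 / (2 * π)) : ℝ) : ℂ) by push_cast; rfl,
    ← Complex.ofReal_mul]
  congr 1
  have hg := Gamma_third_mul
  have h2 := Real.Gamma_pos_of_pos (show (0 : ℝ) < 1 / 3 by norm_num)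
  have h : ((1 : ℝ) / 3) ^ (-(((1 : ℕ) : ℝ) + 1) / 3) * (1 / 3) = 3 ^ (-(1 : ℝ) / 3) := by
    rw [one_div, Real.inv_rpow (by norm_num), ← Real.rpow_neg (by norm_num),
      ← Real.rpow_neg_one 3, ← Real.rpow_add (by norm_num)]
    norm_num
  rw [h]
  have h3 : √(3 : ℝ) ≠ 0 := by positivity
  have h4 := Real.pi_ne_zero
  rw [show (((1 : ℕ) : ℝ) + 1) / 3 = 2 / 3 by norm_num, neg_mul, neg_inj, div_eq_iff h2.ne']
  calc (3 : ℝ) ^ (-(1 : ℝ) / 3) = √3 / (2 * π) * 3 ^ (-(1 : ℝ) / 3) * (2 * π / √3) := by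
        field_simp
    _ = _ := by rw [← hg]; ring

lemma airyCoeff_eq (k : ℕ) :
    airyCoeff k = ((-ωc ^ 2) ^ (k + 1) - (-ωc) ^ (k + 1)) / (2 * π * Complex.I) *
      ((-1) ^ k / (k.factorial : ℂ) * (cubicMoment k : ℂ)) := by
  have hpi : (π : ℂ) ≠ 0 := by exact_mod_cast Real.pi_ne_zero
  have hI := Complex.I_ne_zero
  induction k using airyCoeff.induct with
  | case1 =>
    rw [airyCoeff_zero_eq, show (-ωc ^ 2) ^ (0 + 1) - (-ωc) ^ (0 + 1) = 1 + 2 * ωc by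
      linear_combination -ωc_sq, one_add_two_mul_ωc]
    simp only [pow_zero, Nat.factorial_zero, Nat.cast_one]
    field_simp
  | case2 =>
    rw [airyCoeff_one_eq, show (-ωc ^ 2) ^ (1 + 1) - (-ωc) ^ (1 + 1) = 1 + 2 * ωc by
      linear_combination ωc * ωc_cube - ωc_sq, one_add_two_mul_ωc]
    simp only [pow_one, Nat.factorial_one, Nat.cast_one]
    field_simp
  | case3 =>
    rw [airyCoeff, show (-ωc ^ 2) ^ (2 + 1) - (-ωc) ^ (2 + 1) = 0 by
      linear_combination (-ωc ^ 3) * ωc_cube]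
    simp
  | case4 k ih =>
    rw [airyCoeff, ih, cubicMoment_add_three]
    have h1 : (-ωc ^ 2) ^ (k + 3 + 1) = -(-ωc ^ 2) ^ (k + 1) := by
      rw [show k + 3 + 1 = k + 1 + 3 by ring, pow_add]
      linear_combination (-(-ωc ^ 2) ^ (k + 1) * (ωc ^ 3 + 1)) * ωc_cube
    have h2 : (-ωc) ^ (k + 3 + 1) = -(-ωc) ^ (k + 1) := by
      rw [show k + 3 + 1 = k + 1 + 3 by ring, pow_add]
      linear_combination (-(-ωc) ^ (k + 1)) * ωc_cube
    have h5 : (-1 : ℂ) ^ (k + 3) = -(-1) ^ k := by rw [pow_add]; ring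
    rw [h1, h2]
    have hf : ((k + 3).factorial : ℂ) = (k + 3) * (k + 2) * (k + 1) * k.factorial := by
      rw [Nat.factorial_succ, Nat.factorial_succ, Nat.factorial_succ]
      push_cast; ring
    change _ = _ / _ * ((-1) ^ (k + 3) / ((k + 3).factorial : ℂ) * _)
    rw [hf, h5]
    have a1 : (k : ℂ) + 1 ≠ 0 := by exact_mod_cast Nat.succ_ne_zero k
    have a2 : (k : ℂ) + 2 ≠ 0 := by exact_mod_cast Nat.succ_ne_zero (k + 1)
    have a3 : (k : ℂ) + 3 ≠ 0 := by exact_mod_cast Nat.succ_ne_zero (k + 2)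
    have a4 : (k.factorial : ℂ) ≠ 0 := by exact_mod_cast k.factorial_ne_zero
    push_cast
    field_simp
    ring

/-- The Airy function as a combination of two Laplace-type integrals. -/
lemma Ai_eq_cubicLaplace (z : ℂ) :
    Ai z = (-ωc ^ 2 * cubicLaplace 0 (-ωc ^ 2 * z) + ωc * cubicLaplace 0 (-ωc * z))
      / (2 * π * Complex.I) := by
  have h1 := (hasSum_cubicLaplace (-ωc ^ 2 * z)).mul_left (-ωc ^ 2 / (2 * π * Complex.I))
  have h2 := (hasSum_cubicLaplace (-ωc * z)).mul_left (ωc / (2 * π * Complex.I))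
  have h := (h1.add h2).tsum_eq
  rw [Ai, show (-ωc ^ 2 * cubicLaplace 0 (-ωc ^ 2 * z) + ωc * cubicLaplace 0 (-ωc * z))
    / (2 * π * Complex.I) = -ωc ^ 2 / (2 * π * Complex.I) * cubicLaplace 0 (-ωc ^ 2 * z)
      + ωc / (2 * π * Complex.I) * cubicLaplace 0 (-ωc * z) by ring, ← h]
  refine tsum_congr fun k => ?_
  rw [airyCoeff_eq, show -(-ωc ^ 2 * z) = (-1) * (-ωc ^ 2) * z by ring,
    show -(-ωc * z) = (-1) * (-ωc) * z by ring]
  simp only [mul_pow, pow_succ]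
  ring

lemma hasDerivAt_cubicLaplace_comp (k : ℕ) (c z : ℂ) :
    HasDerivAt (fun z => cubicLaplace k (c * z)) (-c * cubicLaplace (k + 1) (c * z)) z := by
  have h : HasDerivAt (fun z => c * z) c z := by simpa using (hasDerivAt_id z).const_mul c
  convert! (hasDerivAt_cubicLaplace k (c * z)).comp z h using 1
  ring

lemma hasDerivAt_Ai_cubicLaplace (z : ℂ) :
    HasDerivAt Ai ((-ωc * cubicLaplace 1 (-ωc ^ 2 * z) + ωc ^ 2 * cubicLaplace 1 (-ωc * z))
      / (2 * π * Complex.I)) z := by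
  have h := ((((hasDerivAt_cubicLaplace_comp 0 (-ωc ^ 2) z).const_mul (-ωc ^ 2)).add
    ((hasDerivAt_cubicLaplace_comp 0 (-ωc) z).const_mul ωc)).div_const (2 * π * Complex.I))
  rw [show Ai = _ from funext Ai_eq_cubicLaplace]
  convert! h using 1
  congr 1
  linear_combination (ωc * cubicLaplace 1 (-ωc ^ 2 * z)) * ωc_cube

lemma deriv_Ai (z : ℂ) :
    deriv Ai z = (-ωc * cubicLaplace 1 (-ωc ^ 2 * z) + ωc ^ 2 * cubicLaplace 1 (-ωc * z))
      / (2 * π * Complex.I) := (hasDerivAt_Ai_cubicLaplace z).deriv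

lemma hasDerivAt_Ai (z : ℂ) : HasDerivAt Ai (deriv Ai z) z := by
  rw [deriv_Ai]; exact hasDerivAt_Ai_cubicLaplace z

/-- The Airy equation `Ai'' = z Ai`. -/
lemma hasDerivAt_deriv_Ai (z : ℂ) : HasDerivAt (deriv Ai) (z * Ai z) z := by
  have h := ((((hasDerivAt_cubicLaplace_comp 1 (-ωc ^ 2) z).const_mul (-ωc)).add
    ((hasDerivAt_cubicLaplace_comp 1 (-ωc) z).const_mul (ωc ^ 2))).div_const
      (2 * π * Complex.I))
  rw [show deriv Ai = _ from funext deriv_Ai, Ai_eq_cubicLaplace]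
  convert! h using 1
  rw [← mul_div_assoc]
  congr 1
  rw [cubicLaplace_two, cubicLaplace_two]
  linear_combination (z * ωc ^ 2 * cubicLaplace 0 (-ωc ^ 2 * z)
    - z * ωc * cubicLaplace 0 (-ωc * z)) * ωc_cube

lemma Ai_connection (z : ℂ) : Ai z + ωc * Ai (ωc * z) + ωc ^ 2 * Ai (ωc ^ 2 * z) = 0 := by
  rw [Ai_eq_cubicLaplace, Ai_eq_cubicLaplace, Ai_eq_cubicLaplace]
  rw [show -ωc ^ 2 * (ωc * z) = -z by linear_combination -z * ωc_cube,
    show -ωc * (ωc ^ 2 * z) = -z by linear_combination -z * ωc_cube,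
    show -ωc ^ 2 * (ωc ^ 2 * z) = -ωc * z by linear_combination (-ωc * z) * ωc_cube,
    show -ωc * (ωc * z) = -ωc ^ 2 * z by ring]
  linear_combination (-ωc * cubicLaplace 0 (-ωc * z)) / (2 * π * Complex.I) * ωc_cube

lemma Ai_zero : Ai 0 = airyCoeff 0 := by
  rw [Ai, tsum_eq_single 0 (fun k hk => by simp [hk])]
  simp

lemma deriv_Ai_zero : deriv Ai 0 = airyCoeff 1 := by
  have hpi : (π : ℂ) ≠ 0 := by exact_mod_cast Real.pi_ne_zero
  have hI := Complex.I_ne_zero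
  have h1 : cubicLaplace 1 0 = cubicMoment 1 := by
    rw [← integral_cubicMoment, cubicLaplace]
    simp
  rw [deriv_Ai, airyCoeff_one_eq]
  simp only [mul_zero, h1]
  rw [show -ωc * (cubicMoment 1 : ℂ) + ωc ^ 2 * cubicMoment 1 = -(1 + 2 * ωc) * cubicMoment 1 by
    linear_combination (cubicMoment 1 : ℂ) * ωc_sq, one_add_two_mul_ωc]
  field_simp

lemma Ai_zero_mul_deriv : Ai 0 * deriv Ai 0 = -(1 / (2 * π * √3)) := by
  rw [Ai_zero, deriv_Ai_zero, airyCoeff_zero_mul_one]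

lemma Ai_zero_ne : Ai 0 ≠ 0 := by
  intro h
  have := Ai_zero_mul_deriv
  rw [h, zero_mul] at this
  have hpi : (π : ℂ) ≠ 0 := by exact_mod_cast Real.pi_ne_zero
  have h3 : ((√3 : ℝ) : ℂ) ≠ 0 := by
    have : √(3 : ℝ) ≠ 0 := by positivity
    exact_mod_cast this
  field_simp at this
  simp at this

lemma tendsto_cubicLaplace_atTop (k : ℕ) {c : ℂ} (hc : 0 < c.re) :
    Tendsto (fun x : ℝ => cubicLaplace k (c * x)) atTop (𝓝 0) := by
  have h : Tendsto (fun x : ℝ => (c.re * x) ^ (-((k : ℝ) + 1)) * Real.Gamma (k + 1)) atTop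
      (𝓝 (0 * Real.Gamma (k + 1))) :=
    ((tendsto_rpow_neg_atTop (by positivity)).comp
      (tendsto_id.const_mul_atTop hc)).mul_const _
  rw [zero_mul] at h
  refine squeeze_zero_norm' ?_ h
  filter_upwards [eventually_gt_atTop 0] with x hx
  have e : (c * x).re = c.re * x := Complex.re_mul_ofReal c x
  have := norm_cubicLaplace_le k (w := c * x) (by rw [e]; positivity)
  rwa [e] at this

lemma re_neg_ωc : (-ωc).re = 1 / 2 := by rw [ωc_eq]; norm_num

lemma re_neg_ωc_sq : (-ωc ^ 2).re = 1 / 2 := by rw [ωc_sq, ωc_eq]; norm_num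

lemma tendsto_Ai_atTop : Tendsto (fun x : ℝ => Ai x) atTop (𝓝 0) := by
  have h1 := tendsto_cubicLaplace_atTop 0 (c := -ωc ^ 2) (by rw [re_neg_ωc_sq]; norm_num)
  have h2 := tendsto_cubicLaplace_atTop 0 (c := -ωc) (by rw [re_neg_ωc]; norm_num)
  have h := ((h1.const_mul (-ωc ^ 2)).add (h2.const_mul ωc)).div_const (2 * π * Complex.I)
  simp only [mul_zero, add_zero, zero_div] at h
  exact h.congr fun x => (Ai_eq_cubicLaplace x).symm

lemma tendsto_deriv_Ai_atTop : Tendsto (fun x : ℝ => deriv Ai x) atTop (𝓝 0) := by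
  have h1 := tendsto_cubicLaplace_atTop 1 (c := -ωc ^ 2) (by rw [re_neg_ωc_sq]; norm_num)
  have h2 := tendsto_cubicLaplace_atTop 1 (c := -ωc) (by rw [re_neg_ωc]; norm_num)
  have h := ((h1.const_mul (-ωc)).add (h2.const_mul (ωc ^ 2))).div_const (2 * π * Complex.I)
  simp only [mul_zero, add_zero, zero_div] at h
  exact h.congr fun x => (deriv_Ai x).symm

/-- The saddle-point integrals `∫ τ^k exp(-w τ² - i τ³/3) dτ`. -/
noncomputable def saddle (k : ℕ) (w : ℂ) : ℂ :=
  ∫ τ : ℝ, (τ : ℂ) ^ k * Complex.exp (-w * (τ : ℂ) ^ 2 - Complex.I * (τ : ℂ) ^ 3 / 3)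

lemma norm_saddle_integrand (k : ℕ) (w : ℂ) (τ : ℝ) :
    ‖(τ : ℂ) ^ k * Complex.exp (-w * (τ : ℂ) ^ 2 - Complex.I * (τ : ℂ) ^ 3 / 3)‖
      = |τ| ^ k * Real.exp (-w.re * τ ^ 2) := by
  have : (-w * (τ : ℂ) ^ 2 - Complex.I * (τ : ℂ) ^ 3 / 3).re = -w.re * τ ^ 2 := by
    have : -w * (τ : ℂ) ^ 2 - Complex.I * (τ : ℂ) ^ 3 / 3
        = -w * ((τ ^ 2 : ℝ) : ℂ) - Complex.I * ((τ ^ 3 / 3 : ℝ) : ℂ) := by push_cast; ring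
    rw [this, Complex.sub_re, Complex.re_mul_ofReal, Complex.re_mul_ofReal]
    simp
  rw [norm_mul, norm_pow, Complex.norm_exp, this, Complex.norm_real, Real.norm_eq_abs]

lemma integrable_abs_pow_mul_exp_neg_mul_sq (k : ℕ) {a : ℝ} (ha : 0 < a) :
    Integrable (fun τ : ℝ => |τ| ^ k * Real.exp (-a * τ ^ 2)) := by
  have hk : (0 : ℝ) ≤ k := Nat.cast_nonneg k
  have h := (integrable_rpow_mul_exp_neg_mul_sq ha (s := k) (by linarith)).norm
  refine h.congr (Eventually.of_forall fun τ => ?_)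
  simp [Real.norm_eq_abs, Real.rpow_natCast]

lemma integrable_saddle (k : ℕ) {w : ℂ} (hw : 0 < w.re) :
    Integrable (fun τ : ℝ =>
      (τ : ℂ) ^ k * Complex.exp (-w * (τ : ℂ) ^ 2 - Complex.I * (τ : ℂ) ^ 3 / 3)) :=
  Integrable.mono' (integrable_abs_pow_mul_exp_neg_mul_sq k hw) (by fun_prop)
    (Eventually.of_forall fun τ => (norm_saddle_integrand k w τ).le)

lemma hasDerivAt_saddle (k : ℕ) {w : ℂ} (hw : 0 < w.re) :
    HasDerivAt (saddle k) (-saddle (k + 2) w) w := by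
  have key := hasDerivAt_integral_of_dominated_loc_of_deriv_le
    (μ := (volume : Measure ℝ)) (s := Metric.ball w (w.re / 2)) (x₀ := w)
    (F := fun w τ =>
      (τ : ℂ) ^ k * Complex.exp (-w * (τ : ℂ) ^ 2 - Complex.I * (τ : ℂ) ^ 3 / 3))
    (F' := fun w τ =>
      -((τ : ℂ) ^ (k + 2) * Complex.exp (-w * (τ : ℂ) ^ 2 - Complex.I * (τ : ℂ) ^ 3 / 3)))
    (bound := fun τ => |τ| ^ (k + 2) * Real.exp (-(w.re / 2) * τ ^ 2))
    (Metric.ball_mem_nhds w (by positivity)) (Eventually.of_forall fun w => by fun_prop)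
    (integrable_saddle k hw) (by fun_prop) ?_
    (integrable_abs_pow_mul_exp_neg_mul_sq (k + 2) (by positivity)) ?_
  · have h := key.2
    rw [integral_neg] at h
    exact h
  · filter_upwards with τ x hx
    rw [norm_neg, norm_saddle_integrand]
    refine mul_le_mul_of_nonneg_left (Real.exp_le_exp.2 ?_) (by positivity)
    have h1 : w.re / 2 ≤ x.re := by
      have h3 : ‖x - w‖ < w.re / 2 := by simpa [dist_eq_norm] using hx
      have h4 := (abs_le.1 (Complex.abs_re_le_norm (x - w))).1
      rw [Complex.sub_re] at h4
      linarith
    have := mul_le_mul_of_nonneg_right h1 (sq_nonneg τ)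
    linarith
  · filter_upwards with τ x _
    have h1 : HasDerivAt (fun x : ℂ => -x * (τ : ℂ) ^ 2 - Complex.I * (τ : ℂ) ^ 3 / 3)
        (-(τ : ℂ) ^ 2) x := by
      simpa using ((hasDerivAt_id x).neg.mul_const ((τ : ℂ) ^ 2)).sub_const
        (Complex.I * (τ : ℂ) ^ 3 / 3)
    convert! (h1.cexp).const_mul ((τ : ℂ) ^ k) using 1
    ring

lemma hasDerivAt_saddle_exp (w : ℂ) (τ : ℝ) :
    HasDerivAt (fun τ : ℝ => Complex.exp (-w * (τ : ℂ) ^ 2 - Complex.I * (τ : ℂ) ^ 3 / 3))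
      ((-2 * w * τ - Complex.I * (τ : ℂ) ^ 2) *
        Complex.exp (-w * (τ : ℂ) ^ 2 - Complex.I * (τ : ℂ) ^ 3 / 3)) τ := by
  have h1 : HasDerivAt (fun x : ℂ => -w * x ^ 2 - Complex.I * x ^ 3 / 3)
      (-2 * w * τ - Complex.I * (τ : ℂ) ^ 2) (τ : ℂ) := by
    have := ((hasDerivAt_pow 2 (τ : ℂ)).const_mul (-w)).sub
      (((hasDerivAt_pow 3 (τ : ℂ)).const_mul Complex.I).div_const 3)
    convert! this using 1
    norm_num
    ring
  convert! (h1.cexp).comp_ofReal using 1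
  ring

lemma saddle_one {w : ℂ} (hw : 0 < w.re) : 2 * w * saddle 1 w = -Complex.I * saddle 2 w := by
  have h1 := (integrable_saddle 1 hw).const_mul (-2 * w)
  have h2 := (integrable_saddle 2 hw).const_mul (-Complex.I)
  have h := integral_eq_zero_of_hasDerivAt_of_integrable (hasDerivAt_saddle_exp w)
    ((h1.add h2).congr (Eventually.of_forall fun τ => by simp only [Pi.add_apply]; ring))
    (by simpa using integrable_saddle 0 hw)
  rw [← integral_congr_ae (μ := volume) (f := _ + _) (Eventually.of_forall fun τ => by
    simp only [Pi.add_apply]; ring : (fun τ : ℝ => -2 * w * ((τ : ℂ) ^ 1 *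
      Complex.exp (-w * (τ : ℂ) ^ 2 - Complex.I * (τ : ℂ) ^ 3 / 3))) +
      (fun τ : ℝ => -Complex.I * ((τ : ℂ) ^ 2 *
      Complex.exp (-w * (τ : ℂ) ^ 2 - Complex.I * (τ : ℂ) ^ 3 / 3))) =ᵐ[volume] _),
    integral_add' h1 h2, integral_const_mul, integral_const_mul] at h
  unfold saddle
  linear_combination -h

lemma saddle_zero {w : ℂ} (hw : 0 < w.re) :
    saddle 0 w = 2 * w * saddle 2 w + Complex.I * saddle 3 w := by
  have h0 := integrable_saddle 0 hw
  have h1 := (integrable_saddle 2 hw).const_mul (-2 * w)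
  have h2 := (integrable_saddle 3 hw).const_mul (-Complex.I)
  have hd : ∀ τ : ℝ, HasDerivAt (fun τ : ℝ => (τ : ℂ) ^ 1 *
      Complex.exp (-w * (τ : ℂ) ^ 2 - Complex.I * (τ : ℂ) ^ 3 / 3))
      (((fun τ : ℝ => (τ : ℂ) ^ 0 *
        Complex.exp (-w * (τ : ℂ) ^ 2 - Complex.I * (τ : ℂ) ^ 3 / 3)) +
      ((fun τ : ℝ => -2 * w * ((τ : ℂ) ^ 2 *
        Complex.exp (-w * (τ : ℂ) ^ 2 - Complex.I * (τ : ℂ) ^ 3 / 3))) +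
      (fun τ : ℝ => -Complex.I * ((τ : ℂ) ^ 3 *
        Complex.exp (-w * (τ : ℂ) ^ 2 - Complex.I * (τ : ℂ) ^ 3 / 3)))) : ℝ → ℂ) τ) τ := by
    intro τ
    have := ((hasDerivAt_id (τ : ℂ)).comp_ofReal).mul (hasDerivAt_saddle_exp w τ)
    convert! this using 1
    · ext τ
      simp
    · simp only [Pi.add_apply, id]
      ring
  have h := integral_eq_zero_of_hasDerivAt_of_integrable hd (h0.add (h1.add h2))
    (integrable_saddle 1 hw)
  rw [integral_add' h0 (h1.add h2), integral_add' h1 h2, integral_const_mul,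
    integral_const_mul] at h
  unfold saddle
  linear_combination h

lemma norm_saddle_le (k : ℕ) {w : ℂ} {a : ℝ} (ha : 0 < a) (hw : a ≤ w.re) :
    ‖saddle k w‖ ≤ ∫ τ : ℝ, |τ| ^ k * Real.exp (-a * τ ^ 2) := by
  refine norm_integral_le_of_norm_le (integrable_abs_pow_mul_exp_neg_mul_sq k ha)
    (Eventually.of_forall fun τ => ?_)
  rw [norm_saddle_integrand]
  refine mul_le_mul_of_nonneg_left (Real.exp_le_exp.2 ?_) (by positivity)
  have := mul_le_mul_of_nonneg_right hw (sq_nonneg τ)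
  linarith

lemma integral_abs_pow_mul_exp_neg_mul_sq (k : ℕ) {a : ℝ} (ha : 0 < a) :
    ∫ τ : ℝ, |τ| ^ k * Real.exp (-a * τ ^ 2)
      = a ^ (-((k : ℝ) + 1) / 2) * Real.Gamma (((k : ℝ) + 1) / 2) := by
  have hk : (0 : ℝ) ≤ k := Nat.cast_nonneg k
  have h := integral_comp_abs (f := fun x => x ^ k * Real.exp (-a * x ^ 2))
  simp only [sq_abs] at h
  have h2 := integral_rpow_mul_exp_neg_mul_rpow (p := 2) (q := k) (b := a) two_pos
    (by linarith) ha
  have h3 : ∀ x : ℝ, x ^ (2 : ℝ) = x ^ 2 := fun x => by exact_mod_cast Real.rpow_natCast x 2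
  simp only [h3, Real.rpow_natCast] at h2
  rw [h, h2]
  ring

/-- The saddle-point form of the recessive Airy solution at `w ^ 2`. -/
noncomputable def airySaddle (w : ℂ) : ℂ := Complex.exp (-(2 * w ^ 3 / 3)) * saddle 0 w

lemma hasDerivAt_airySaddle_exp (w : ℂ) :
    HasDerivAt (fun w : ℂ => Complex.exp (-(2 * w ^ 3 / 3)))
      (Complex.exp (-(2 * w ^ 3 / 3)) * (-2 * w ^ 2)) w := by
  have h := (((hasDerivAt_pow 3 w).const_mul (2 : ℂ)).div_const 3).neg
  convert! h.cexp using 1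
  norm_num
  ring

lemma hasDerivAt_airySaddle {w : ℂ} (hw : 0 < w.re) :
    HasDerivAt airySaddle (2 * w * -(Complex.exp (-(2 * w ^ 3 / 3)) *
      (w * saddle 0 w + Complex.I * saddle 1 w))) w := by
  convert! (hasDerivAt_airySaddle_exp w).mul (hasDerivAt_saddle 0 hw) using 1
  linear_combination (-Complex.exp (-(2 * w ^ 3 / 3)) * Complex.I) * saddle_one hw
    + Complex.exp (-(2 * w ^ 3 / 3)) * saddle 2 w * Complex.I_sq

lemma hasDerivAt_airySaddle_slope {w : ℂ} (hw : 0 < w.re) :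
    HasDerivAt (fun w => -(Complex.exp (-(2 * w ^ 3 / 3)) *
      (w * saddle 0 w + Complex.I * saddle 1 w)))
      (2 * w ^ 3 * airySaddle w) w := by
  have h := ((hasDerivAt_airySaddle_exp w).mul
    (((hasDerivAt_id w).mul (hasDerivAt_saddle 0 hw)).add
      ((hasDerivAt_saddle 1 hw).const_mul Complex.I))).neg
  convert! h using 1
  simp only [airySaddle, id, Pi.add_apply, Pi.mul_apply]
  have h1 := saddle_one hw
  have h0 := saddle_zero hw
  linear_combination (Complex.exp (-(2 * w ^ 3 / 3))) * h0
    - (Complex.exp (-(2 * w ^ 3 / 3)) * w * Complex.I) * h1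
    + Complex.exp (-(2 * w ^ 3 / 3)) * w * saddle 2 w * Complex.I_sq

lemma hasDerivAt_Ai_sq (w : ℂ) : HasDerivAt (fun w => Ai (w ^ 2)) (2 * w * deriv Ai (w ^ 2)) w := by
  have h := (hasDerivAt_Ai (w ^ 2)).comp w (hasDerivAt_pow 2 w)
  convert! h using 1
  norm_num
  ring

lemma hasDerivAt_deriv_Ai_sq (w : ℂ) :
    HasDerivAt (fun w => deriv Ai (w ^ 2)) (2 * w ^ 3 * Ai (w ^ 2)) w := by
  have h := (hasDerivAt_deriv_Ai (w ^ 2)).comp w (hasDerivAt_pow 2 w)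
  convert! h using 1
  norm_num
  ring

lemma isOpen_re_pos : IsOpen {w : ℂ | 0 < w.re} := isOpen_lt continuous_const Complex.continuous_re

lemma norm_saddle_le_of_one_le (k : ℕ) {x : ℝ} (hx : 1 ≤ x) :
    ‖saddle k x‖ ≤ Real.Gamma (((k : ℝ) + 1) / 2) := by
  have h := norm_saddle_le k one_pos (w := x) (by simpa using hx)
  rw [integral_abs_pow_mul_exp_neg_mul_sq k one_pos, Real.one_rpow, one_mul] at h
  exact h

lemma exp_neg_cube_mul_le {x : ℝ} (hx : 1 ≤ x) : Real.exp (-(2 * x ^ 3 / 3)) * x ≤ 2 := by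
  have h1 : x ≤ Real.exp x := by linarith [Real.add_one_le_exp x]
  have h2 : Real.exp (-(2 * x ^ 3 / 3)) * x ≤
      Real.exp (-(2 * x ^ 3 / 3)) * (3 / 2 * Real.exp (2 * x ^ 3 / 3)) := by
    refine mul_le_mul_of_nonneg_left ?_ (Real.exp_pos _).le
    have := Real.add_one_le_exp (2 * x ^ 3 / 3)
    nlinarith [mul_nonneg (sub_nonneg.2 hx) (sub_nonneg.2 hx)]
  have h3 : Real.exp (-(2 * x ^ 3 / 3)) * Real.exp (2 * x ^ 3 / 3) = 1 := by
    rw [← Real.exp_add]; simp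
  nlinarith

/-- The logarithmic derivative of `Ai` through saddle-point integrals. -/
lemma deriv_Ai_sq_mul_saddle {w : ℂ} (hw : 0 < w.re) :
    deriv Ai (w ^ 2) * saddle 0 w
      = -(Ai (w ^ 2) * (w * saddle 0 w + Complex.I * saddle 1 w)) := by
  set g : ℂ → ℂ := fun w => airySaddle w * deriv Ai (w ^ 2) -
    -(Complex.exp (-(2 * w ^ 3 / 3)) * (w * saddle 0 w + Complex.I * saddle 1 w)) * Ai (w ^ 2)
    with hg
  have hd : ∀ w : ℂ, 0 < w.re → HasDerivAt g 0 w := by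
    intro w hw
    convert! ((hasDerivAt_airySaddle hw).mul (hasDerivAt_deriv_Ai_sq w)).sub
      ((hasDerivAt_airySaddle_slope hw).mul (hasDerivAt_Ai_sq w)) using 1
    ring
  have hconv : Convex ℝ {w : ℂ | 0 < w.re} := convex_halfSpace_re_gt 0
  have hconst : ∀ x : ℝ, 0 < x → g x = g w := by
    intro x hx
    refine isOpen_re_pos.is_const_of_deriv_eq_zero hconv.isPreconnected
      (fun v hv => (hd v hv).differentiableAt.differentiableWithinAt)
      (fun v hv => (hd v hv).deriv) (by simpa using hx) hw
  have hx2 : Tendsto (fun x : ℝ => x ^ 2) atTop atTop := tendsto_pow_atTop two_ne_zero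
  have ha := tendsto_Ai_atTop.comp hx2
  have hb := tendsto_deriv_Ai_atTop.comp hx2
  have e : ∀ x : ℝ, ‖Complex.exp (-(2 * (x : ℂ) ^ 3 / 3))‖ = Real.exp (-(2 * x ^ 3 / 3)) := by
    intro x
    rw [Complex.norm_exp]
    congr 1
    have : (-(2 * (x : ℂ) ^ 3 / 3)) = ((-(2 * x ^ 3 / 3) : ℝ) : ℂ) := by push_cast; ring
    rw [this, Complex.ofReal_re]
  have l1 : Tendsto (fun x : ℝ => airySaddle x * deriv Ai ((x : ℂ) ^ 2)) atTop (𝓝 0) := by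
    refine Tendsto.zero_mul_isBoundedUnder_le ?_ ?_ |>.congr fun x => mul_comm _ _
    · exact hb.congr fun x => by simp
    · refine ⟨Real.Gamma ((((0 : ℕ) : ℝ) + 1) / 2), ?_⟩
      rw [eventually_map]
      filter_upwards [eventually_ge_atTop 1] with x hx
      have h0 := norm_saddle_le_of_one_le 0 hx
      have : Real.exp (-(2 * x ^ 3 / 3)) ≤ 1 := Real.exp_le_one_iff.2 (by
        have : 0 ≤ x ^ 3 := by positivity
        linarith)
      simp only [Function.comp, airySaddle, norm_mul, e]
      nlinarith [norm_nonneg (saddle 0 x)]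
  have l2 : Tendsto (fun x : ℝ => -(Complex.exp (-(2 * (x : ℂ) ^ 3 / 3)) *
      (x * saddle 0 x + Complex.I * saddle 1 x)) * Ai ((x : ℂ) ^ 2)) atTop (𝓝 0) := by
    refine Tendsto.zero_mul_isBoundedUnder_le ?_ ?_ |>.congr fun x => mul_comm _ _
    · exact ha.congr fun x => by simp
    · refine ⟨2 * Real.Gamma ((((0 : ℕ) : ℝ) + 1) / 2) +
        2 * Real.Gamma ((((1 : ℕ) : ℝ) + 1) / 2), ?_⟩
      rw [eventually_map]
      filter_upwards [eventually_ge_atTop 1] with x hx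
      have h0 := norm_saddle_le_of_one_le 0 hx
      have h1 := norm_saddle_le_of_one_le 1 hx
      have hE := exp_neg_cube_mul_le hx
      have hE0 := Real.exp_pos (-(2 * x ^ 3 / 3))
      simp only [Function.comp, norm_neg, norm_mul, e]
      have h3 : ‖(x : ℂ) * saddle 0 x + Complex.I * saddle 1 x‖
          ≤ x * ‖saddle 0 x‖ + x * ‖saddle 1 x‖ := by
        refine (norm_add_le _ _).trans ?_
        rw [norm_mul, norm_mul, Complex.norm_I, Complex.norm_real,
          Real.norm_of_nonneg (by linarith)]
        nlinarith [norm_nonneg (saddle 1 x)]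
      calc _ ≤ Real.exp (-(2 * x ^ 3 / 3)) * (x * ‖saddle 0 x‖ + x * ‖saddle 1 x‖) :=
            mul_le_mul_of_nonneg_left h3 hE0.le
        _ = (Real.exp (-(2 * x ^ 3 / 3)) * x) * ‖saddle 0 x‖ +
            (Real.exp (-(2 * x ^ 3 / 3)) * x) * ‖saddle 1 x‖ := by ring
        _ ≤ _ := by gcongr
  have hlim : Tendsto (fun x : ℝ => g x) atTop (𝓝 0) := by
    have h := l1.sub l2
    rwa [sub_zero] at h
  have hlim2 : Tendsto (fun x : ℝ => g x) atTop (𝓝 (g w)) :=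
    tendsto_const_nhds.congr' (by
      filter_upwards [eventually_gt_atTop 0] with x hx
      exact (hconst x hx).symm)
  have h0 : g w = 0 := tendsto_nhds_unique hlim2 hlim
  simp only [hg, airySaddle] at h0
  refine mul_left_cancel₀ (Complex.exp_ne_zero (-(2 * w ^ 3 / 3))) ?_
  linear_combination h0

lemma norm_saddle_zero_sub_le {w : ℂ} (hw : 0 < w.re) :
    ‖saddle 0 w - (π / w) ^ (1 / 2 : ℂ)‖ ≤ (w.re ^ 2)⁻¹ / 3 := by
  rw [← integral_gaussian_complex hw]
  unfold saddle
  have hint : Integrable (fun τ : ℝ => Complex.exp (-w * (τ : ℂ) ^ 2)) :=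
    integrable_cexp_neg_mul_sq hw
  rw [← integral_sub (integrable_saddle 0 hw) hint]
  have hb := (integrable_abs_pow_mul_exp_neg_mul_sq 3 hw).div_const 3
  refine (norm_integral_le_of_norm_le hb (Eventually.of_forall fun τ => ?_)).trans_eq ?_
  · have e : (τ : ℂ) ^ 0 * Complex.exp (-w * (τ : ℂ) ^ 2 - Complex.I * (τ : ℂ) ^ 3 / 3)
        - Complex.exp (-w * (τ : ℂ) ^ 2)
        = Complex.exp (-w * (τ : ℂ) ^ 2) *
          (Complex.exp (Complex.I * ((-(τ ^ 3 / 3) : ℝ) : ℂ)) - 1) := by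
      rw [mul_sub, ← Complex.exp_add]
      push_cast
      ring_nf
    have hn : ‖Complex.exp (-w * (τ : ℂ) ^ 2)‖ = Real.exp (-w.re * τ ^ 2) := by
      rw [Complex.norm_exp]
      congr 1
      have : -w * (τ : ℂ) ^ 2 = -w * ((τ ^ 2 : ℝ) : ℂ) := by push_cast; ring
      rw [this, Complex.re_mul_ofReal, Complex.neg_re]
    rw [e, norm_mul, hn]
    have h2 := Real.norm_exp_I_mul_ofReal_sub_one_le (x := -(τ ^ 3 / 3))
    have h3 : ‖-(τ ^ 3 / 3)‖ = |τ| ^ 3 / 3 := by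
      rw [norm_neg, Real.norm_eq_abs, abs_div, abs_pow]
      norm_num
    rw [h3] at h2
    calc _ ≤ Real.exp (-w.re * τ ^ 2) * (|τ| ^ 3 / 3) := by gcongr
      _ = _ := by ring
  · rw [integral_div, integral_abs_pow_mul_exp_neg_mul_sq 3 hw]
    have h1 : (-(((3 : ℕ) : ℝ) + 1) / 2) = ((-2 : ℤ) : ℝ) := by norm_num
    have h2 : ((((3 : ℕ) : ℝ) + 1) / 2) = 2 := by norm_num
    rw [h1, h2, Real.rpow_intCast, Real.Gamma_two, mul_one]
    congr 1

lemma norm_saddle_zero_sub_le' {w : ℂ} (hw : ‖w‖ ≤ 4 * w.re) (hw4 : 4 ≤ ‖w‖) :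
    |√‖w‖ * ‖saddle 0 w‖ - √π| ≤ 2 / 3 := by
  have hre : 0 < w.re := by linarith
  have h := norm_saddle_zero_sub_le hre
  have hn : ‖((π : ℂ) / w) ^ (1 / 2 : ℂ)‖ = √π / √‖w‖ := by
    have : (1 / 2 : ℂ) = ((1 / 2 : ℝ) : ℂ) := by norm_num
    rw [this, Complex.norm_cpow_real, norm_div, Complex.norm_real,
      Real.norm_of_nonneg pi_pos.le, ← Real.sqrt_eq_rpow, Real.sqrt_div pi_pos.le]
  set s := √‖w‖ with hs
  have hs2 : s ^ 2 = ‖w‖ := Real.sq_sqrt (norm_nonneg _)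
  have hs0 : 2 ≤ s := Real.le_sqrt_of_sq_le (by linarith)
  have h1 := abs_norm_sub_norm_le (saddle 0 w) (((π : ℂ) / w) ^ (1 / 2 : ℂ))
  rw [hn] at h1
  have h2 : (w.re ^ 2)⁻¹ / 3 ≤ 16 / 3 / s ^ 4 := by
    rw [div_div, div_eq_mul_inv 16, div_eq_mul_inv]
    have : (w.re ^ 2)⁻¹ ≤ ((s ^ 2 / 4) ^ 2)⁻¹ := by
      apply inv_anti₀ (by positivity)
      gcongr
      rw [hs2]; linarith
    calc _ ≤ ((s ^ 2 / 4) ^ 2)⁻¹ * 3⁻¹ := by gcongr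
      _ = _ := by field_simp; norm_num
  have h3 : s * ‖saddle 0 w‖ - √π = s * (‖saddle 0 w‖ - √π / s) := by field_simp
  rw [h3, abs_mul, abs_of_nonneg (by linarith : (0 : ℝ) ≤ s)]
  calc _ ≤ s * (16 / 3 / s ^ 4) := by gcongr; linarith
    _ = 16 / 3 / s ^ 3 := by field_simp
    _ ≤ 16 / 3 / 2 ^ 3 := by gcongr
    _ = 2 / 3 := by norm_num

lemma saddle_zero_bounds {w : ℂ} (hw : ‖w‖ ≤ 4 * w.re) (hw4 : 4 ≤ ‖w‖) :
    1 ≤ √‖w‖ * ‖saddle 0 w‖ ∧ √‖w‖ * ‖saddle 0 w‖ ≤ 3 := by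
  have h := abs_le.1 (norm_saddle_zero_sub_le' hw hw4)
  have h1 : (1.7 : ℝ) ≤ √π := Real.le_sqrt_of_sq_le (by linarith [Real.pi_gt_three])
  have h2 : √π ≤ 2 := by
    rw [Real.sqrt_le_left (by norm_num)]; linarith [Real.pi_lt_four]
  constructor <;> linarith

lemma saddle_zero_ne {w : ℂ} (hw : ‖w‖ ≤ 4 * w.re) (hw4 : 4 ≤ ‖w‖) : saddle 0 w ≠ 0 := by
  intro h
  have := (saddle_zero_bounds hw hw4).1
  rw [h] at this
  norm_num at this

lemma norm_saddle_two_le {w : ℂ} (hw : ‖w‖ ≤ 4 * w.re) (hw4 : 4 ≤ ‖w‖) :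
    ‖saddle 2 w‖ ≤ 8 / ‖w‖ * ‖saddle 0 w‖ := by
  have ha : 0 < ‖w‖ / 4 := by linarith
  have h := norm_saddle_le 2 ha (w := w) (by linarith)
  rw [integral_abs_pow_mul_exp_neg_mul_sq 2 ha] at h
  have hG : Real.Gamma ((((2 : ℕ) : ℝ) + 1) / 2) ≤ 1 := by
    have : (((2 : ℕ) : ℝ) + 1) / 2 = 1 / 2 + 1 := by norm_num
    rw [this, Real.Gamma_add_one (by norm_num), Real.Gamma_one_half_eq]
    have h2 : √π ≤ 2 := by
      rw [Real.sqrt_le_left (by norm_num)]; linarith [Real.pi_lt_four]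
    linarith
  have hp : (‖w‖ / 4) ^ (-(((2 : ℕ) : ℝ) + 1) / 2) = 8 / (‖w‖ * √‖w‖) := by
    have : -(((2 : ℕ) : ℝ) + 1) / 2 = -(3 / 2) := by norm_num
    rw [this, Real.rpow_neg ha.le, show (3 / 2 : ℝ) = 1 + 1 / 2 by norm_num,
      Real.rpow_add ha, Real.rpow_one, ← Real.sqrt_eq_rpow, Real.sqrt_div (norm_nonneg _),
      show (4 : ℝ) = 2 ^ 2 by norm_num, Real.sqrt_sq (by norm_num)]
    field_simp
    norm_num
  rw [hp] at h
  have hb := (saddle_zero_bounds hw hw4).1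
  have hw0 : 0 < ‖w‖ := by linarith
  have hs : 0 < √‖w‖ := Real.sqrt_pos.2 hw0
  calc _ ≤ 8 / (‖w‖ * √‖w‖) * 1 := h.trans (by gcongr)
    _ ≤ 8 / (‖w‖ * √‖w‖) * (√‖w‖ * ‖saddle 0 w‖) := by gcongr
    _ = _ := by field_simp

/-- The correction `e(w)` in `Ai'(w²) = Ai(w²)(-w + e(w))`. -/
noncomputable def airyCorr (w : ℂ) : ℂ := -(Complex.I * saddle 1 w) / saddle 0 w

lemma norm_airyCorr_le {w : ℂ} (hw : ‖w‖ ≤ 4 * w.re) (hw4 : 4 ≤ ‖w‖) :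
    ‖airyCorr w‖ ≤ 4 / ‖w‖ ^ 2 := by
  have hre : 0 < w.re := by linarith
  have hw0 : 0 < ‖w‖ := by linarith
  have h1 := congrArg norm (saddle_one hre)
  simp only [norm_mul, norm_neg, Complex.norm_I, Complex.norm_ofNat, one_mul] at h1
  have h0 : 0 < ‖saddle 0 w‖ := norm_pos_iff.2 (saddle_zero_ne hw hw4)
  have h2 := norm_saddle_two_le hw hw4
  rw [airyCorr, norm_div, norm_neg, norm_mul, Complex.norm_I, one_mul, div_le_iff₀ h0]
  have : ‖saddle 1 w‖ = ‖saddle 2 w‖ / (2 * ‖w‖) := by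
    rw [← h1]; field_simp
  rw [this, div_le_iff₀ (by positivity)]
  refine h2.trans_eq ?_
  field_simp
  norm_num

lemma deriv_Ai_sq {w : ℂ} (hw : ‖w‖ ≤ 4 * w.re) (hw4 : 4 ≤ ‖w‖) :
    deriv Ai (w ^ 2) = Ai (w ^ 2) * (-w + airyCorr w) := by
  have h0 := saddle_zero_ne hw hw4
  have h := deriv_Ai_sq_mul_saddle (w := w) (by linarith)
  refine mul_right_cancel₀ h0 (h.trans ?_)
  unfold airyCorr
  field_simp
  ring

lemma convex_cone (R : ℝ) : Convex ℝ {w : ℂ | R < w.re ∧ ‖w‖ < 4 * w.re} := by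
  intro x hx y hy a b ha hb hab
  simp only [mem_ofPred_eq, Complex.add_re, Complex.real_smul, Complex.re_ofReal_mul] at *
  have hn : ‖(a : ℂ) * x + b * y‖ ≤ a * ‖x‖ + b * ‖y‖ := by
    refine (norm_add_le _ _).trans ?_
    rw [norm_mul, norm_mul, Complex.norm_real, Complex.norm_real, Real.norm_of_nonneg ha,
      Real.norm_of_nonneg hb]
  rcases eq_or_lt_of_le ha with h | h
  · subst h
    have : b = 1 := by linarith
    subst this
    simpa using hy
  · have hR : a * R + b * R = R := by rw [← add_mul, hab, one_mul]
    have hx1 := mul_lt_mul_of_pos_left hx.1 h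
    have hx2 := mul_lt_mul_of_pos_left hx.2 h
    have hy1 := mul_le_mul_of_nonneg_left hy.1.le hb
    have hy2 := mul_le_mul_of_nonneg_left hy.2.le hb
    constructor <;> linarith

lemma isOpen_cone (R : ℝ) : IsOpen {w : ℂ | R < w.re ∧ ‖w‖ < 4 * w.re} :=
  (isOpen_lt continuous_const Complex.continuous_re).inter
    (isOpen_lt continuous_norm (continuous_const.mul Complex.continuous_re))

lemma exists_Ai_sq_eq : ∃ c : ℂ, ∀ w : ℂ, 4 < w.re → ‖w‖ < 4 * w.re →
    Ai (w ^ 2) = c * airySaddle w := by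
  have hne : ∀ w ∈ {w : ℂ | 4 < w.re ∧ ‖w‖ < 4 * w.re}, airySaddle w ≠ 0 := fun w hw =>
    mul_ne_zero (Complex.exp_ne_zero _) (saddle_zero_ne hw.2.le
      (by linarith [hw.1, Complex.re_le_norm w]))
  have hd : ∀ w ∈ {w : ℂ | 4 < w.re ∧ ‖w‖ < 4 * w.re},
      HasDerivAt (fun w => Ai (w ^ 2) / airySaddle w) 0 w := by
    intro w hw
    have hre : 0 < w.re := by linarith [hw.1]
    have h := (hasDerivAt_Ai_sq w).div (hasDerivAt_airySaddle hre) (hne w hw)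
    convert! h using 1
    rw [eq_comm, div_eq_zero_iff]
    left
    have hk := deriv_Ai_sq_mul_saddle hre
    simp only [airySaddle]
    linear_combination (2 * w * Complex.exp (-(2 * w ^ 3 / 3))) * hk
  refine ⟨Ai (5 ^ 2) / airySaddle 5, fun w h1 h2 => ?_⟩
  have h5 : (5 : ℂ) ∈ {w : ℂ | 4 < w.re ∧ ‖w‖ < 4 * w.re} := by
    simp only [mem_ofPred_eq]; norm_num
  have := (isOpen_cone 4).is_const_of_deriv_eq_zero (convex_cone 4).isPreconnected
    (fun v hv => (hd v hv).differentiableAt.differentiableWithinAt)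
    (fun v hv => (hd v hv).deriv) ⟨h1, h2⟩ h5
  rw [← this, div_mul_cancel₀ _ (hne w ⟨h1, h2⟩)]

lemma norm_saddle_zero_le_exp {w₁ w₂ : ℂ} {m : ℝ} (hm : 4 ≤ m) (h1 : m < w₁.re)
    (h1c : ‖w₁‖ < 4 * w₁.re) (h2 : m < w₂.re) (h2c : ‖w₂‖ < 4 * w₂.re) :
    ‖saddle 0 w₁‖ ≤ ‖saddle 0 w₂‖ * Real.exp (8 / m * ‖w₁ - w₂‖) := by
  have hseg : ∀ t ∈ Icc (0 : ℝ) 1, (w₂ + t * (w₁ - w₂)) ∈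
      {w : ℂ | m < w.re ∧ ‖w‖ < 4 * w.re} := by
    intro t ht
    have := (convex_cone m) (x := w₂) ⟨h2, h2c⟩ (y := w₁) ⟨h1, h1c⟩
      (sub_nonneg.2 ht.2) ht.1 (by ring)
    convert! this using 1
    simp only [Complex.real_smul]
    push_cast
    ring
  have hder : ∀ t ∈ Icc (0 : ℝ) 1, HasDerivAt (fun t : ℝ => saddle 0 (w₂ + t * (w₁ - w₂)))
      (-saddle 2 (w₂ + t * (w₁ - w₂)) * (w₁ - w₂)) t := by
    intro t ht
    have hre : 0 < (w₂ + t * (w₁ - w₂)).re := by linarith [(hseg t ht).1]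
    have hl : HasDerivAt (fun x : ℂ => w₂ + x * (w₁ - w₂)) (w₁ - w₂) (t : ℂ) := by
      simpa using ((hasDerivAt_id (t : ℂ)).mul_const (w₁ - w₂)).const_add w₂
    exact (HasDerivAt.comp (t : ℂ) (hasDerivAt_saddle 0 hre) hl).comp_ofReal
  have := norm_le_gronwallBound_of_norm_deriv_right_le (a := 0) (b := 1)
    (f := fun t : ℝ => saddle 0 (w₂ + t * (w₁ - w₂)))
    (f' := fun t : ℝ => -saddle 2 (w₂ + t * (w₁ - w₂)) * (w₁ - w₂))
    (δ := ‖saddle 0 w₂‖) (K := 8 / m * ‖w₁ - w₂‖) (ε := 0)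
    (fun t ht => (hder t ht).continuousAt.continuousWithinAt)
    (fun t ht => (hder t (Ico_subset_Icc_self ht)).hasDerivWithinAt) (by simp) ?_ 1 (by simp)
  · simpa [gronwallBound_ε0] using this
  · intro t ht
    obtain ⟨hA, hB⟩ := hseg t (Ico_subset_Icc_self ht)
    have hn : m ≤ ‖w₂ + t * (w₁ - w₂)‖ := by linarith [Complex.re_le_norm (w₂ + t * (w₁ - w₂))]
    have h3 := norm_saddle_two_le hB.le (by linarith)
    rw [norm_mul, norm_neg, add_zero]
    calc _ ≤ 8 / ‖w₂ + t * (w₁ - w₂)‖ * ‖saddle 0 (w₂ + t * (w₁ - w₂))‖ * ‖w₁ - w₂‖ := by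
          gcongr
      _ ≤ 8 / m * ‖saddle 0 (w₂ + t * (w₁ - w₂))‖ * ‖w₁ - w₂‖ := by gcongr
      _ = _ := by ring

/-- The Wronskian of two rotated Airy functions is constant. -/
lemma Ai_wronskian {a b : ℂ} (ha : a ^ 3 = 1) (hb : b ^ 3 = 1) (ζ : ℂ) :
    Ai (a * ζ) * (b * deriv Ai (b * ζ)) - a * deriv Ai (a * ζ) * Ai (b * ζ)
      = Ai 0 * deriv Ai 0 * (b - a) := by
  have hA : ∀ c ζ : ℂ, HasDerivAt (fun ζ => Ai (c * ζ)) (deriv Ai (c * ζ) * c) ζ := fun c ζ => by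
    have h := (hasDerivAt_Ai (c * ζ)).comp ζ ((hasDerivAt_id ζ).const_mul c)
    rw [mul_one] at h
    exact h
  have hB : ∀ c ζ : ℂ, HasDerivAt (fun ζ => deriv Ai (c * ζ)) (c * ζ * Ai (c * ζ) * c) ζ :=
    fun c ζ => by
      have h := (hasDerivAt_deriv_Ai (c * ζ)).comp ζ ((hasDerivAt_id ζ).const_mul c)
      rw [mul_one] at h
      exact h
  have hd : ∀ ζ, HasDerivAt (fun ζ => Ai (a * ζ) * (b * deriv Ai (b * ζ))
      - a * deriv Ai (a * ζ) * Ai (b * ζ)) 0 ζ := by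
    intro ζ
    convert! ((hA a ζ).mul ((hB b ζ).const_mul b)).sub
      (((hB a ζ).const_mul a).mul (hA b ζ)) using 1
    linear_combination (ζ * Ai (a * ζ) * Ai (b * ζ)) * (ha - hb)
  have := is_const_of_deriv_eq_zero (fun ζ => (hd ζ).differentiableAt) (fun ζ => (hd ζ).deriv) ζ 0
  simp only [mul_zero] at this
  rw [this]
  ring

lemma Wf_eq (f : ℝ) :
    Wf f = -(Ai 0 * deriv Ai 0 * (1 - ωc)) * ((f ^ ((1 : ℝ) / 3) : ℝ) : ℂ) := by
  have he : Complex.exp (-(π : ℂ) * Complex.I / 6) = (√3 / 2 : ℝ) - 1 / 2 * Complex.I := by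
    have : -(π : ℂ) * Complex.I / 6 = ((-(π / 6) : ℝ) : ℂ) * Complex.I := by push_cast; ring
    rw [this, Complex.exp_mul_I, ← Complex.ofReal_cos, ← Complex.ofReal_sin, Real.cos_neg,
      Real.sin_neg, Real.cos_pi_div_six, Real.sin_pi_div_six]
    push_cast
    ring
  have h3 := ofReal_sqrt_three_sq
  have h3' : ((√3 : ℝ) : ℂ) ≠ 0 := by
    simp
  have hpi : (π : ℂ) ≠ 0 := by exact_mod_cast pi_ne_zero
  rw [Wf, he, Ai_zero_mul_deriv, ωc_eq]
  push_cast
  field_simp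
  linear_combination (((f ^ ((1 : ℝ) / 3) : ℝ) : ℂ)) * h3

/-- The region in which the saddle-point asymptotics of `Ai (w ^ 2)` are used. -/
def airyCone (μ : ℝ) : Set ℂ := {w | μ < w.re ∧ ‖w‖ < 4 * w.re}

lemma norm_le_of_mem_airyCone {μ : ℝ} {w : ℂ} (hw : w ∈ airyCone μ) : μ ≤ ‖w‖ :=
  hw.1.le.trans (Complex.re_le_norm w)

lemma norm_eq_one_of_cube {m : ℂ} (hm : m ^ 3 = 1) : ‖m‖ = 1 := by
  have h := congrArg norm hm
  rw [norm_pow, norm_one] at h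
  exact (pow_eq_one_iff_of_nonneg (norm_nonneg _) (by norm_num)).1 h

lemma norm_ωc : ‖ωc‖ = 1 := norm_eq_one_of_cube ωc_cube

/-- The correction to `2 p` in the product of two neighbouring Airy functions. -/
noncomputable def channelCorr (m p : ℂ) : ℂ :=
  ωc ^ 2 * airyCorr (-ωc * p) - m ^ 2 * airyCorr (m * p)

lemma norm_channelCorr_le {m p : ℂ} {μ : ℝ} (hμ : 4 ≤ μ) (hm : m ^ 3 = 1)
    (h1 : m * p ∈ airyCone μ) (h2 : -ωc * p ∈ airyCone μ) :
    ‖channelCorr m p‖ ≤ 8 / ‖p‖ ^ 2 := by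
  have e1 := norm_airyCorr_le h1.2.le (hμ.trans (norm_le_of_mem_airyCone h1))
  have e2 := norm_airyCorr_le h2.2.le (hμ.trans (norm_le_of_mem_airyCone h2))
  rw [norm_mul, norm_eq_one_of_cube hm, one_mul] at e1
  rw [norm_mul, norm_neg, norm_ωc, one_mul] at e2
  refine (norm_sub_le _ _).trans ?_
  rw [norm_mul, norm_mul, norm_pow, norm_pow, norm_eq_one_of_cube hm, norm_ωc, one_pow, one_mul,
    one_mul]
  calc _ ≤ 4 / ‖p‖ ^ 2 + 4 / ‖p‖ ^ 2 := add_le_add e2 e1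
    _ = _ := by ring

lemma Ai_mul_Ai {m p : ℂ} {μ : ℝ} (hμ : 4 ≤ μ) (hm : m ^ 3 = 1)
    (h1 : m * p ∈ airyCone μ) (h2 : -ωc * p ∈ airyCone μ) :
    Ai ((m * p) ^ 2) * Ai ((-ωc * p) ^ 2) * (2 * p + channelCorr m p)
      = Ai 0 * deriv Ai 0 * (ωc ^ 2 - m ^ 2) := by
  have hω := ωc_cube
  have hw := Ai_wronskian (a := m ^ 2) (b := ωc ^ 2)
    (by linear_combination (m ^ 3 + 1) * hm) (by linear_combination (ωc ^ 3 + 1) * hω) (p ^ 2)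
  have e1 : m ^ 2 * p ^ 2 = (m * p) ^ 2 := by ring
  have e2 : ωc ^ 2 * p ^ 2 = (-ωc * p) ^ 2 := by ring
  rw [e1, e2, deriv_Ai_sq h1.2.le (hμ.trans (norm_le_of_mem_airyCone h1)),
    deriv_Ai_sq h2.2.le (hμ.trans (norm_le_of_mem_airyCone h2))] at hw
  rw [← hw, channelCorr]
  linear_combination (-Ai ((m * p) ^ 2) * Ai ((-ωc * p) ^ 2) * p) * (hm + hω)

lemma norm_Ai_eq {c : ℂ} (hc : ∀ w : ℂ, 4 < w.re → ‖w‖ < 4 * w.re → Ai (w ^ 2) = c * airySaddle w)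
    {w : ℂ} {μ : ℝ} (hμ : 4 ≤ μ) (h1 : w ∈ airyCone μ) :
    ‖Ai (w ^ 2)‖ = ‖c‖ * Real.exp (-(2 / 3 * (w ^ 3).re)) * ‖saddle 0 w‖ := by
  rw [hc w (hμ.trans_lt h1.1) h1.2, airySaddle, norm_mul, norm_mul, Complex.norm_exp, mul_assoc]
  congr 3
  have : -(2 * w ^ 3 / 3) = ((-(2 / 3) : ℝ) : ℂ) * w ^ 3 := by push_cast; ring
  rw [this, Complex.re_ofReal_mul]
  ring

lemma norm_Ai_div_Ai {m p : ℂ} {μ : ℝ} (hμ : 4 ≤ μ) (hm : m ^ 3 = 1) (hmω : ωc ^ 2 - m ^ 2 ≠ 0)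
    (h1 : m * p ∈ airyCone μ) (h2 : -ωc * p ∈ airyCone μ) :
    ‖Ai ((m * p) ^ 2) / Ai ((-ωc * p) ^ 2)‖
      = Real.exp (-(4 / 3 * (p ^ 3).re)) * (‖saddle 0 (m * p)‖ / ‖saddle 0 (-ωc * p)‖) := by
  obtain ⟨c, hc⟩ := exists_Ai_sq_eq
  have hne : Ai ((m * p) ^ 2) ≠ 0 := by
    intro h
    have := Ai_mul_Ai hμ hm h1 h2
    rw [h, zero_mul, zero_mul] at this
    refine mul_ne_zero ?_ hmω this.symm
    rw [Ai_zero_mul_deriv]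
    simp [pi_ne_zero]
  have hc0 : ‖c‖ ≠ 0 := by
    intro h
    rw [norm_eq_zero] at h
    apply hne
    rw [hc _ (hμ.trans_lt h1.1) h1.2, h, zero_mul]
  rw [norm_div, norm_Ai_eq hc hμ h1, norm_Ai_eq hc hμ h2]
  have e1 : (m * p) ^ 3 = p ^ 3 := by rw [mul_pow, hm, one_mul]
  have e2 : (-ωc * p) ^ 3 = -p ^ 3 := by
    linear_combination (-p ^ 3) * ωc_cube
  rw [e1, e2, Complex.neg_re]
  have e3 : Real.exp (-(4 / 3 * (p ^ 3).re)) = Real.exp (-(2 / 3 * (p ^ 3).re)) /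
      Real.exp (-(2 / 3 * -(p ^ 3).re)) := by
    rw [← Real.exp_sub]
    congr 1
    ring
  rw [e3]
  field_simp

lemma norm_Ai_div_Ai_bounds {m p : ℂ} {μ : ℝ} (hμ : 4 ≤ μ) (hm : m ^ 3 = 1)
    (hmω : ωc ^ 2 - m ^ 2 ≠ 0) (h1 : m * p ∈ airyCone μ) (h2 : -ωc * p ∈ airyCone μ) :
    Real.exp (-(4 / 3 * (p ^ 3).re)) / 3 ≤ ‖Ai ((m * p) ^ 2) / Ai ((-ωc * p) ^ 2)‖ ∧
    ‖Ai ((m * p) ^ 2) / Ai ((-ωc * p) ^ 2)‖ ≤ 3 * Real.exp (-(4 / 3 * (p ^ 3).re)) := by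
  rw [norm_Ai_div_Ai hμ hm hmω h1 h2]
  have n1 := hμ.trans (norm_le_of_mem_airyCone h1)
  obtain ⟨l1, u1⟩ := saddle_zero_bounds h1.2.le n1
  obtain ⟨l2, u2⟩ := saddle_zero_bounds h2.2.le (hμ.trans (norm_le_of_mem_airyCone h2))
  rw [norm_mul, norm_eq_one_of_cube hm, one_mul] at l1 u1 n1
  rw [norm_mul, norm_neg, norm_ωc, one_mul] at l2 u2
  have hs : 0 < √‖p‖ := Real.sqrt_pos.2 (by linarith)
  have hx : 0 < ‖saddle 0 (-ωc * p)‖ := by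
    by_contra h
    have : ‖saddle 0 (-ωc * p)‖ = 0 := le_antisymm (not_lt.1 h) (norm_nonneg _)
    rw [this] at l2
    linarith
  have hE := Real.exp_pos (-(4 / 3 * (p ^ 3).re))
  have r1 : 1 / 3 ≤ ‖saddle 0 (m * p)‖ / ‖saddle 0 (-ωc * p)‖ := by
    rw [le_div_iff₀ hx]
    by_contra! h
    nlinarith
  have r2 : ‖saddle 0 (m * p)‖ / ‖saddle 0 (-ωc * p)‖ ≤ 3 := by
    rw [div_le_iff₀ hx]
    by_contra! h
    nlinarith
  constructor <;> nlinarith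

lemma norm_Ai_ratio_le {m p p' : ℂ} {μ : ℝ} (hμ : 4 ≤ μ) (hm : m ^ 3 = 1)
    (hmω : ωc ^ 2 - m ^ 2 ≠ 0) (h1 : m * p ∈ airyCone μ) (h2 : -ωc * p ∈ airyCone μ)
    (h1' : m * p' ∈ airyCone μ) (h2' : -ωc * p' ∈ airyCone μ) :
    ‖Ai ((m * p) ^ 2) / Ai ((-ωc * p) ^ 2)‖ ≤ ‖Ai ((m * p') ^ 2) / Ai ((-ωc * p') ^ 2)‖ *
      Real.exp (-(4 / 3 * (p ^ 3 - p' ^ 3).re) + 16 / μ * ‖p - p'‖) := by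
  rw [norm_Ai_div_Ai hμ hm hmω h1 h2, norm_Ai_div_Ai hμ hm hmω h1' h2']
  have g1 := norm_saddle_zero_le_exp hμ h1.1 h1.2 h1'.1 h1'.2
  have g2 := norm_saddle_zero_le_exp hμ h2'.1 h2'.2 h2.1 h2.2
  rw [← mul_sub, norm_mul, norm_eq_one_of_cube hm, one_mul] at g1
  rw [← mul_sub, norm_mul, norm_neg, norm_ωc, one_mul, norm_sub_rev] at g2
  have x2 : 0 < ‖saddle 0 (-ωc * p)‖ := norm_pos_iff.2
    (saddle_zero_ne h2.2.le (hμ.trans (norm_le_of_mem_airyCone h2)))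
  have x2' : 0 < ‖saddle 0 (-ωc * p')‖ := norm_pos_iff.2
    (saddle_zero_ne h2'.2.le (hμ.trans (norm_le_of_mem_airyCone h2')))
  have hq : ‖saddle 0 (m * p)‖ / ‖saddle 0 (-ωc * p)‖ ≤
      ‖saddle 0 (m * p')‖ / ‖saddle 0 (-ωc * p')‖ *
        (Real.exp (8 / μ * ‖p - p'‖) * Real.exp (8 / μ * ‖p - p'‖)) := by
    rw [div_le_iff₀ x2]
    calc _ ≤ ‖saddle 0 (m * p')‖ * Real.exp (8 / μ * ‖p - p'‖) := g1
      _ = ‖saddle 0 (m * p')‖ * Real.exp (8 / μ * ‖p - p'‖) / ‖saddle 0 (-ωc * p')‖ *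
          ‖saddle 0 (-ωc * p')‖ := (div_mul_cancel₀ _ x2'.ne').symm
      _ ≤ ‖saddle 0 (m * p')‖ * Real.exp (8 / μ * ‖p - p'‖) / ‖saddle 0 (-ωc * p')‖ *
          (‖saddle 0 (-ωc * p)‖ * Real.exp (8 / μ * ‖p - p'‖)) := by gcongr
      _ = _ := by ring
  have hexp : Real.exp (-(4 / 3 * (p ^ 3 - p' ^ 3).re) + 16 / μ * ‖p - p'‖)
      = Real.exp (-(4 / 3 * (p ^ 3).re)) / Real.exp (-(4 / 3 * (p' ^ 3).re)) *
        (Real.exp (8 / μ * ‖p - p'‖) * Real.exp (8 / μ * ‖p - p'‖)) := by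
    rw [← Real.exp_sub, ← Real.exp_add, ← Real.exp_add, Complex.sub_re]
    congr 1
    ring
  rw [hexp]
  calc _ ≤ Real.exp (-(4 / 3 * (p ^ 3).re)) * (‖saddle 0 (m * p')‖ / ‖saddle 0 (-ωc * p')‖ *
        (Real.exp (8 / μ * ‖p - p'‖) * Real.exp (8 / μ * ‖p - p'‖))) := by gcongr
    _ = _ := by field_simp

lemma det_identity_direct {tp tm up um vp vm Ep Em ρ ap am H : ℂ} (hH : H ≠ 0) (hρ : Ep = ρ * Em)
    (hp : tp ^ 2 * Ep * ap = -H) (hm : tm ^ 2 * Em * am = -H)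
    (hup : up = -ωc * tp * (1 + Ep)) (hum : um = -ωc * tm * (1 + Em))
    (hvp : vp = ωc ^ 2 * Ep * tp) (hvm : vm = ωc ^ 2 * Em * tm) :
    (1 + (up * vp + um * vm) / H + um * vp * (up * vm - um * vp) / H ^ 2) * (ap * am)
      = (1 + ap) * (1 + am) - ρ + Em * (ap + 1) + Ep * (am - 1) := by
  have hω := ωc_cube
  have e1 : up * vp = -(tp ^ 2 * (1 + Ep) * Ep) := by
    rw [hup, hvp]; linear_combination (-(tp ^ 2 * (1 + Ep) * Ep)) * hω
  have e2 : um * vm = -(tm ^ 2 * (1 + Em) * Em) := by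
    rw [hum, hvm]; linear_combination (-(tm ^ 2 * (1 + Em) * Em)) * hω
  have e3 : um * vp = -(tm * tp * (1 + Em) * Ep) := by
    rw [hum, hvp]; linear_combination (-(tm * tp * (1 + Em) * Ep)) * hω
  have e4 : up * vm = -(tm * tp * (1 + Ep) * Em) := by
    rw [hup, hvm]; linear_combination (-(tm * tp * (1 + Ep) * Em)) * hω
  have hH' : -H ≠ 0 := neg_ne_zero.2 hH
  have hEp : Ep ≠ 0 := by rintro h; rw [h] at hp; exact hH' (by rw [← hp]; ring)
  have hEm : Em ≠ 0 := by rintro h; rw [h] at hm; exact hH' (by rw [← hm]; ring)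
  have htp : tp ≠ 0 := by rintro h; rw [h] at hp; exact hH' (by rw [← hp]; ring)
  have htm : tm ≠ 0 := by rintro h; rw [h] at hm; exact hH' (by rw [← hm]; ring)
  have ea : ap = -H / (tp ^ 2 * Ep) := by rw [← hp]; field_simp
  have eb : am = -H / (tm ^ 2 * Em) := by rw [← hm]; field_simp
  have er : ρ = Ep / Em := by rw [hρ]; field_simp
  rw [e1, e2, e3, e4, ea, eb, er]
  field_simp
  ring

lemma det_identity_rotated {tp tm up um vp vm Ep Em ρ ap am H : ℂ} (hH : H ≠ 0) (hρ : Ep = ρ * Em)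
    (hp : tp ^ 2 * Ep * ap = H) (hm : tm ^ 2 * Em * am = H)
    (hup : up = ωc * Ep * tp) (hum : um = ωc * Em * tm)
    (hvp : vp = -ωc ^ 2 * tp * (1 + Ep)) (hvm : vm = -ωc ^ 2 * tm * (1 + Em)) :
    (1 + (up * vp + um * vm) / H + um * vp * (up * vm - um * vp) / H ^ 2) * (ap * am)
      = (ap - 1) * (am - 1) - ρ⁻¹ - Em * (ap + 1) - Ep * (am - 1) := by
  have hω := ωc_cube
  have e1 : up * vp = -(tp ^ 2 * (1 + Ep) * Ep) := by
    rw [hup, hvp]; linear_combination (-(tp ^ 2 * (1 + Ep) * Ep)) * hω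
  have e2 : um * vm = -(tm ^ 2 * (1 + Em) * Em) := by
    rw [hum, hvm]; linear_combination (-(tm ^ 2 * (1 + Em) * Em)) * hω
  have e3 : um * vp = -(tm * tp * (1 + Ep) * Em) := by
    rw [hum, hvp]; linear_combination (-(tm * tp * (1 + Ep) * Em)) * hω
  have e4 : up * vm = -(tm * tp * (1 + Em) * Ep) := by
    rw [hup, hvm]; linear_combination (-(tm * tp * (1 + Em) * Ep)) * hω
  have hEp : Ep ≠ 0 := by rintro h; rw [h] at hp; exact hH (by rw [← hp]; ring)
  have hEm : Em ≠ 0 := by rintro h; rw [h] at hm; exact hH (by rw [← hm]; ring)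
  have htp : tp ≠ 0 := by rintro h; rw [h] at hp; exact hH (by rw [← hp]; ring)
  have htm : tm ≠ 0 := by rintro h; rw [h] at hm; exact hH (by rw [← hm]; ring)
  have ea : ap = H / (tp ^ 2 * Ep) := by rw [← hp]; field_simp
  have eb : am = H / (tm ^ 2 * Em) := by rw [← hm]; field_simp
  have er : ρ = Ep / Em := by rw [hρ]; field_simp
  rw [e1, e2, e3, e4, ea, eb, er]
  field_simp
  ring

/-- Bounds shared by the two factorisations of the resonance determinant: `Ep`, `Em` are ratios of
dominated to dominating Airy solutions at the two interaction points, `ρ` their quotient, and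
`ap`, `am` the reciprocals of the diagonal terms. -/
structure ChannelData (η F μ : ℝ) (pp pm Ep Em ρ ap am : ℂ) : Prop where
  rho_eq : Ep = ρ * Em
  Em_ne : Em ≠ 0
  ap_sub : ‖ap - 2 * η * (F * pp)‖ ≤ 8 * η * F / ‖pp‖ ^ 2
  am_sub : ‖am - 2 * η * (F * pm)‖ ≤ 8 * η * F / ‖pm‖ ^ 2
  le_Ep : Real.exp (-(4 / 3 * (pp ^ 3).re)) / 3 ≤ ‖Ep‖
  Em_le : ‖Em‖ ≤ 3 * Real.exp (-(4 / 3 * (pm ^ 3).re))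
  rho_le : ‖ρ‖ ≤ Real.exp (-(4 / 3 * (pp ^ 3 - pm ^ 3).re) + 16 / μ * ‖pp - pm‖)

lemma channelData {η F μ : ℝ} (hη : 0 < η) (hF : 0 < F) (hμ : 4 ≤ μ) {m n pp pm : ℂ}
    (hm : m ^ 3 = 1) (hmω : ωc ^ 2 - m ^ 2 ≠ 0) (hn : ‖n‖ = 1)
    (h1 : m * pp ∈ airyCone μ) (h2 : -ωc * pp ∈ airyCone μ)
    (h1' : m * pm ∈ airyCone μ) (h2' : -ωc * pm ∈ airyCone μ) :
    ∃ ρ, ChannelData η F μ pp pm (n * (Ai ((m * pp) ^ 2) / Ai ((-ωc * pp) ^ 2)))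
      (n * (Ai ((m * pm) ^ 2) / Ai ((-ωc * pm) ^ 2))) ρ
      (η * F * (2 * pp + channelCorr m pp)) (η * F * (2 * pm + channelCorr m pm)) := by
  have bp := norm_Ai_div_Ai_bounds hμ hm hmω h1 h2
  have bm := norm_Ai_div_Ai_bounds hμ hm hmω h1' h2'
  have hr := norm_Ai_ratio_le hμ hm hmω h1 h2 h1' h2'
  set Yp := Ai ((m * pp) ^ 2) / Ai ((-ωc * pp) ^ 2)
  set Ym := Ai ((m * pm) ^ 2) / Ai ((-ωc * pm) ^ 2)
  have hYm : 0 < ‖Ym‖ := lt_of_lt_of_le (by positivity) bm.1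
  have hn0 : n ≠ 0 := by rintro rfl; simp at hn
  have hYm0 : Ym ≠ 0 := norm_pos_iff.1 hYm
  have hsub : ∀ p, ‖channelCorr m p‖ ≤ 8 / ‖p‖ ^ 2 →
      ‖η * F * (2 * p + channelCorr m p) - 2 * η * (F * p)‖ ≤ 8 * η * F / ‖p‖ ^ 2 := by
    intro p hp
    have : (η * F * (2 * p + channelCorr m p) - 2 * η * (F * p) : ℂ)
        = ((η * F : ℝ) : ℂ) * channelCorr m p := by push_cast; ring
    rw [this, norm_mul, Complex.norm_real, Real.norm_of_nonneg (by positivity)]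
    calc _ ≤ η * F * (8 / ‖p‖ ^ 2) := by gcongr
      _ = _ := by ring
  refine ⟨Yp / Ym, ⟨?_, mul_ne_zero hn0 hYm0, hsub pp (norm_channelCorr_le hμ hm h1 h2),
    hsub pm (norm_channelCorr_le hμ hm h1' h2'), ?_, ?_, ?_⟩⟩
  · field_simp
  · rw [norm_mul, hn, one_mul]; exact bp.1
  · rw [norm_mul, hn, one_mul]; exact bm.2
  · rw [norm_div, div_le_iff₀ hYm, mul_comm]
    exact hr

lemma ωc_ne_zero : ωc ≠ 0 := by
  intro h
  have := ωc_cube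
  rw [h] at this
  norm_num at this

lemma ωc_ne_one : ωc ≠ 1 := by
  intro h
  have := ωc_sq
  rw [h] at this
  norm_num at this

lemma Ai_sq_connection (p : ℂ) :
    Ai (p ^ 2) + ωc * Ai ((ωc ^ 2 * p) ^ 2) + ωc ^ 2 * Ai ((-ωc * p) ^ 2) = 0 := by
  have h := Ai_connection (p ^ 2)
  have e1 : (ωc ^ 2 * p) ^ 2 = ωc * p ^ 2 := by linear_combination ωc * p ^ 2 * ωc_cube
  have e2 : (-ωc * p) ^ 2 = ωc ^ 2 * p ^ 2 := by ring
  rw [e1, e2]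
  exact h

lemma Df_eq (κ η f : ℝ) (z : ℂ) {pp pm : ℂ}
    (hp : pp ^ 2 = -(z - κ * f) * ((f ^ (-(2 : ℝ) / 3) : ℝ) : ℂ))
    (hm : pm ^ 2 = -(z + κ * f) * ((f ^ (-(2 : ℝ) / 3) : ℝ) : ℂ)) :
    Df κ η f z = 1 + (Ai ((ωc ^ 2 * pp) ^ 2) * Ai (pp ^ 2) + Ai ((ωc ^ 2 * pm) ^ 2) * Ai (pm ^ 2)) /
        (η * Wf f) + Ai ((ωc ^ 2 * pm) ^ 2) * Ai (pp ^ 2) *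
        (Ai ((ωc ^ 2 * pp) ^ 2) * Ai (pm ^ 2) - Ai ((ωc ^ 2 * pm) ^ 2) * Ai (pp ^ 2)) /
        (η * Wf f) ^ 2 := by
  have e1 : (ωc ^ 2 * pp) ^ 2 = -ωc * (z - κ * f) * ((f ^ (-(2 : ℝ) / 3) : ℝ) : ℂ) := by
    linear_combination ωc * pp ^ 2 * ωc_cube + ωc * hp
  have e2 : (ωc ^ 2 * pm) ^ 2 = -ωc * (z + κ * f) * ((f ^ (-(2 : ℝ) / 3) : ℝ) : ℂ) := by
    linear_combination ωc * pm ^ 2 * ωc_cube + ωc * hm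
  rw [e1, e2, hp, hm, mul_pow (η : ℂ)]
  rfl

lemma mul_Wf_ne_zero {η f : ℝ} (hη : 0 < η) (hf : 0 < f) : (η : ℂ) * Wf f ≠ 0 := by
  have h1 : (η : ℂ) ≠ 0 := by exact_mod_cast hη.ne'
  have h2 : ((f ^ ((1 : ℝ) / 3) : ℝ) : ℂ) ≠ 0 := by exact_mod_cast (Real.rpow_pos_of_pos hf _).ne'
  have h3 : (π : ℂ) ≠ 0 := by exact_mod_cast pi_ne_zero
  unfold Wf
  exact mul_ne_zero h1 (div_ne_zero (mul_ne_zero h2 (Complex.exp_ne_zero _))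
    (mul_ne_zero two_ne_zero h3))

lemma channel_algebra_direct {t u v s K W F η : ℂ} (hW : W = -(K * (1 - ωc)) * F) (ht : t ≠ 0)
    (hk : v * t * s = K * (ωc ^ 2 - 1 ^ 2)) (hc : v + ωc * u + ωc ^ 2 * t = 0) :
    t ^ 2 * (ωc * (v / t)) * (η * F * s) = -(η * W) ∧ u = -ωc * t * (1 + ωc * (v / t)) ∧
      v = ωc ^ 2 * (ωc * (v / t)) * t := by
  have hω := ωc_cube
  refine ⟨?_, ?_, ?_⟩
  · rw [hW]
    field_simp
    linear_combination (η * F * ωc) * hk + (η * F * K) * hω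
  · field_simp
    linear_combination ωc ^ 2 * hc - (u + ωc * t) * hω
  · field_simp
    linear_combination (-v) * hω

lemma channel_algebra_rotated {t u v s K W F η : ℂ} (hW : W = -(K * (1 - ωc)) * F) (ht : t ≠ 0)
    (hk : u * t * s = K * (ωc ^ 2 - (ωc ^ 2) ^ 2)) (hc : v + ωc * u + ωc ^ 2 * t = 0) :
    t ^ 2 * (ωc ^ 2 * (u / t)) * (η * F * s) = η * W ∧ u = ωc * (ωc ^ 2 * (u / t)) * t ∧
      v = -ωc ^ 2 * t * (1 + ωc ^ 2 * (u / t)) := by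
  have hω := ωc_cube
  refine ⟨?_, ?_, ?_⟩
  · rw [hW]
    field_simp
    linear_combination (η * F * ωc ^ 2) * hk + (η * F * K) * (ωc - (ωc ^ 3 + 1)) * hω
  · field_simp
    linear_combination (-u) * hω
  · field_simp
    linear_combination hc + ωc * u * hω

/-- Factorisation of the determinant through `Ai(p²)` and `Ai(ω²p²)`. -/
lemma exists_channelData_direct {κ η f : ℝ} {z pp pm : ℂ} {μ : ℝ} (hη : 0 < η) (hf : 0 < f)
    (hμ : 4 ≤ μ)
    (hp : pp ^ 2 = -(z - κ * f) * ((f ^ (-(2 : ℝ) / 3) : ℝ) : ℂ))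
    (hm : pm ^ 2 = -(z + κ * f) * ((f ^ (-(2 : ℝ) / 3) : ℝ) : ℂ))
    (h1 : pp ∈ airyCone μ) (h2 : -ωc * pp ∈ airyCone μ)
    (h1' : pm ∈ airyCone μ) (h2' : -ωc * pm ∈ airyCone μ) :
    ∃ Ep Em ρ ap am, ChannelData η (f ^ ((1 : ℝ) / 3)) μ pp pm Ep Em ρ ap am ∧
      Df κ η f z * (ap * am) = (1 + ap) * (1 + am) - ρ + Em * (ap + 1) + Ep * (am - 1) := by
  have hF : 0 < f ^ ((1 : ℝ) / 3) := Real.rpow_pos_of_pos hf _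
  have hω := ωc_cube
  have hmω : ωc ^ 2 - (1 : ℂ) ^ 2 ≠ 0 := by
    intro h
    exact ωc_ne_one (by linear_combination hω - ωc * h)
  rw [← one_mul pp] at h1
  rw [← one_mul pm] at h1'
  obtain ⟨ρ, hd⟩ := channelData hη hF hμ (n := ωc) (by norm_num) hmω norm_ωc h1 h2 h1' h2'
  refine ⟨_, _, ρ, _, _, hd, ?_⟩
  have kp := Ai_mul_Ai hμ (by norm_num) h1 h2
  have km := Ai_mul_Ai hμ (by norm_num) h1' h2'
  have hK : Ai 0 * deriv Ai 0 * (ωc ^ 2 - (1 : ℂ) ^ 2) ≠ 0 := by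
    refine mul_ne_zero ?_ hmω
    rw [Ai_zero_mul_deriv]
    simp [pi_ne_zero]
  have htp : Ai ((-ωc * pp) ^ 2) ≠ 0 := by
    intro h; rw [h] at kp; exact hK (by rw [← kp]; ring)
  have htm : Ai ((-ωc * pm) ^ 2) ≠ 0 := by
    intro h; rw [h] at km; exact hK (by rw [← km]; ring)
  have cp := Ai_sq_connection pp
  have cm := Ai_sq_connection pm
  rw [Df_eq κ η f z hp hm]
  have hW : Wf f = _ := Wf_eq f
  simp only [one_mul] at kp km hd ⊢
  obtain ⟨p1, p2, p3⟩ := channel_algebra_direct (η := η) hW htp kp cp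
  obtain ⟨m1, m2, m3⟩ := channel_algebra_direct (η := η) hW htm km cm
  exact det_identity_direct (mul_Wf_ne_zero hη hf) hd.rho_eq p1 m1 p2 m2 p3 m3

/-- Factorisation of the determinant through `Ai(ωp²)` and `Ai(ω²p²)`. -/
lemma exists_channelData_rotated {κ η f : ℝ} {z pp pm : ℂ} {μ : ℝ} (hη : 0 < η) (hf : 0 < f)
    (hμ : 4 ≤ μ)
    (hp : pp ^ 2 = -(z - κ * f) * ((f ^ (-(2 : ℝ) / 3) : ℝ) : ℂ))
    (hm : pm ^ 2 = -(z + κ * f) * ((f ^ (-(2 : ℝ) / 3) : ℝ) : ℂ))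
    (h1 : ωc ^ 2 * pp ∈ airyCone μ) (h2 : -ωc * pp ∈ airyCone μ)
    (h1' : ωc ^ 2 * pm ∈ airyCone μ) (h2' : -ωc * pm ∈ airyCone μ) :
    ∃ Ep Em ρ ap am, ChannelData η (f ^ ((1 : ℝ) / 3)) μ pp pm Ep Em ρ ap am ∧
      Df κ η f z * (ap * am) = (ap - 1) * (am - 1) - ρ⁻¹ - Em * (ap + 1) - Ep * (am - 1) := by
  have hF : 0 < f ^ ((1 : ℝ) / 3) := Real.rpow_pos_of_pos hf _
  have hω := ωc_cube
  have hω6 : (ωc ^ 2) ^ 3 = 1 := by linear_combination (ωc ^ 3 + 1) * hω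
  have hmω : ωc ^ 2 - (ωc ^ 2) ^ 2 ≠ 0 := by
    intro h
    exact ωc_ne_one (by linear_combination (-ωc + ωc ^ 3 + 1) * hω + ωc ^ 2 * h)
  obtain ⟨ρ, hd⟩ := channelData hη hF hμ (n := ωc ^ 2) hω6 hmω
    (by rw [norm_pow, norm_ωc, one_pow]) h1 h2 h1' h2'
  refine ⟨_, _, ρ, _, _, hd, ?_⟩
  have kp := Ai_mul_Ai hμ hω6 h1 h2
  have km := Ai_mul_Ai hμ hω6 h1' h2'
  have hK : Ai 0 * deriv Ai 0 * (ωc ^ 2 - (ωc ^ 2) ^ 2) ≠ 0 := by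
    refine mul_ne_zero ?_ hmω
    rw [Ai_zero_mul_deriv]
    simp [pi_ne_zero]
  have htp : Ai ((-ωc * pp) ^ 2) ≠ 0 := by
    intro h; rw [h] at kp; exact hK (by rw [← kp]; ring)
  have htm : Ai ((-ωc * pm) ^ 2) ≠ 0 := by
    intro h; rw [h] at km; exact hK (by rw [← km]; ring)
  have cp := Ai_sq_connection pp
  have cm := Ai_sq_connection pm
  rw [Df_eq κ η f z hp hm]
  have hW : Wf f = _ := Wf_eq f
  obtain ⟨p1, p2, p3⟩ := channel_algebra_rotated (η := η) hW htp kp cp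
  obtain ⟨m1, m2, m3⟩ := channel_algebra_rotated (η := η) hW htm km cm
  exact det_identity_rotated (mul_Wf_ne_zero hη hf) hd.rho_eq p1 m1 p2 m2 p3 m3

lemma exists_quadrant_sqrt {ζ : ℂ} (h : 0 ≤ ζ.im) :
    ∃ q : ℂ, 0 ≤ q.re ∧ 0 ≤ q.im ∧ q ^ 2 = ζ := by
  have h1 : 0 ≤ (‖ζ‖ + ζ.re) / 2 := by
    linarith [(abs_le.1 (Complex.abs_re_le_norm ζ)).1]
  have h2 : 0 ≤ (‖ζ‖ - ζ.re) / 2 := by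
    linarith [(abs_le.1 (Complex.abs_re_le_norm ζ)).2]
  refine ⟨⟨√((‖ζ‖ + ζ.re) / 2), √((‖ζ‖ - ζ.re) / 2)⟩, Real.sqrt_nonneg _, Real.sqrt_nonneg _, ?_⟩
  have hn : ‖ζ‖ ^ 2 = ζ.re ^ 2 + ζ.im ^ 2 := by
    rw [Complex.sq_norm, Complex.normSq_apply]; ring
  apply Complex.ext
  · simp only [sq, Complex.mul_re]
    rw [Real.mul_self_sqrt h1, Real.mul_self_sqrt h2]
    ring
  · simp only [sq, Complex.mul_im]
    rw [mul_comm (√((‖ζ‖ - ζ.re) / 2)), ← Real.sqrt_mul h1,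
      show (‖ζ‖ + ζ.re) / 2 * ((‖ζ‖ - ζ.re) / 2) = (ζ.im / 2) ^ 2 by linear_combination hn / 4,
      Real.sqrt_sq (by positivity)]
    ring

lemma sq_norm_eq (w : ℂ) : ‖w‖ ^ 2 = w.re ^ 2 + w.im ^ 2 := by
  rw [Complex.sq_norm, Complex.normSq_apply]; ring

lemma sq_norm_add_ge {a b : ℂ} (ha : 0 ≤ a.re) (ha' : 0 ≤ a.im) (hb : 0 ≤ b.re) (hb' : 0 ≤ b.im) :
    ‖a‖ ^ 2 + ‖b‖ ^ 2 ≤ ‖a + b‖ ^ 2 := by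
  simp only [sq_norm_eq, Complex.add_re, Complex.add_im]
  nlinarith [mul_nonneg ha hb, mul_nonneg ha' hb']

lemma two_mul_re_sq (q : ℂ) : 2 * q.re ^ 2 = ‖q ^ 2‖ + (q ^ 2).re := by
  rw [norm_pow, sq_norm_eq]
  simp only [sq, Complex.mul_re]
  ring

lemma re_cube (q : ℂ) : (q ^ 3).re = q.re * (4 * q.re ^ 2 - 3 * ‖q‖ ^ 2) := by
  rw [sq_norm_eq]
  simp only [pow_succ, pow_zero, one_mul, Complex.mul_re, Complex.mul_im]
  ring

/-- `q`, `qp`, `qm` are the square roots in the closed first quadrant of `ζ`, `ζ + κ f`,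
`ζ - κ f` for some `ζ`. -/
structure QuadrantRoots (κ f : ℝ) (q qp qm : ℂ) : Prop where
  re_nonneg : 0 ≤ q.re
  im_nonneg : 0 ≤ q.im
  p_re_nonneg : 0 ≤ qp.re
  p_im_nonneg : 0 ≤ qp.im
  m_re_nonneg : 0 ≤ qm.re
  m_im_nonneg : 0 ≤ qm.im
  p_sq : qp ^ 2 = q ^ 2 + κ * f
  m_sq : qm ^ 2 = q ^ 2 - κ * f

lemma norm_sub_le_of_sq {a b : ℂ} {c : ℝ} (ha : 0 ≤ a.re) (ha' : 0 ≤ a.im) (hb : 0 ≤ b.re)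
    (hb' : 0 ≤ b.im) (hb0 : 0 < ‖b‖) (h : ‖a ^ 2 - b ^ 2‖ ≤ c) : ‖a - b‖ ≤ c / ‖b‖ := by
  rw [le_div_iff₀ hb0]
  have h1 : ‖b‖ ≤ ‖a + b‖ := by
    have := sq_norm_add_ge ha ha' hb hb'
    exact le_of_sq_le_sq (by nlinarith [sq_nonneg ‖a‖]) (norm_nonneg _)
  calc ‖a - b‖ * ‖b‖ ≤ ‖a - b‖ * ‖a + b‖ := by gcongr
    _ = ‖a ^ 2 - b ^ 2‖ := by rw [← norm_mul]; congr 1; ring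
    _ ≤ c := h

namespace QuadrantRoots

variable {κ f : ℝ} {q qp qm : ℂ}

lemma norm_p_sub (h : QuadrantRoots κ f q qp qm) (hκ : 0 < κ) (hf : 0 < f) (hq : 0 < ‖q‖) :
    ‖qp - q‖ ≤ κ * f / ‖q‖ := by
  refine norm_sub_le_of_sq h.p_re_nonneg h.p_im_nonneg h.re_nonneg h.im_nonneg hq ?_
  rw [h.p_sq, add_sub_cancel_left, ← Complex.ofReal_mul, Complex.norm_real, Real.norm_eq_abs,
    abs_of_pos (by positivity)]

lemma norm_m_sub (h : QuadrantRoots κ f q qp qm) (hκ : 0 < κ) (hf : 0 < f) (hq : 0 < ‖q‖) :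
    ‖qm - q‖ ≤ κ * f / ‖q‖ := by
  refine norm_sub_le_of_sq h.m_re_nonneg h.m_im_nonneg h.re_nonneg h.im_nonneg hq ?_
  rw [h.m_sq, sub_sub_cancel_left, norm_neg, ← Complex.ofReal_mul, Complex.norm_real,
    Real.norm_eq_abs, abs_of_pos (by positivity)]

lemma re_le_p_re (h : QuadrantRoots κ f q qp qm) (hκ : 0 < κ) (hf : 0 < f) : q.re ≤ qp.re := by
  have h1 := two_mul_re_sq q
  have h2 := two_mul_re_sq qp
  have hc : ‖((κ * f : ℝ) : ℂ)‖ = κ * f := by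
    rw [Complex.norm_real, Real.norm_eq_abs, abs_of_pos (by positivity)]
  have h3 : ‖q ^ 2‖ ≤ ‖qp ^ 2‖ + κ * f := by
    have : q ^ 2 = qp ^ 2 - ((κ * f : ℝ) : ℂ) := by rw [h.p_sq]; push_cast; ring
    rw [this]
    exact (norm_sub_le _ _).trans_eq (by rw [hc])
  have h4 : (qp ^ 2).re = (q ^ 2).re + κ * f := by
    rw [h.p_sq, ← Complex.ofReal_mul, Complex.add_re, Complex.ofReal_re]
  exact le_of_sq_le_sq (by linarith) h.p_re_nonneg

lemma norm_le_norm_add (h : QuadrantRoots κ f q qp qm) : ‖q‖ ≤ ‖qp + qm‖ := by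
  have h1 := sq_norm_add_ge h.p_re_nonneg h.p_im_nonneg h.m_re_nonneg h.m_im_nonneg
  have h2 : 2 * ‖q‖ ^ 2 ≤ ‖qp‖ ^ 2 + ‖qm‖ ^ 2 := by
    have : (2 : ℂ) * q ^ 2 = qp ^ 2 + qm ^ 2 := by rw [h.p_sq, h.m_sq]; ring
    calc 2 * ‖q‖ ^ 2 = ‖(2 : ℂ) * q ^ 2‖ := by simp
      _ ≤ ‖qp ^ 2‖ + ‖qm ^ 2‖ := by rw [this]; exact norm_add_le _ _
      _ = _ := by simp
  exact le_of_sq_le_sq (by nlinarith [sq_nonneg ‖q‖]) (norm_nonneg _)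

lemma norm_p_sub_m (h : QuadrantRoots κ f q qp qm) (hκ : 0 < κ) (hf : 0 < f) (hq : 0 < ‖q‖) :
    ‖qp - qm‖ ≤ 2 * κ * f / ‖q‖ := by
  rw [le_div_iff₀ hq]
  have e : (qp - qm) * (qp + qm) = ((2 * κ * f : ℝ) : ℂ) := by
    push_cast; linear_combination h.p_sq - h.m_sq
  calc ‖qp - qm‖ * ‖q‖ ≤ ‖qp - qm‖ * ‖qp + qm‖ := by gcongr; exact h.norm_le_norm_add
    _ = 2 * κ * f := by
      rw [← norm_mul, e, Complex.norm_real, Real.norm_eq_abs, abs_of_pos (by positivity)]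

/-- Difference of the phases at the two roots. -/
lemma re_cube_sub (h : QuadrantRoots κ f q qp qm) (hκ : 0 < κ) (hf : 0 < f) (hq : 0 < ‖q‖) :
    2 * κ * f * q.re - (2 * κ * f / ‖q‖) ^ 3 / 3 ≤ 4 / 3 * (qp ^ 3 - qm ^ 3).re := by
  have e : (4 / 3 : ℂ) * (qp ^ 3 - qm ^ 3)
      = ((2 * κ * f : ℝ) : ℂ) * (qp + qm) + (qp - qm) ^ 3 / 3 := by
    push_cast; linear_combination (qp + qm) * (h.p_sq - h.m_sq)
  have e' : 4 / 3 * (qp ^ 3 - qm ^ 3).re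
      = 2 * κ * f * (qp.re + qm.re) + ((qp - qm) ^ 3).re / 3 := by
    have := congrArg Complex.re e
    rw [show (4 / 3 : ℂ) = ((4 / 3 : ℝ) : ℂ) by push_cast; rfl, Complex.re_ofReal_mul,
      Complex.add_re, Complex.re_ofReal_mul, Complex.add_re] at this
    rw [this, show (3 : ℂ) = ((3 : ℝ) : ℂ) by push_cast; rfl, Complex.div_ofReal_re]
  have h1 : -((2 * κ * f / ‖q‖) ^ 3) ≤ ((qp - qm) ^ 3).re := by
    have h2 := (abs_le.1 (Complex.abs_re_le_norm ((qp - qm) ^ 3))).1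
    rw [norm_pow] at h2
    have := pow_le_pow_left₀ (norm_nonneg _) (h.norm_p_sub_m hκ hf hq) 3
    linarith
  have h3 : 2 * κ * f * q.re ≤ 2 * κ * f * (qp.re + qm.re) := by
    gcongr; linarith [h.re_le_p_re hκ hf, h.m_re_nonneg]
  rw [e']
  linarith

end QuadrantRoots

lemma re_neg_ωc_mul (q : ℂ) : (-ωc * q).re = (q.re + √3 * q.im) / 2 := by
  rw [ωc_eq]; simp [Complex.mul_re, Complex.mul_im]; ring

lemma re_ωc_sq_mul (q : ℂ) : (ωc ^ 2 * q).re = (√3 * q.im - q.re) / 2 := by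
  rw [ωc_sq, ωc_eq]; simp [Complex.mul_re, Complex.mul_im]; ring

lemma half_norm_le_neg_ωc {q : ℂ} (h : 0 ≤ q.re) (h' : 0 ≤ q.im) : ‖q‖ / 2 ≤ (-ωc * q).re := by
  rw [re_neg_ωc_mul]
  have h1 := sq_norm_eq q
  have h3 : √3 ^ 2 = 3 := Real.sq_sqrt (by norm_num)
  have h4 : 0 ≤ √3 * q.im := by positivity
  have : ‖q‖ ≤ q.re + √3 * q.im := abs_le_of_sq_le_sq' (by
    nlinarith [mul_nonneg h h4, sq_nonneg q.im]) (by linarith) |>.2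
  linarith

lemma half_norm_le_ωc_sq {q : ℂ} (h : 0 ≤ q.re) (h' : 0 ≤ q.im) (hq : q.re ≤ ‖q‖ / 2) :
    ‖q‖ / 2 ≤ (ωc ^ 2 * q).re := by
  rw [re_ωc_sq_mul]
  have h1 := sq_norm_eq q
  have h3 : √3 ^ 2 = 3 := Real.sq_sqrt (by norm_num)
  have h4 : 0 ≤ √3 * q.im := by positivity
  have : q.re + ‖q‖ ≤ √3 * q.im := abs_le_of_sq_le_sq' (by
    have : (√3 * q.im) ^ 2 = 3 * q.im ^ 2 := by rw [mul_pow, h3]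
    rw [this]
    nlinarith [norm_nonneg q, mul_nonneg h (sub_nonneg.2 hq),
      mul_nonneg (norm_nonneg q) (sub_nonneg.2 hq)]) (by linarith) |>.2
  linarith

/-- Membership in an Airy cone is stable under small perturbations and rescaling. -/
lemma mem_airyCone_of_near {m q w : ℂ} {F : ℝ} (hF : 0 < F) (hm : ‖m‖ = 1) (hq : 0 < ‖q‖)
    (h : ‖q‖ / 2 ≤ (m * q).re) (hw : ‖w - q‖ ≤ ‖q‖ / 20) :
    m * (w / F) ∈ airyCone (2 / 5 * ‖q‖ / F) := by
  have h1 : (m * (w / F)).re = (m * w).re / F := by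
    rw [← mul_div_assoc, Complex.div_ofReal_re]
  have h2 : ‖m * (w / F)‖ = ‖w‖ / F := by
    rw [norm_mul, hm, one_mul, norm_div, Complex.norm_real, Real.norm_eq_abs, abs_of_pos hF]
  have h3 : ‖q‖ / 2 - ‖q‖ / 20 ≤ (m * w).re := by
    have e : m * w = m * q + m * (w - q) := by ring
    have := (abs_le.1 (Complex.abs_re_le_norm (m * (w - q)))).1
    rw [norm_mul, hm, one_mul] at this
    rw [e, Complex.add_re]
    linarith
  have h4 : ‖w‖ ≤ ‖q‖ + ‖q‖ / 20 := by
    have := norm_add_le q (w - q)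
    rw [add_sub_cancel] at this
    linarith
  refine ⟨?_, ?_⟩
  · rw [h1]; gcongr; linarith
  · rw [h2, h1, ← mul_div_assoc]; gcongr; linarith

/-- The bounds of `ChannelData` expressed through the square root `q` of `-z`. -/
structure ReducedChannel (κ η f C : ℝ) (q qp qm Ep Em ρ ap am : ℂ) : Prop where
  rho_eq : Ep = ρ * Em
  Em_ne : Em ≠ 0
  ap_sub : ‖ap - 2 * η * q‖ ≤ C * (1 + ‖q‖) * (f / ‖q‖ ^ 2)
  am_sub : ‖am - 2 * η * q‖ ≤ C * (1 + ‖q‖) * (f / ‖q‖ ^ 2)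
  le_Ep : Real.exp (-(4 / 3 * (qp ^ 3).re / f)) / 3 ≤ ‖Ep‖
  Em_le : ‖Em‖ ≤ 3 * Real.exp (-(4 / 3 * (qm ^ 3).re / f))
  rho_le : ‖ρ‖ ≤ Real.exp (-(2 * κ * q.re) + C * (f / ‖q‖ ^ 2))

/-- The constant of `ReducedChannel`. -/
noncomputable def channelConst (κ η : ℝ) : ℝ := 16 * η + 2 * η * κ + 80 * κ + 8 / 3 * κ ^ 3

lemma norm_sub_reduced {κ η F f : ℝ} {q w a : ℂ} (hκ : 0 < κ) (hη : 0 < η) (hF : 0 < F)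
    (hFf : F ^ 3 = f) (hq : 0 < ‖q‖) (hw : ‖w - q‖ ≤ κ * f / ‖q‖) (hsmall : 20 * (κ * f) ≤ ‖q‖ ^ 2)
    (ha : ‖a - 2 * η * (F * (w / F))‖ ≤ 8 * η * F / ‖w / (F : ℂ)‖ ^ 2) :
    ‖a - 2 * η * q‖ ≤ channelConst κ η * (1 + ‖q‖) * (f / ‖q‖ ^ 2) := by
  have hf : 0 < f := by rw [← hFf]; positivity
  have hF' : (F : ℂ) ≠ 0 := by exact_mod_cast hF.ne'
  have hw' : ‖w - q‖ ≤ ‖q‖ / 20 := hw.trans (by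
    rw [div_le_iff₀ hq]; nlinarith)
  have hwq : ‖q‖ * (19 / 20) ≤ ‖w‖ := by
    have := norm_sub_norm_le q (q - w)
    rw [sub_sub_cancel, norm_sub_rev] at this
    linarith
  have hw2 : ‖q‖ ^ 2 / 2 ≤ ‖w‖ ^ 2 := by
    nlinarith [pow_le_pow_left₀ (by positivity) hwq 2, sq_nonneg ‖q‖]
  have hw0 : 0 < ‖w‖ := by linarith [mul_pos hq (by norm_num : (0 : ℝ) < 19 / 20)]
  have e1 : 8 * η * F / ‖w / (F : ℂ)‖ ^ 2 = 8 * η * f / ‖w‖ ^ 2 := by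
    rw [norm_div, Complex.norm_real, Real.norm_eq_abs, abs_of_pos hF, ← hFf]
    field_simp
  have e2 : 8 * η * f / ‖w‖ ^ 2 ≤ 16 * η * (f / ‖q‖ ^ 2) := by
    calc 8 * η * f / ‖w‖ ^ 2 ≤ 8 * η * f / (‖q‖ ^ 2 / 2) := by gcongr
      _ = _ := by field_simp; ring
  rw [mul_div_cancel₀ _ hF', e1] at ha
  have e3 : ‖2 * (η : ℂ) * (w - q)‖ ≤ 2 * η * κ * ‖q‖ * (f / ‖q‖ ^ 2) := by
    rw [norm_mul, norm_mul, Complex.norm_real, Real.norm_eq_abs, abs_of_pos hη]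
    calc ‖(2 : ℂ)‖ * η * ‖w - q‖ ≤ 2 * η * (κ * f / ‖q‖) := by
          rw [show ‖(2 : ℂ)‖ = 2 by simp]; gcongr
      _ = _ := by field_simp
  have e4 : a - 2 * η * q = (a - 2 * η * w) + 2 * η * (w - q) := by ring
  have e5 : 0 < f / ‖q‖ ^ 2 := by positivity
  calc ‖a - 2 * η * q‖ ≤ ‖a - 2 * η * w‖ + ‖2 * (η : ℂ) * (w - q)‖ := by
        rw [e4]; exact norm_add_le _ _
    _ ≤ 16 * η * (f / ‖q‖ ^ 2) + 2 * η * κ * ‖q‖ * (f / ‖q‖ ^ 2) := by linarith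
    _ = (16 * η + 2 * η * κ * ‖q‖) * (f / ‖q‖ ^ 2) := by ring
    _ ≤ channelConst κ η * (1 + ‖q‖) * (f / ‖q‖ ^ 2) := by
      gcongr
      unfold channelConst
      have : 0 ≤ 80 * κ + 8 / 3 * κ ^ 3 := by positivity
      have h1 : 0 ≤ η * κ := by positivity
      nlinarith [mul_nonneg this hq.le, mul_nonneg hη.le hq.le]

lemma ChannelData.reduced {κ η F f : ℝ} {q qp qm Ep Em ρ ap am : ℂ} (hκ : 0 < κ) (hη : 0 < η)
    (hF : 0 < F) (hFf : F ^ 3 = f) (hq : 0 < ‖q‖) (hR : QuadrantRoots κ f q qp qm)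
    (hsmall : 20 * (κ * f) ≤ ‖q‖ ^ 2) (hfq : f ≤ ‖q‖)
    (h : ChannelData η F (2 / 5 * ‖q‖ / F) (qp / F) (qm / F) Ep Em ρ ap am) :
    ReducedChannel κ η f (channelConst κ η) q qp qm Ep Em ρ ap am := by
  have hf : 0 < f := by rw [← hFf]; positivity
  have ecube : ∀ w : ℂ, ((w / F) ^ 3).re = (w ^ 3).re / f := fun w => by
    rw [div_pow, ← Complex.ofReal_pow, hFf, Complex.div_ofReal_re]
  refine ⟨h.rho_eq, h.Em_ne,
    norm_sub_reduced hκ hη hF hFf hq (hR.norm_p_sub hκ hf hq) hsmall h.ap_sub,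
    norm_sub_reduced hκ hη hF hFf hq (hR.norm_m_sub hκ hf hq) hsmall h.am_sub, ?_, ?_, ?_⟩
  · have := h.le_Ep
    rwa [ecube, ← mul_div_assoc] at this
  · have := h.Em_le
    rwa [ecube, ← mul_div_assoc] at this
  · refine h.rho_le.trans (Real.exp_le_exp.2 ?_)
    rw [Complex.sub_re, ecube, ecube, ← sub_div, ← Complex.sub_re, ← sub_div, norm_div,
      Complex.norm_real, Real.norm_eq_abs, abs_of_pos hF]
    have h1 := hR.re_cube_sub hκ hf hq
    have h2 := hR.norm_p_sub_m hκ hf hq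
    have e1 : 2 * κ * q.re - 8 / 3 * κ ^ 3 * (f / ‖q‖ ^ 2)
        ≤ 4 / 3 * ((qp ^ 3 - qm ^ 3).re / f) := by
      rw [← mul_div_assoc (4 / 3) (qp ^ 3 - qm ^ 3).re f, le_div_iff₀ hf]
      refine le_trans ?_ h1
      have : (2 * κ * f / ‖q‖) ^ 3 / 3 = 8 / 3 * κ ^ 3 * (f / ‖q‖ ^ 2) * f * (f / ‖q‖) := by
        field_simp; ring
      rw [this]
      have h3 : f / ‖q‖ ≤ 1 := by rwa [div_le_one hq]
      have h4 : 0 ≤ 8 / 3 * κ ^ 3 * (f / ‖q‖ ^ 2) * f := by positivity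
      nlinarith [mul_le_mul_of_nonneg_left h3 h4]
    have e2 : 16 / (2 / 5 * ‖q‖ / F) * (‖qp - qm‖ / F) ≤ 80 * κ * (f / ‖q‖ ^ 2) := by
      calc 16 / (2 / 5 * ‖q‖ / F) * (‖qp - qm‖ / F) = 40 / ‖q‖ * ‖qp - qm‖ := by
            field_simp; ring
        _ ≤ 40 / ‖q‖ * (2 * κ * f / ‖q‖) := by gcongr
        _ = _ := by field_simp; ring
    have e3 : 80 * κ * (f / ‖q‖ ^ 2) + 8 / 3 * κ ^ 3 * (f / ‖q‖ ^ 2)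
        ≤ channelConst κ η * (f / ‖q‖ ^ 2) := by
      rw [← add_mul]
      gcongr
      unfold channelConst
      have : 0 ≤ 16 * η + 2 * η * κ := by positivity
      linarith
    linarith

lemma rpow_neg_two_thirds {f : ℝ} (hf : 0 < f) :
    ((f ^ (-(2 : ℝ) / 3) : ℝ) : ℂ) = 1 / ((f ^ ((1 : ℝ) / 3) : ℝ) : ℂ) ^ 2 := by
  rw [← Complex.ofReal_pow, ← Real.rpow_natCast, ← Real.rpow_mul hf.le,
    show -(2 : ℝ) / 3 = -(1 / 3 * ((2 : ℕ) : ℝ)) by norm_num, Real.rpow_neg hf.le]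
  push_cast
  simp [one_div]

lemma rpow_third_cube {f : ℝ} (hf : 0 < f) : (f ^ ((1 : ℝ) / 3)) ^ 3 = f := by
  rw [← Real.rpow_natCast, ← Real.rpow_mul hf.le]
  norm_num

lemma exists_reduced_direct {κ η f : ℝ} {z q qp qm : ℂ} (hκ : 0 < κ) (hη : 0 < η) (hf : 0 < f)
    (hq : 0 < ‖q‖) (hz : q ^ 2 = -z) (hR : QuadrantRoots κ f q qp qm)
    (hsmall : 20 * (κ * f) ≤ ‖q‖ ^ 2) (hfq : f ≤ ‖q‖) (hfq3 : 1000 * f ≤ ‖q‖ ^ 3)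
    (hre : ‖q‖ / 2 ≤ q.re) :
    ∃ Ep Em ρ ap am, ReducedChannel κ η f (channelConst κ η) q qp qm Ep Em ρ ap am ∧
      Df κ η f z * (ap * am) = (1 + ap) * (1 + am) - ρ + Em * (ap + 1) + Ep * (am - 1) := by
  obtain ⟨F, hF⟩ : ∃ F, F = f ^ ((1 : ℝ) / 3) := ⟨_, rfl⟩
  have hF0 : 0 < F := by rw [hF]; positivity
  have hFf : F ^ 3 = f := by rw [hF]; exact rpow_third_cube hf
  have hF' : (F : ℂ) ≠ 0 := by exact_mod_cast hF0.ne'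
  have h10 : 10 * F ≤ ‖q‖ := le_of_pow_le_pow_left₀ three_ne_zero hq.le (by
    rw [mul_pow, hFf]; linarith)
  have near : ∀ w : ℂ, ‖w - q‖ ≤ κ * f / ‖q‖ → ‖w - q‖ ≤ ‖q‖ / 20 := fun w hw => hw.trans (by
    rw [div_le_iff₀ hq]; nlinarith)
  have np := near _ (hR.norm_p_sub hκ hf hq)
  have nm := near _ (hR.norm_m_sub hκ hf hq)
  have hnω : ‖-ωc‖ = 1 := by rw [norm_neg, norm_ωc]
  have c := half_norm_le_neg_ωc hR.re_nonneg hR.im_nonneg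
  have c1 : ‖q‖ / 2 ≤ (1 * q).re := by rwa [one_mul]
  obtain ⟨Ep, Em, ρ, ap, am, h1, h2⟩ := exists_channelData_direct (κ := κ) (η := η) (f := f)
    (z := z) (pp := qp / F) (pm := qm / F) (μ := 2 / 5 * ‖q‖ / F) hη hf
    (by rw [le_div_iff₀ hF0]; linarith)
    (by rw [rpow_neg_two_thirds hf, ← hF, div_pow, hR.p_sq, hz]; ring)
    (by rw [rpow_neg_two_thirds hf, ← hF, div_pow, hR.m_sq, hz]; ring)
    (by simpa using mem_airyCone_of_near hF0 norm_one hq c1 np)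
    (mem_airyCone_of_near hF0 hnω hq c np)
    (by simpa using mem_airyCone_of_near hF0 norm_one hq c1 nm)
    (mem_airyCone_of_near hF0 hnω hq c nm)
  rw [← hF] at h1
  exact ⟨Ep, Em, ρ, ap, am, h1.reduced hκ hη hF0 hFf hq hR hsmall hfq, h2⟩

lemma exists_reduced_rotated {κ η f : ℝ} {z q qp qm : ℂ} (hκ : 0 < κ) (hη : 0 < η) (hf : 0 < f)
    (hq : 0 < ‖q‖) (hz : q ^ 2 = -z) (hR : QuadrantRoots κ f q qp qm)
    (hsmall : 20 * (κ * f) ≤ ‖q‖ ^ 2) (hfq : f ≤ ‖q‖) (hfq3 : 1000 * f ≤ ‖q‖ ^ 3)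
    (hre : q.re ≤ ‖q‖ / 2) :
    ∃ Ep Em ρ ap am, ReducedChannel κ η f (channelConst κ η) q qp qm Ep Em ρ ap am ∧
      Df κ η f z * (ap * am)
        = (ap - 1) * (am - 1) - ρ⁻¹ - Em * (ap + 1) - Ep * (am - 1) := by
  obtain ⟨F, hF⟩ : ∃ F, F = f ^ ((1 : ℝ) / 3) := ⟨_, rfl⟩
  have hF0 : 0 < F := by rw [hF]; positivity
  have hFf : F ^ 3 = f := by rw [hF]; exact rpow_third_cube hf
  have hF' : (F : ℂ) ≠ 0 := by exact_mod_cast hF0.ne'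
  have h10 : 10 * F ≤ ‖q‖ := le_of_pow_le_pow_left₀ three_ne_zero hq.le (by
    rw [mul_pow, hFf]; linarith)
  have near : ∀ w : ℂ, ‖w - q‖ ≤ κ * f / ‖q‖ → ‖w - q‖ ≤ ‖q‖ / 20 := fun w hw => hw.trans (by
    rw [div_le_iff₀ hq]; nlinarith)
  have np := near _ (hR.norm_p_sub hκ hf hq)
  have nm := near _ (hR.norm_m_sub hκ hf hq)
  have hnω : ‖-ωc‖ = 1 := by rw [norm_neg, norm_ωc]
  have hnω2 : ‖ωc ^ 2‖ = 1 := by rw [norm_pow, norm_ωc, one_pow]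
  have c := half_norm_le_neg_ωc hR.re_nonneg hR.im_nonneg
  have c1 := half_norm_le_ωc_sq hR.re_nonneg hR.im_nonneg hre
  obtain ⟨Ep, Em, ρ, ap, am, h1, h2⟩ := exists_channelData_rotated (κ := κ) (η := η) (f := f)
    (z := z) (pp := qp / F) (pm := qm / F) (μ := 2 / 5 * ‖q‖ / F) hη hf
    (by rw [le_div_iff₀ hF0]; linarith)
    (by rw [rpow_neg_two_thirds hf, ← hF, div_pow, hR.p_sq, hz]; ring)
    (by rw [rpow_neg_two_thirds hf, ← hF, div_pow, hR.m_sq, hz]; ring)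
    (mem_airyCone_of_near hF0 hnω2 hq c1 np)
    (mem_airyCone_of_near hF0 hnω hq c np)
    (mem_airyCone_of_near hF0 hnω2 hq c1 nm)
    (mem_airyCone_of_near hF0 hnω hq c nm)
  rw [← hF] at h1
  exact ⟨Ep, Em, ρ, ap, am, h1.reduced hκ hη hF0 hFf hq hR hsmall hfq, h2⟩

/-- The real part of `q` must exceed this multiple of `f / ‖q‖ ^ 2` for the gap estimate. -/
noncomputable def gapConst (κ η C : ℝ) : ℝ :=
  (4 * C + 2 * C * (1 + 2 * η) + 1) * (1 + 2 * κ) * (1 + 2 * η) / (2 * κ * η)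

lemma one_sub_exp_neg_ge {κ x y : ℝ} (hκ : 0 < κ) (hy : 0 ≤ y) (hy1 : y ≤ 1) (hxy : y ≤ x) :
    2 * κ * y / (1 + 2 * κ) ≤ 1 - Real.exp (-(2 * κ * x)) := by
  have h1 : Real.exp (-(2 * κ * x)) ≤ 1 / (1 + 2 * κ * y) := by
    rw [Real.exp_neg, ← one_div]
    apply one_div_le_one_div_of_le (by positivity)
    have := Real.add_one_le_exp (2 * κ * x)
    nlinarith
  have h2 : 1 - 1 / (1 + 2 * κ * y) = 2 * κ * y / (1 + 2 * κ * y) := by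
    have : 1 + 2 * κ * y ≠ 0 := by positivity
    field_simp; ring
  have h3 : 2 * κ * y / (1 + 2 * κ) ≤ 2 * κ * y / (1 + 2 * κ * y) := by
    apply div_le_div_of_nonneg_left (by positivity) (by positivity)
    nlinarith
  linarith

lemma norm_sub_one_le_norm_add_one {b : ℂ} (hb : 0 ≤ b.re) : ‖b - 1‖ ≤ ‖b + 1‖ := by
  refine le_of_sq_le_sq ?_ (norm_nonneg _)
  simp only [sq_norm_eq, Complex.add_re, Complex.add_im, Complex.sub_re, Complex.sub_im,
    Complex.one_re, Complex.one_im]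
  nlinarith

lemma one_add_sq_norm_le {b : ℂ} (hb : 0 ≤ b.re) : 1 + ‖b‖ ^ 2 ≤ ‖1 + b‖ ^ 2 := by
  simp only [sq_norm_eq, Complex.add_re, Complex.add_im, Complex.one_re, Complex.one_im]
  nlinarith

namespace ReducedChannel

variable {κ η f C : ℝ} {q qp qm Ep Em ρ ap am : ℂ}

lemma norm_rho_le (h : ReducedChannel κ η f C q qp qm Ep Em ρ ap am) (hκ : 0 < κ)
    (hq : 0 ≤ q.re) (hC1 : C * (f / ‖q‖ ^ 2) ≤ 1) : ‖ρ‖ ≤ 3 := by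
  refine h.rho_le.trans ((Real.exp_le_exp.2 (?_ : _ ≤ (1 : ℝ))).trans ?_)
  · have : 0 ≤ 2 * κ * q.re := by positivity
    linarith
  · linarith [Real.exp_one_lt_d9]

lemma norm_two_eta_mul (hη : 0 < η) : ‖2 * (η : ℂ) * q‖ = 2 * η * ‖q‖ := by
  rw [norm_mul, norm_mul, Complex.norm_real, Real.norm_eq_abs, abs_of_pos hη]; simp

lemma norm_le_of_sub {a : ℂ} (ha : ‖a - 2 * η * q‖ ≤ C * (1 + ‖q‖) * (f / ‖q‖ ^ 2)) (hη : 0 < η)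
    (hC1 : C * (f / ‖q‖ ^ 2) ≤ 1) : ‖a‖ ≤ (2 * η + 1) * (1 + ‖q‖) := by
  have h1 := norm_add_le (a - 2 * η * q) (2 * η * q)
  rw [sub_add_cancel, norm_two_eta_mul hη] at h1
  have h2 := mul_le_mul_of_nonneg_right hC1 (by positivity : 0 ≤ 1 + ‖q‖)
  nlinarith [norm_nonneg q]

lemma gap (h : ReducedChannel κ η f C q qp qm Ep Em ρ ap am) (hκ : 0 < κ) (hη : 0 < η)
    (hf : 0 < f) (hC : 0 < C) (hq : 0 < ‖q‖) (hre : 0 ≤ q.re)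
    (hC1 : C * (f / ‖q‖ ^ 2) ≤ 1) (hK1 : gapConst κ η C * (f / ‖q‖ ^ 2) ≤ 1)
    (hx : gapConst κ η C * (f / ‖q‖ ^ 2) ≤ q.re) :
    (1 + ‖q‖) * (f / ‖q‖ ^ 2) ≤ ‖ap + 1 + ρ * (am - 1)‖ := by
  obtain ⟨ε, hε⟩ : ∃ ε, ε = f / ‖q‖ ^ 2 := ⟨_, rfl⟩
  obtain ⟨R, hR⟩ : ∃ R, R = ‖q‖ := ⟨_, rfl⟩
  obtain ⟨E, hE⟩ : ∃ E, E = Real.exp (-(2 * κ * q.re)) := ⟨_, rfl⟩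
  obtain ⟨N, hN⟩ : ∃ N, N = ‖2 * (η : ℂ) * q + 1‖ := ⟨_, rfl⟩
  have hε0 : 0 < ε := by rw [hε]; positivity
  have hap := h.ap_sub
  have ham := h.am_sub
  have hρ := h.rho_le
  rw [← hε] at hap ham hρ hC1 hK1 hx ⊢
  rw [← hR] at hap ham hq ⊢
  have hre2 : 0 ≤ (2 * (η : ℂ) * q).re := by
    rw [show 2 * (η : ℂ) * q = ((2 * η : ℝ) : ℂ) * q by push_cast; ring, Complex.re_ofReal_mul]
    positivity
  have hnb : ‖2 * (η : ℂ) * q‖ = 2 * η * R := by rw [hR]; exact norm_two_eta_mul hη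
  have hE0 : 0 < E := by rw [hE]; positivity
  have hE1 : E ≤ 1 := by
    rw [hE, Real.exp_le_one_iff]
    have : 0 ≤ 2 * κ * q.re := by positivity
    linarith
  have hρE : ‖ρ‖ ≤ E * (1 + 2 * (C * ε)) := by
    rw [Real.exp_add, ← hE] at hρ
    refine hρ.trans ?_
    have h0 : 0 ≤ C * ε := by positivity
    have := Real.abs_exp_sub_one_le (x := C * ε) (by rwa [abs_of_nonneg h0])
    rw [abs_of_nonneg h0] at this
    gcongr
    linarith [(abs_le.1 this).2]
  have hρ3 : ‖ρ‖ ≤ 3 := hρE.trans (by nlinarith [mul_pos hC hε0])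
  have hNu : N ≤ (1 + 2 * η) * (1 + R) := by
    have := norm_add_le (2 * (η : ℂ) * q) 1
    rw [hnb, norm_one, ← hN] at this
    nlinarith
  have hNl : η / (1 + 2 * η) * (1 + R) ≤ N := by
    have h1 : (1 + 2 * η * R) / 2 ≤ N := by
      refine le_of_sq_le_sq ?_ (by rw [hN]; positivity)
      have := one_add_sq_norm_le hre2
      rw [add_comm (1 : ℂ), ← hN, hnb] at this
      nlinarith [sq_nonneg (1 - 2 * η * R)]
    refine le_trans ?_ h1
    rw [div_mul_eq_mul_div, div_le_iff₀ (by positivity)]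
    nlinarith [mul_pos hη hq, mul_pos (mul_pos hη hq) hη]
  have hgap := one_sub_exp_neg_ge hκ (by unfold gapConst; positivity) hK1 hx
  rw [← hE] at hgap
  have h1 : N - C * (1 + R) * ε ≤ ‖ap + 1‖ := by
    have := norm_sub_norm_le (2 * (η : ℂ) * q + 1) (2 * (η : ℂ) * q + 1 - (ap + 1))
    rw [sub_sub_cancel, ← hN, show 2 * (η : ℂ) * q + 1 - (ap + 1) = -(ap - 2 * η * q) by ring,
      norm_neg] at this
    linarith
  have h2 : ‖am - 1‖ ≤ N + C * (1 + R) * ε := by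
    have := norm_add_le (am - 2 * η * q) (2 * η * q - 1)
    rw [show am - 2 * η * q + (2 * η * q - 1) = am - 1 by ring] at this
    linarith [norm_sub_one_le_norm_add_one hre2]
  have hN0 : 0 ≤ N := by rw [hN]; positivity
  have h3 : ‖ρ‖ * ‖am - 1‖ ≤ E * N + 2 * C * ε * N + 3 * (C * (1 + R) * ε) := by
    have e0 : 0 ≤ C * (1 + R) * ε := by positivity
    calc ‖ρ‖ * ‖am - 1‖ ≤ ‖ρ‖ * (N + C * (1 + R) * ε) := by gcongr
      _ = ‖ρ‖ * N + ‖ρ‖ * (C * (1 + R) * ε) := by ring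
      _ ≤ E * (1 + 2 * (C * ε)) * N + 3 * (C * (1 + R) * ε) := by gcongr
      _ = E * N + E * (2 * C * ε * N) + 3 * (C * (1 + R) * ε) := by ring
      _ ≤ E * N + 1 * (2 * C * ε * N) + 3 * (C * (1 + R) * ε) := by gcongr
      _ = _ := by ring
  have h4 : (4 * C + 2 * C * (1 + 2 * η) + 1) * ε * (1 + R) ≤ (1 - E) * N := by
    calc (4 * C + 2 * C * (1 + 2 * η) + 1) * ε * (1 + R)
        = (2 * κ * (gapConst κ η C * ε) / (1 + 2 * κ)) * (η / (1 + 2 * η) * (1 + R)) := by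
          unfold gapConst; field_simp
      _ ≤ (1 - E) * N := by
        gcongr
  have h5 : 2 * C * ε * N ≤ 2 * C * ε * ((1 + 2 * η) * (1 + R)) := by gcongr
  have h6 : ‖ap + 1‖ - ‖ρ‖ * ‖am - 1‖ ≤ ‖ap + 1 + ρ * (am - 1)‖ := by
    have := norm_sub_le (ap + 1 + ρ * (am - 1)) (ρ * (am - 1))
    rw [add_sub_cancel_right, norm_mul] at this
    linarith
  linarith

end ReducedChannel

/-- A threshold for the spectral scale beyond which the determinant cannot vanish. -/
noncomputable def scaleConst (η : ℝ) : ℝ := 18 * (2 * (2 * η + 2) ^ 2 + 3)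

lemma scale_le_of_mul_le {E R f X η : ℝ} (hR : 0 < R) (hf : 0 < f) (hX : 1 ≤ X) (hfX : 1 ≤ f * X)
    (hRX : R ^ 2 ≤ X) (hE : X ^ 4 / 9 ≤ E)
    (h : E * ((1 + R) * (f / R ^ 2)) ≤ (2 * (2 * η + 2) ^ 2 + 3) * (1 + R) ^ 2) :
    X ≤ scaleConst η := by
  unfold scaleConst
  set c := 2 * (2 * η + 2) ^ 2 + 3 with hc
  have hc0 : 0 < c := by positivity
  have hε : 1 ≤ X ^ 2 * (f / R ^ 2) := by
    rw [← mul_div_assoc, le_div_iff₀ (by positivity)]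
    nlinarith
  have hR1 : 1 + R ≤ 2 * X := by nlinarith [sq_nonneg (R - 1)]
  have h1 : X ^ 2 / 9 * (1 + R) ≤ c * (2 * X) * (1 + R) := by
    calc X ^ 2 / 9 * (1 + R) = X ^ 2 / 9 * (1 + R) * 1 := by ring
      _ ≤ X ^ 2 / 9 * (1 + R) * (X ^ 2 * (f / R ^ 2)) := by gcongr
      _ = X ^ 4 / 9 * ((1 + R) * (f / R ^ 2)) := by ring
      _ ≤ E * ((1 + R) * (f / R ^ 2)) := by gcongr
      _ ≤ c * (1 + R) ^ 2 := h
      _ = c * (1 + R) * (1 + R) := by ring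
      _ ≤ c * (2 * X) * (1 + R) := by gcongr
  have h2 := le_of_mul_le_mul_right h1 (by positivity)
  nlinarith

namespace ReducedChannel

variable {κ η f C : ℝ} {q qp qm Ep Em ρ ap am : ℂ}

lemma le_norm_Em (h : ReducedChannel κ η f C q qp qm Ep Em ρ ap am) (hρ : ‖ρ‖ ≤ 3) {Y : ℝ}
    (hE : Y / 3 ≤ ‖Ep‖) : Y / 9 ≤ ‖Em‖ := by
  rw [h.rho_eq, norm_mul] at hE
  have := mul_le_mul_of_nonneg_right hρ (norm_nonneg Em)
  linarith

lemma norm_mul_le_of_le {a b : ℂ} {B : ℝ} (ha : ‖a‖ ≤ B) (hb : ‖b‖ ≤ B) : ‖a * b‖ ≤ B ^ 2 := by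
  rw [norm_mul, sq]
  exact mul_le_mul ha hb (norm_nonneg _) ((norm_nonneg _).trans ha)

lemma scale_le_of_direct (h : ReducedChannel κ η f C q qp qm Ep Em ρ ap am) (hκ : 0 < κ)
    (hη : 0 < η) (hf : 0 < f) (hC : 0 < C) (hq : 0 < ‖q‖) (hre : 0 ≤ q.re)
    (hC1 : C * (f / ‖q‖ ^ 2) ≤ 1) (hK1 : gapConst κ η C * (f / ‖q‖ ^ 2) ≤ 1)
    (hx : gapConst κ η C * (f / ‖q‖ ^ 2) ≤ q.re) {X : ℝ} (hX : 1 ≤ X) (hfX : 1 ≤ f * X)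
    (hRX : ‖q‖ ^ 2 ≤ X) (hE : X ^ 4 / 3 ≤ ‖Ep‖)
    (h0 : (1 + ap) * (1 + am) - ρ + Em * (ap + 1) + Ep * (am - 1) = 0) :
    X ≤ scaleConst η := by
  have hρ := h.norm_rho_le hκ hre hC1
  refine scale_le_of_mul_le hq hf hX hfX hRX (h.le_norm_Em hρ hE) ?_
  have hg := h.gap hκ hη hf hC hq hre hC1 hK1 hx
  have ha := norm_le_of_sub h.ap_sub hη hC1
  have hb := norm_le_of_sub h.am_sub hη hC1
  have e : Em * (ap + 1 + ρ * (am - 1)) = ρ - (1 + ap) * (1 + am) := by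
    linear_combination h0 - (am - 1) * h.rho_eq
  have hone : ∀ a : ℂ, ‖a‖ ≤ (2 * η + 1) * (1 + ‖q‖) → ‖1 + a‖ ≤ (2 * η + 2) * (1 + ‖q‖) :=
    fun a ha => by
      have := norm_add_le 1 a
      rw [norm_one] at this
      linarith
  have h1 := norm_mul_le_of_le (hone _ ha) (hone _ hb)
  calc ‖Em‖ * ((1 + ‖q‖) * (f / ‖q‖ ^ 2)) ≤ ‖Em‖ * ‖ap + 1 + ρ * (am - 1)‖ := by gcongr
    _ = ‖ρ - (1 + ap) * (1 + am)‖ := by rw [← norm_mul, e]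
    _ ≤ ‖ρ‖ + ‖(1 + ap) * (1 + am)‖ := norm_sub_le _ _
    _ ≤ 3 + ((2 * η + 2) * (1 + ‖q‖)) ^ 2 := by gcongr
    _ ≤ _ := by nlinarith [sq_nonneg ((2 * η + 2) * (1 + ‖q‖)), sq_nonneg ‖q‖]

lemma scale_le_of_rotated (h : ReducedChannel κ η f C q qp qm Ep Em ρ ap am) (hκ : 0 < κ)
    (hη : 0 < η) (hf : 0 < f) (hC : 0 < C) (hq : 0 < ‖q‖) (hre : 0 ≤ q.re)
    (hC1 : C * (f / ‖q‖ ^ 2) ≤ 1) (hK1 : gapConst κ η C * (f / ‖q‖ ^ 2) ≤ 1)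
    (hx : gapConst κ η C * (f / ‖q‖ ^ 2) ≤ q.re) {X : ℝ} (hX : 3 ≤ X) (hfX : 1 ≤ f * X)
    (hRX : ‖q‖ ^ 2 ≤ X) (hE : X ^ 4 / 3 ≤ ‖Ep‖)
    (h0 : (ap - 1) * (am - 1) - ρ⁻¹ - Em * (ap + 1) - Ep * (am - 1) = 0) :
    X ≤ scaleConst η := by
  have hρ := h.norm_rho_le hκ hre hC1
  refine scale_le_of_mul_le hq hf (by linarith) hfX hRX (h.le_norm_Em hρ hE) ?_
  have hg := h.gap hκ hη hf hC hq hre hC1 hK1 hx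
  have ha := norm_le_of_sub h.ap_sub hη hC1
  have hb := norm_le_of_sub h.am_sub hη hC1
  have hX4 : 0 < X ^ 4 := by positivity
  have hEp : 0 < ‖Ep‖ := by linarith
  have hε : 1 ≤ X ^ 2 * (f / ‖q‖ ^ 2) := by
    rw [← mul_div_assoc, le_div_iff₀ (by positivity)]
    nlinarith
  have hinv : ‖ρ⁻¹‖ ≤ ‖Em‖ * ((1 + ‖q‖) * (f / ‖q‖ ^ 2)) / 2 := by
    have hρ0 : ρ ≠ 0 := by
      rintro rfl
      rw [h.rho_eq, zero_mul, norm_zero] at hEp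
      exact hEp.false
    have e : ρ⁻¹ = Em / Ep := by
      rw [h.rho_eq]; field_simp [h.Em_ne]
    rw [e, norm_div, mul_div_assoc, div_eq_mul_inv]
    gcongr
    rw [inv_le_comm₀ hEp (by positivity)]
    refine le_trans ?_ hE
    rw [inv_le_comm₀ (by positivity) (by positivity)]
    have e1 : (X ^ 4 / 3)⁻¹ ≤ 3 / X ^ 4 * (X ^ 2 * (f / ‖q‖ ^ 2)) := by
      rw [inv_div]
      exact le_mul_of_one_le_right (by positivity) hε
    refine e1.trans ?_
    have e2 : 3 / X ^ 4 * (X ^ 2 * (f / ‖q‖ ^ 2)) = 3 / X ^ 2 * (f / ‖q‖ ^ 2) := by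
      field_simp
    have e3 : 3 / X ^ 2 ≤ 1 / 2 := by
      rw [div_le_div_iff₀ (by positivity) (by norm_num)]; nlinarith
    have e4 : 0 < f / ‖q‖ ^ 2 := by positivity
    rw [e2]
    nlinarith [mul_le_mul_of_nonneg_right e3 e4.le, mul_pos hq e4]
  have e : Em * (ap + 1 + ρ * (am - 1)) = (ap - 1) * (am - 1) - ρ⁻¹ := by
    linear_combination (-(1 : ℂ)) * h0 - (am - 1) * h.rho_eq
  have hone : ∀ a : ℂ, ‖a‖ ≤ (2 * η + 1) * (1 + ‖q‖) → ‖a - 1‖ ≤ (2 * η + 2) * (1 + ‖q‖) :=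
    fun a ha => by
      have := norm_sub_le a 1
      rw [norm_one] at this
      linarith
  have h1 := norm_mul_le_of_le (hone _ ha) (hone _ hb)
  have h2 : ‖Em‖ * ((1 + ‖q‖) * (f / ‖q‖ ^ 2)) ≤ ((2 * η + 2) * (1 + ‖q‖)) ^ 2
      + ‖Em‖ * ((1 + ‖q‖) * (f / ‖q‖ ^ 2)) / 2 :=
    calc ‖Em‖ * ((1 + ‖q‖) * (f / ‖q‖ ^ 2)) ≤ ‖Em‖ * ‖ap + 1 + ρ * (am - 1)‖ := by gcongr
      _ = ‖(ap - 1) * (am - 1) - ρ⁻¹‖ := by rw [← norm_mul, e]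
      _ ≤ ‖(ap - 1) * (am - 1)‖ + ‖ρ⁻¹‖ := norm_sub_le _ _
      _ ≤ _ := add_le_add h1 hinv
  nlinarith [sq_nonneg (1 + ‖q‖)]

lemma scale_le_of_decay (h : ReducedChannel κ η f C q qp qm Ep Em ρ ap am)
    (hη : 0 < η) (hq : 0 < ‖q‖) (hre : ‖q‖ / 2 ≤ q.re)
    (hC1 : C * (f / ‖q‖ ^ 2) ≤ 1) (hCκ : C * (f / ‖q‖ ^ 2) ≤ κ * ‖q‖) (hκ : 0 < κ)
    (hCη : C * (1 + ‖q‖) * (f / ‖q‖ ^ 2) ≤ η * ‖q‖)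
    {X : ℝ} (hX : 1 ≤ X) (hfX : 1 ≤ f * X) (hRX : ‖q‖ ^ 2 ≤ X) (hfR : f ≤ ‖q‖ ^ 2)
    (hE : ‖Em‖ ≤ 3 / X ^ 4)
    (h0 : (1 + ap) * (1 + am) - ρ + Em * (ap + 1) + Ep * (am - 1) = 0) :
    X * η ^ 2 ≤ 24 * (η + 1) := by
  have hρ : ‖ρ‖ ≤ 1 := h.rho_le.trans (Real.exp_le_one_iff.2 (by nlinarith))
  have ha := norm_le_of_sub h.ap_sub hη hC1
  have hb := norm_le_of_sub h.am_sub hη hC1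
  have lower : ∀ a : ℂ, ‖a - 2 * η * q‖ ≤ C * (1 + ‖q‖) * (f / ‖q‖ ^ 2) →
      0 ≤ a.re ∧ η * ‖q‖ ≤ ‖a‖ := fun a h => by
    have h1 := (abs_le.1 (Complex.abs_re_le_norm (a - 2 * η * q))).1
    have e : (a - 2 * η * q).re = a.re - 2 * η * q.re := by
      rw [show 2 * (η : ℂ) * q = ((2 * η : ℝ) : ℂ) * q by push_cast; ring, Complex.sub_re,
        Complex.re_ofReal_mul]
    have h2 := norm_sub_norm_le (2 * η * q) (2 * η * q - a)
    rw [sub_sub_cancel, norm_two_eta_mul hη, norm_sub_rev] at h2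
    exact ⟨by nlinarith, by linarith⟩
  obtain ⟨ra, la⟩ := lower _ h.ap_sub
  obtain ⟨rb, lb⟩ := lower _ h.am_sub
  have hprod : 1 + ‖ap‖ * ‖am‖ ≤ ‖(1 + ap) * (1 + am)‖ := by
    rw [norm_mul]
    refine le_of_sq_le_sq ?_ (by positivity)
    rw [mul_pow]
    calc (1 + ‖ap‖ * ‖am‖) ^ 2 ≤ (1 + ‖ap‖ ^ 2) * (1 + ‖am‖ ^ 2) := by
          nlinarith [sq_nonneg (‖ap‖ - ‖am‖)]
      _ ≤ _ := mul_le_mul (one_add_sq_norm_le ra) (one_add_sq_norm_le rb) (by positivity)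
        (by positivity)
  have e : (1 + ap) * (1 + am) = ρ - Em * (ap + 1 + ρ * (am - 1)) := by
    linear_combination h0 - (am - 1) * h.rho_eq
  have h1 : ‖ap + 1 + ρ * (am - 1)‖ ≤ 4 * (η + 1) * (1 + ‖q‖) := by
    have i1 := norm_add_le (ap + 1) (ρ * (am - 1))
    have i2 := norm_add_le ap 1
    have i3 := norm_sub_le am 1
    rw [norm_one] at i2 i3
    rw [norm_mul] at i1
    have i4 := mul_le_mul_of_nonneg_right hρ (norm_nonneg (am - 1))
    nlinarith [norm_nonneg q]
  have h2 : ‖ap‖ * ‖am‖ ≤ ‖Em‖ * (4 * (η + 1) * (1 + ‖q‖)) := by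
    have i1 := norm_sub_le ρ (Em * (ap + 1 + ρ * (am - 1)))
    rw [← e, norm_mul Em] at i1
    have i2 := mul_le_mul_of_nonneg_left h1 (norm_nonneg Em)
    linarith
  have hR1 : 1 + ‖q‖ ≤ 2 * X := by nlinarith [sq_nonneg (‖q‖ - 1)]
  have h3 : η ^ 2 * ‖q‖ ^ 2 ≤ 3 / X ^ 4 * (4 * (η + 1) * (2 * X)) :=
    calc η ^ 2 * ‖q‖ ^ 2 = (η * ‖q‖) * (η * ‖q‖) := by ring
      _ ≤ ‖ap‖ * ‖am‖ := mul_le_mul la lb (by positivity) (by positivity)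
      _ ≤ ‖Em‖ * (4 * (η + 1) * (1 + ‖q‖)) := h2
      _ ≤ _ := by gcongr
  have h4 : 1 ≤ ‖q‖ ^ 2 * X := hfX.trans (by gcongr)
  have h5 : η ^ 2 ≤ η ^ 2 * ‖q‖ ^ 2 * X := by nlinarith [sq_nonneg η]
  have h6 : η ^ 2 ≤ 24 * (η + 1) / X ^ 2 :=
    calc η ^ 2 ≤ η ^ 2 * ‖q‖ ^ 2 * X := h5
      _ ≤ 3 / X ^ 4 * (4 * (η + 1) * (2 * X)) * X := by gcongr
      _ = _ := by field_simp; ring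
  rw [le_div_iff₀ (by positivity)] at h6
  nlinarith [sq_nonneg η, mul_nonneg (sq_nonneg η) (by linarith : (0 : ℝ) ≤ X - 1)]

end ReducedChannel

lemma re_eq_mul_cos_half {q : ℂ} (hq : 0 < ‖q‖) (hre : 0 ≤ q.re) :
    q.re = ‖q‖ * Real.cos (Complex.arg (q ^ 2) / 2) := by
  have hq0 : q ^ 2 ≠ 0 := pow_ne_zero 2 (norm_pos_iff.1 hq)
  have h1 := two_mul_re_sq q
  have h2 : (q ^ 2).re = ‖q ^ 2‖ * Real.cos (Complex.arg (q ^ 2)) := by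
    rw [Complex.cos_arg hq0]; field_simp
  have h3 : Real.cos (Complex.arg (q ^ 2)) = 2 * Real.cos (Complex.arg (q ^ 2) / 2) ^ 2 - 1 := by
    rw [← Real.cos_two_mul]; congr 1; ring
  have hc : 0 ≤ Real.cos (Complex.arg (q ^ 2) / 2) :=
    Real.cos_nonneg_of_mem_Icc
      ⟨by linarith [Complex.neg_pi_lt_arg (q ^ 2)], by linarith [Complex.arg_le_pi (q ^ 2)]⟩
  have h4 : q.re ^ 2 = (‖q‖ * Real.cos (Complex.arg (q ^ 2) / 2)) ^ 2 := by
    rw [h2, h3, norm_pow] at h1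
    linear_combination h1 / 2
  exact (pow_left_inj₀ hre (by positivity) two_ne_zero).1 h4

lemma re_cube_eq_mul_cos {q : ℂ} (hq : 0 < ‖q‖) (hre : 0 ≤ q.re) :
    (q ^ 3).re = ‖q‖ ^ 3 * Real.cos (3 * (Complex.arg (q ^ 2) / 2)) := by
  have h := re_eq_mul_cos_half hq hre
  rw [re_cube, Real.cos_three_mul]
  nth_rewrite 1 [h]
  rw [h]
  ring

lemma cos_three_half_ge {θ : ℝ} (h0 : 0 ≤ θ) (h1 : θ ≤ π / 3) :
    3 / π * (π / 3 - θ) ≤ Real.cos (3 * (θ / 2)) := by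
  have := Real.one_sub_mul_le_cos (x := 3 * (θ / 2)) (by linarith) (by linarith)
  refine le_trans (le_of_eq ?_) this
  field_simp

lemma neg_cos_three_half_ge {θ : ℝ} (h0 : π / 3 ≤ θ) (h1 : θ ≤ 2 * π / 3) :
    3 / π * (θ - π / 3) ≤ -Real.cos (3 * (θ / 2)) := by
  have := Real.mul_le_sin (x := 3 * (θ / 2) - π / 2) (by linarith) (by linarith)
  rw [Real.sin_sub_pi_div_two] at this
  refine le_trans (le_of_eq ?_) this
  field_simp

lemma cos_half_ge {θ : ℝ} (h0 : 0 ≤ θ) (h1 : θ ≤ π) : (π - θ) / π ≤ Real.cos (θ / 2) := by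
  have := Real.one_sub_mul_le_cos (x := θ / 2) (by linarith) (by linarith)
  refine le_trans (le_of_eq ?_) this
  field_simp

lemma abs_re_cube_sub_le {κ f : ℝ} {q w : ℂ} (hq : 0 < ‖q‖) (hw : ‖w - q‖ ≤ κ * f / ‖q‖)
    (hsmall : 20 * (κ * f) ≤ ‖q‖ ^ 2) :
    |(w ^ 3).re - (q ^ 3).re| ≤ 4 * κ * f * ‖q‖ := by
  have hw' : ‖w - q‖ ≤ ‖q‖ / 20 := hw.trans (by rw [div_le_iff₀ hq]; nlinarith)
  have hwn : ‖w‖ ≤ 21 / 20 * ‖q‖ := by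
    have := norm_add_le (w - q) q
    rw [sub_add_cancel] at this
    linarith
  rw [← Complex.sub_re, show w ^ 3 - q ^ 3 = (w - q) * (w * w + w * q + q * q) by ring]
  refine (Complex.abs_re_le_norm _).trans ?_
  rw [norm_mul]
  have h1 : ‖w * w + w * q + q * q‖ ≤ 4 * ‖q‖ ^ 2 := by
    refine (norm_add₃_le).trans ?_
    simp only [norm_mul]
    nlinarith [norm_nonneg w]
  calc ‖w - q‖ * ‖w * w + w * q + q * q‖ ≤ κ * f / ‖q‖ * (4 * ‖q‖ ^ 2) :=
        mul_le_mul hw h1 (norm_nonneg _) ((norm_nonneg _).trans hw)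
    _ = 4 * κ * f * ‖q‖ := by field_simp

/-- In the rotated sector the phase of `qp` is controlled by the real part of `q`. -/
lemma QuadrantRoots.re_cube_p_le {κ f : ℝ} {q qp qm : ℂ} (h : QuadrantRoots κ f q qp qm)
    (hκ : 0 < κ) (hf : 0 < f) (hsmall : 20 * (κ * f) ≤ ‖q‖ ^ 2) (hre : q.re ≤ ‖q‖ / 2) :
    (qp ^ 3).re ≤ -(q.re * ‖q‖ ^ 2) := by
  have hc : ‖((κ * f : ℝ) : ℂ)‖ = κ * f := by
    rw [Complex.norm_real, Real.norm_eq_abs, abs_of_pos (by positivity)]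
  have h3 : ‖q ^ 2‖ ≤ ‖qp ^ 2‖ + κ * f := by
    have : q ^ 2 = qp ^ 2 - ((κ * f : ℝ) : ℂ) := by rw [h.p_sq]; push_cast; ring
    rw [this]
    exact (norm_sub_le _ _).trans_eq (by rw [hc])
  have h4 : (qp ^ 2).re = (q ^ 2).re + κ * f := by
    rw [h.p_sq, ← Complex.ofReal_mul, Complex.add_re, Complex.ofReal_re]
  have h1 := two_mul_re_sq q
  have h2 := two_mul_re_sq qp
  rw [norm_pow] at h1 h2 h3
  rw [norm_pow] at h3
  have h5 : q.re ^ 2 ≤ ‖q‖ ^ 2 / 4 := by nlinarith [h.re_nonneg]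
  have h6 : 4 * qp.re ^ 2 - 3 * ‖qp‖ ^ 2 ≤ -‖q‖ ^ 2 := by linarith [sq_nonneg ‖q‖]
  rw [re_cube]
  have h7 := h.re_le_p_re hκ hf
  have h8 : qp.re * (4 * qp.re ^ 2 - 3 * ‖qp‖ ^ 2) ≤ qp.re * (-‖q‖ ^ 2) :=
    mul_le_mul_of_nonneg_left h6 h.p_re_nonneg
  have h9 : q.re * ‖q‖ ^ 2 ≤ qp.re * ‖q‖ ^ 2 := by gcongr
  linarith

lemma exp_mul_log_eq {X : ℝ} (hX : 0 < X) : Real.exp (4 * Real.log X) = X ^ 4 := by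
  rw [show (4 : ℝ) * Real.log X = Real.log (X ^ 4) by rw [Real.log_pow]; norm_num]
  exact Real.exp_log (by positivity)

/-- Zeros of the determinant away from the exceptional rays have bounded scale `X`. -/
lemma scale_le_of_zero {κ η f M X T : ℝ} {z q qp qm : ℂ} (hκ : 0 < κ) (hη : 0 < η) (hf : 0 < f)
    (hM : 20 < M) (hq : 0 < ‖q‖) (hz : q ^ 2 = -z) (hR : QuadrantRoots κ f q qp qm)
    (hT0 : 1000 ≤ T) (hTκ : 20 * κ ≤ T) (hTC : channelConst κ η ≤ T)
    (hTK : 2 * gapConst κ η (channelConst κ η) ≤ T) (hTCκ : channelConst κ η ≤ κ * T)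
    (hTCη : 2 * channelConst κ η ≤ η * T)
    (h1 : T * f ≤ ‖q‖) (h2 : T * f ≤ ‖q‖ ^ 2) (h3 : T * f ≤ ‖q‖ ^ 3)
    (hX : 3 ≤ X) (hfX : 1 ≤ f * X) (hRX : ‖q‖ ^ 2 ≤ X) (hL1 : 6 * κ ≤ Real.log X)
    (hLK : gapConst κ η (channelConst κ η) ≤ Real.log X)
    (hD : Df κ η f z = 0)
    (hb : (1 + ‖q‖) / ‖q‖ ^ 3 * M * f * Real.log X ≤ |Complex.arg (-z) - π / 3| ∨
      Complex.arg (-z) = 0 ∧ (1 + ‖q‖) / ‖q‖ ^ 3 * M * f * Real.log X ≤ 5 * π / 3)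
    (hc : M * f * Real.log X / ‖q‖ ^ 3 ≤ π - Complex.arg (-z)) :
    X ≤ scaleConst η ∨ X * η ^ 2 ≤ 24 * (η + 1) := by
  obtain ⟨C, hC⟩ : ∃ C, C = channelConst κ η := ⟨_, rfl⟩
  obtain ⟨K, hK⟩ : ∃ K, K = gapConst κ η C := ⟨_, rfl⟩
  have hC0 : 0 < C := by rw [hC]; unfold channelConst; positivity
  have hK0 : 0 < K := by rw [hK]; unfold gapConst; positivity
  rw [← hC] at hTC hTK hTCκ hTCη hLK
  rw [← hK] at hTK hLK
  have hL0 : 0 ≤ Real.log X := Real.log_nonneg (by linarith)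
  have hX0 : 0 < X := by linarith
  have hsmall : 20 * (κ * f) ≤ ‖q‖ ^ 2 := by
    linarith [mul_le_mul_of_nonneg_right hTκ hf.le]
  have hfq3 : 1000 * f ≤ ‖q‖ ^ 3 := by linarith [mul_le_mul_of_nonneg_right hT0 hf.le]
  have hfq : f ≤ ‖q‖ := by linarith [mul_le_mul_of_nonneg_right hT0 hf.le]
  have hε : T * (f / ‖q‖ ^ 2) ≤ 1 := by
    rw [← mul_div_assoc, div_le_one (by positivity)]; exact h2
  have hεq : T * (f / ‖q‖ ^ 2) ≤ ‖q‖ := by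
    rw [← mul_div_assoc, div_le_iff₀ (by positivity)]; linarith
  have hε0 : 0 < f / ‖q‖ ^ 2 := by positivity
  have hCε := mul_le_mul_of_nonneg_right hTC hε0.le
  have hKε := mul_le_mul_of_nonneg_right hTK hε0.le
  have hKε0 : 0 < K * (f / ‖q‖ ^ 2) := by positivity
  have hC1 : C * (f / ‖q‖ ^ 2) ≤ 1 := by linarith
  have hK1 : K * (f / ‖q‖ ^ 2) ≤ 1 := by linarith
  have hKq : K * (f / ‖q‖ ^ 2) ≤ ‖q‖ / 2 := by linarith
  have hre := re_eq_mul_cos_half hq hR.re_nonneg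
  have hre3 := re_cube_eq_mul_cos hq hR.re_nonneg
  have hθ0 : 0 ≤ Complex.arg (-z) := by
    rw [Complex.arg_nonneg_iff, ← hz, sq, Complex.mul_im]
    linarith [mul_nonneg hR.re_nonneg hR.im_nonneg, mul_nonneg hR.im_nonneg hR.re_nonneg]
  have hθπ := Complex.arg_le_pi (-z)
  rw [hz] at hre hre3
  generalize hθ : Complex.arg (-z) = θ at *
  have hpi := Real.pi_lt_d2
  have hpi3 := Real.pi_gt_three
  have hcp := abs_le.1 (abs_re_cube_sub_le hq (hR.norm_p_sub hκ hf hq) hsmall)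
  have hcm := abs_le.1 (abs_re_cube_sub_le hq (hR.norm_m_sub hκ hf hq) hsmall)
  have hphase : 4 * Real.log X * f ≤ 5 * ((1 + ‖q‖) * Real.log X * f) - 16 / 3 * κ * f * ‖q‖ := by
    have : κ * (f * ‖q‖) * 6 ≤ Real.log X * (f * ‖q‖) := by
      have := mul_le_mul_of_nonneg_right hL1 (by positivity : 0 ≤ f * ‖q‖)
      linarith
    have h0 : 0 ≤ Real.log X * f := by positivity
    have h0' : 0 ≤ Real.log X * f * ‖q‖ := by positivity
    have h0'' : 0 ≤ κ * (f * ‖q‖) := by positivity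
    linarith
  have hMb : ∀ t, (1 + ‖q‖) / ‖q‖ ^ 3 * M * f * Real.log X / 5 ≤ t →
      5 * ((1 + ‖q‖) * Real.log X * f) ≤ 4 / 3 * (‖q‖ ^ 3 * (3 / π * t)) := by
    intro t ht
    have e : 4 / 3 * (‖q‖ ^ 3 * (3 / π * ((1 + ‖q‖) / ‖q‖ ^ 3 * M * f * Real.log X / 5)))
        = (4 * M / (5 * π)) * ((1 + ‖q‖) * Real.log X * f) := by
      field_simp
    refine le_trans ?_ (?_ : 4 / 3 * (‖q‖ ^ 3 *
      (3 / π * ((1 + ‖q‖) / ‖q‖ ^ 3 * M * f * Real.log X / 5))) ≤ _)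
    · rw [e]
      gcongr
      rw [le_div_iff₀ (by positivity)]
      linarith
    · gcongr
  rcases le_or_gt θ (2 * π / 3) with hθ2 | hθ2
  · have hhalf : 1 / 2 ≤ Real.cos (θ / 2) := by
      rw [← Real.cos_pi_div_three]
      exact Real.cos_le_cos_of_nonneg_of_le_pi (by linarith) (by linarith) (by linarith)
    have hre2 : ‖q‖ / 2 ≤ q.re := by
      rw [hre]; linarith [mul_le_mul_of_nonneg_left hhalf hq.le]
    obtain ⟨Ep, Em, ρ, ap, am, h, hid⟩ :=
      exists_reduced_direct hκ hη hf hq hz hR hsmall hfq hfq3 hre2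
    rw [hD, zero_mul] at hid
    rw [← hC] at h
    rcases le_or_gt θ (π / 3) with hθ1 | hθ1
    · right
      have ht : (1 + ‖q‖) / ‖q‖ ^ 3 * M * f * Real.log X / 5 ≤ π / 3 - θ := by
        have h0 : 0 ≤ (1 + ‖q‖) / ‖q‖ ^ 3 * M * f * Real.log X := by positivity
        rcases hb with hb | ⟨h00, hb⟩
        · rw [abs_of_nonpos (by linarith)] at hb
          linarith
        · rw [h00]; linarith
      have hcos := cos_three_half_ge hθ0 hθ1
      have hq3 : ‖q‖ ^ 3 * (3 / π * (π / 3 - θ)) ≤ (q ^ 3).re := by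
        rw [hre3]; gcongr
      have hexp : 4 * Real.log X ≤ 4 / 3 * (qm ^ 3).re / f := by
        rw [le_div_iff₀ hf]
        linarith [hMb _ ht, hcm.1]
      refine h.scale_le_of_decay hη hq hre2 hC1 ?_ hκ ?_ (by linarith) hfX hRX ?_ ?_ hid.symm
      · linarith [mul_le_mul_of_nonneg_right hTCκ hε0.le, mul_le_mul_of_nonneg_left hεq hκ.le]
      · have e1 : 2 * (C * (f / ‖q‖ ^ 2)) ≤ η * ‖q‖ := by
          linarith [mul_le_mul_of_nonneg_right hTCη hε0.le, mul_le_mul_of_nonneg_left hεq hη.le]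
        have e2 : 2 * (C * (f / ‖q‖ ^ 2)) ≤ η := by
          linarith [mul_le_mul_of_nonneg_right hTCη hε0.le, mul_le_mul_of_nonneg_left hε hη.le]
        linarith [mul_le_mul_of_nonneg_right e2 hq.le]
      · linarith [mul_le_mul_of_nonneg_right hT0 hf.le]
      · refine h.Em_le.trans ?_
        rw [Real.exp_neg, ← div_eq_mul_inv, ← exp_mul_log_eq hX0]
        gcongr
    · left
      have ht : (1 + ‖q‖) / ‖q‖ ^ 3 * M * f * Real.log X / 5 ≤ θ - π / 3 := by
        have h0 : 0 ≤ (1 + ‖q‖) / ‖q‖ ^ 3 * M * f * Real.log X := by positivity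
        rcases hb with hb | ⟨h00, hb⟩
        · rw [abs_of_nonneg (by linarith)] at hb
          linarith
        · linarith
      have hcos := neg_cos_three_half_ge hθ1.le hθ2
      have hq3 : ‖q‖ ^ 3 * (3 / π * (θ - π / 3)) ≤ -(q ^ 3).re := by
        rw [hre3, ← mul_neg]; gcongr
      have hexp : 4 * Real.log X ≤ -(4 / 3 * (qp ^ 3).re / f) := by
        rw [← neg_div, le_div_iff₀ hf]
        linarith [hMb _ ht, hcp.2]
      refine h.scale_le_of_direct hκ hη hf hC0 hq hR.re_nonneg hC1 (by rwa [← hK])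
        (by rw [← hK]; linarith) (by linarith) hfX hRX ?_ hid.symm
      refine le_trans ?_ h.le_Ep
      rw [← exp_mul_log_eq hX0]
      gcongr
  · left
    have hhalf : Real.cos (θ / 2) ≤ 1 / 2 := by
      rw [← Real.cos_pi_div_three]
      exact Real.cos_le_cos_of_nonneg_of_le_pi (by linarith) (by linarith) (by linarith)
    have hre2 : q.re ≤ ‖q‖ / 2 := by
      rw [hre]; linarith [mul_le_mul_of_nonneg_left hhalf hq.le]
    obtain ⟨Ep, Em, ρ, ap, am, h, hid⟩ :=
      exists_reduced_rotated hκ hη hf hq hz hR hsmall hfq hfq3 hre2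
    rw [hD, zero_mul] at hid
    rw [← hC] at h
    have hcos := cos_half_ge hθ0 hθπ
    have hxl : M / π * (f / ‖q‖ ^ 2 * Real.log X) ≤ q.re := by
      rw [hre]
      calc M / π * (f / ‖q‖ ^ 2 * Real.log X)
          = ‖q‖ * ((M * f * Real.log X / ‖q‖ ^ 3) / π) := by field_simp
        _ ≤ ‖q‖ * ((π - θ) / π) := by gcongr
        _ ≤ _ := by gcongr
    have hMπ : 6 ≤ M / π := by rw [le_div_iff₀ (by positivity)]; linarith
    have hx6 : 6 * (f / ‖q‖ ^ 2 * Real.log X) ≤ q.re :=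
      le_trans (by gcongr) hxl
    have hexp : 4 * Real.log X ≤ -(4 / 3 * (qp ^ 3).re / f) := by
      rw [← neg_div, le_div_iff₀ hf]
      have e1 := hR.re_cube_p_le hκ hf hsmall hre2
      have e2 : 6 * (f / ‖q‖ ^ 2 * Real.log X) * ‖q‖ ^ 2 ≤ q.re * ‖q‖ ^ 2 := by gcongr
      have e3 : 6 * (f / ‖q‖ ^ 2 * Real.log X) * ‖q‖ ^ 2 = 6 * f * Real.log X := by
        field_simp
      linarith [mul_nonneg hf.le hL0]
    refine h.scale_le_of_rotated hκ hη hf hC0 hq hR.re_nonneg hC1 (by rwa [← hK])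
      ?_ hX hfX hRX ?_ hid.symm
    · rw [← hK]
      have e1 := mul_le_mul_of_nonneg_left hLK hε0.le
      have e2 : 0 ≤ f / ‖q‖ ^ 2 * Real.log X := by positivity
      linarith
    · refine le_trans ?_ h.le_Ep
      rw [← exp_mul_log_eq hX0]
      gcongr

lemma rpow_neg_half_sq {R : ℝ} (hR : 0 < R) : (R ^ 2) ^ (-(1 : ℝ) / 2) = R⁻¹ := by
  rw [← Real.rpow_natCast, ← Real.rpow_mul hR.le, ← Real.rpow_neg_one]
  norm_num

lemma rpow_neg_three_halves_sq {R : ℝ} (hR : 0 < R) : (R ^ 2) ^ (-(3 : ℝ) / 2) = (R ^ 3)⁻¹ := by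
  rw [← Real.rpow_natCast, ← Real.rpow_mul hR.le, ← Real.rpow_natCast, ← Real.rpow_neg hR.le]
  norm_num

/-- For small fields, zeros with `f ≤ ‖z‖ ^ 2` lie close to one of the two rays. -/
theorem eventually_zero_near_rays {κ η M : ℝ} (hκ : 0 < κ) (hη : 0 < η) (hM : 20 < M) :
    ∀ᶠ f in 𝓝[>] (0 : ℝ), ∀ z : ℂ, z.im ≤ 0 → f ≤ ‖z‖ ^ 2 → Df κ η f z = 0 →
      |Complex.arg z + 2 * π / 3| < (‖z‖)⁻¹ * (1 + ‖z‖ ^ (-(1 : ℝ) / 2)) * M * f *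
        Real.log (f⁻¹ + ‖z‖) ∨
      |Complex.arg z| < ‖z‖ ^ (-(3 : ℝ) / 2) * M * f * Real.log (f⁻¹ + ‖z‖) := by
  obtain ⟨C, hC⟩ : ∃ C, C = channelConst κ η := ⟨_, rfl⟩
  obtain ⟨K, hK⟩ : ∃ K, K = gapConst κ η C := ⟨_, rfl⟩
  have hC0 : 0 < C := by rw [hC]; unfold channelConst; positivity
  have hK0 : 0 < K := by rw [hK]; unfold gapConst; positivity
  obtain ⟨T, hT⟩ : ∃ T, T = 1000 + 20 * κ + C + 2 * K + C / κ + 2 * C / η := ⟨_, rfl⟩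
  obtain ⟨S, hS⟩ : ∃ S, S = 3 + scaleConst η + 24 * (η + 1) / η ^ 2 + Real.exp (6 * κ)
    + Real.exp K := ⟨_, rfl⟩
  have hS0 : 0 < scaleConst η := by unfold scaleConst; positivity
  have hS1 : 0 < 24 * (η + 1) / η ^ 2 := by positivity
  have hd1 : 0 < C / κ := by positivity
  have hd2 : 0 < 2 * C / η := by positivity
  have hT0 : 0 < T := by rw [hT]; positivity
  have ev1 : ∀ᶠ f in 𝓝[>] (0 : ℝ), f ^ ((1 : ℝ) / 4) < 1 / T := by
    have : Tendsto (fun f : ℝ => f ^ ((1 : ℝ) / 4)) (𝓝[>] 0) (𝓝 0) := by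
      have h := (Real.continuousAt_rpow_const 0 ((1 : ℝ) / 4) (Or.inr (by norm_num))).tendsto
      rw [Real.zero_rpow (by norm_num)] at h
      exact h.mono_left nhdsWithin_le_nhds
    exact this.eventually_lt_const (by positivity)
  have ev2 : ∀ᶠ f in 𝓝[>] (0 : ℝ), S < f⁻¹ := tendsto_inv_nhdsGT_zero.eventually_gt_atTop S
  filter_upwards [ev1, ev2, self_mem_nhdsWithin] with f hf1 hf2 hf z hz hfz hD
  replace hf : 0 < f := hf
  by_contra hcon
  push Not at hcon
  obtain ⟨hb, hc⟩ := hcon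
  obtain ⟨g, hg⟩ : ∃ g, g = f ^ ((1 : ℝ) / 4) := ⟨_, rfl⟩
  have hg0 : 0 < g := by rw [hg]; positivity
  have hg4 : g ^ 4 = f := by
    rw [hg, ← Real.rpow_natCast, ← Real.rpow_mul hf.le]; norm_num
  rw [← hg, lt_div_iff₀ hT0] at hf1
  obtain ⟨q, hq1, hq2, hqz⟩ := exists_quadrant_sqrt (ζ := -z) (by simpa using hz)
  obtain ⟨qp, hp1, hp2, hpz⟩ := exists_quadrant_sqrt (ζ := q ^ 2 + κ * f) (by
    rw [hqz, ← Complex.ofReal_mul]; simpa using hz)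
  obtain ⟨qm, hm1, hm2, hmz⟩ := exists_quadrant_sqrt (ζ := q ^ 2 - κ * f) (by
    rw [hqz, ← Complex.ofReal_mul]; simpa using hz)
  have hR : QuadrantRoots κ f q qp qm := ⟨hq1, hq2, hp1, hp2, hm1, hm2, hpz, hmz⟩
  have hnz : ‖z‖ = ‖q‖ ^ 2 := by rw [← norm_pow, hqz, norm_neg]
  have hgq : g ≤ ‖q‖ := by
    refine le_of_pow_le_pow_left₀ (n := 4) (by norm_num) (norm_nonneg _) ?_
    rw [hg4]
    refine hfz.trans_eq ?_
    rw [hnz]; ring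
  have hq : 0 < ‖q‖ := hg0.trans_le hgq
  have hz0 : z ≠ 0 := by
    rw [← norm_pos_iff, hnz]; positivity
  obtain ⟨X, hX⟩ : ∃ X, X = f⁻¹ + ‖z‖ := ⟨_, rfl⟩
  have hXf : f⁻¹ ≤ X := by rw [hX]; linarith [norm_nonneg z]
  have hE1 := Real.exp_pos (6 * κ)
  have hE2 := Real.exp_pos K
  have hX3 : 3 ≤ X := by linarith
  have hX0 : 0 < X := by linarith
  rw [← hX, hnz, rpow_neg_half_sq hq] at hb
  rw [← hX, hnz, rpow_neg_three_halves_sq hq] at hc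
  have eb : (‖q‖ ^ 2)⁻¹ * (1 + ‖q‖⁻¹) * M * f * Real.log X
      = (1 + ‖q‖) / ‖q‖ ^ 3 * M * f * Real.log X := by
    field_simp; ring
  have ec : (‖q‖ ^ 3)⁻¹ * M * f * Real.log X = M * f * Real.log X / ‖q‖ ^ 3 := by
    field_simp
  rw [eb] at hb
  rw [ec] at hc
  have hL : 0 < Real.log X := Real.log_pos (by linarith)
  have hpos : 0 < M * f * Real.log X / ‖q‖ ^ 3 := by positivity
  have hTf : T * f ≤ g ^ 3 := by
    rw [← hg4]
    have := mul_le_mul_of_nonneg_right hf1.le (by positivity : 0 ≤ g ^ 3)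
    linarith
  have hg1 : g ≤ 1 := by
    have : 1 ≤ T := by rw [hT]; linarith
    nlinarith
  have hg2 : g ^ 3 ≤ g ^ 2 := pow_le_pow_of_le_one hg0.le hg1 (by norm_num)
  have hg3 : g ^ 3 ≤ g := by simpa using pow_le_pow_of_le_one hg0.le hg1 (show 1 ≤ 3 by norm_num)
  have hargs : ((1 + ‖q‖) / ‖q‖ ^ 3 * M * f * Real.log X ≤ |Complex.arg (-z) - π / 3| ∨
      Complex.arg (-z) = 0 ∧ (1 + ‖q‖) / ‖q‖ ^ 3 * M * f * Real.log X ≤ 5 * π / 3) ∧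
      M * f * Real.log X / ‖q‖ ^ 3 ≤ π - Complex.arg (-z) := by
    rcases hz.lt_or_eq with him | him
    · have ha := Complex.arg_neg_eq_arg_add_pi_of_im_neg him
      have hneg := Complex.arg_neg_iff.2 him
      rw [abs_of_neg hneg] at hc
      rw [ha]
      refine ⟨Or.inl (hb.trans_eq ?_), by linarith⟩
      congr 1; ring
    · rcases lt_or_gt_of_ne (show z.re ≠ 0 from fun h => hz0 (Complex.ext h him)) with hre | hre
      · have h1 : Complex.arg z = π := Complex.arg_eq_pi_iff.2 ⟨hre, him⟩
        have h2 : Complex.arg (-z) = 0 :=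
          Complex.arg_eq_zero_iff.2 ⟨by simpa using hre.le, by simpa using him⟩
        rw [h1, abs_of_pos pi_pos] at hc
        rw [h1, abs_of_pos (by positivity)] at hb
        exact ⟨Or.inr ⟨h2, by linarith⟩, by rw [h2]; linarith⟩
      · have h1 : Complex.arg z = 0 := Complex.arg_eq_zero_iff.2 ⟨hre.le, him⟩
        rw [h1, abs_zero] at hc
        linarith
  have key := scale_le_of_zero (X := X) (T := T) hκ hη hf hM hq hqz hR
    (by rw [hT]; linarith) (by rw [hT]; linarith) (by rw [← hC, hT]; linarith)
    (by rw [← hC, ← hK, hT]; linarith)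
    (by
      rw [← hC]
      calc C = κ * (C / κ) := by field_simp
        _ ≤ κ * T := by gcongr; rw [hT]; linarith)
    (by
      rw [← hC]
      calc 2 * C = η * (2 * C / η) := by field_simp
        _ ≤ η * T := by gcongr; rw [hT]; linarith)
    (by linarith) (hTf.trans (hg2.trans (by gcongr))) (hTf.trans (by gcongr)) hX3
    (by
      calc (1 : ℝ) = f * f⁻¹ := by field_simp
        _ ≤ f * X := by gcongr)
    (by rw [hX, ← hnz]; linarith [inv_pos.2 hf])
    (by rw [Real.le_log_iff_exp_le hX0]; linarith)
    (by rw [← hC, ← hK, Real.le_log_iff_exp_le hX0]; linarith)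
    hD hargs.1 hargs.2
  rcases key with h | h
  · linarith
  · rw [← le_div_iff₀ (by positivity)] at h
    linarith

lemma HasStrictDerivAt.tendsto_slope_pair {ι : Type*} {l : Filter ι} {g : ℂ → ℂ} {g' a : ℂ}
    (hg : HasStrictDerivAt g g' a) {x y : ι → ℂ} (hx : Tendsto x l (𝓝 a)) (hy : Tendsto y l (𝓝 a))
    (hne : ∀ᶠ i in l, x i - y i ≠ 0) :
    Tendsto (fun i => (g (x i) - g (y i)) / (x i - y i)) l (𝓝 g') := by
  have h := (hg.isLittleO.comp_tendsto (hx.prodMk_nhds hy)).tendsto_div_nhds_zero.add_const g'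
  rw [zero_add] at h
  refine h.congr' ?_
  filter_upwards [hne] with i hi
  simp only [Function.comp_apply, ContinuousLinearMap.toSpanSingleton_apply, smul_eq_mul]
  field_simp
  ring

lemma mul_Df_eq {κ η f : ℝ} {z U V d c : ℂ} (hW : (η : ℂ) * Wf f ≠ 0) (hη : (η : ℂ) ≠ 0)
    (hd : d ≠ 0) (hdW : d = c * Wf f)
    (hU : U = (Ai (-ωc * (z - κ * f) * ((f ^ (-(2 : ℝ) / 3) : ℝ) : ℂ))
      - Ai (-ωc * (z + κ * f) * ((f ^ (-(2 : ℝ) / 3) : ℝ) : ℂ))) / d)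
    (hV : V = (Ai (-(z - κ * f) * ((f ^ (-(2 : ℝ) / 3) : ℝ) : ℂ))
      - Ai (-(z + κ * f) * ((f ^ (-(2 : ℝ) / 3) : ℝ) : ℂ))) / d) :
    η * Wf f * Df κ η f z = η * Wf f + (alphaP κ f z + alphaM κ f z)
      + betaP κ f z * (c / η) *
        (U * Ai (-(z + κ * f) * ((f ^ (-(2 : ℝ) / 3) : ℝ) : ℂ))
          - Ai (-ωc * (z + κ * f) * ((f ^ (-(2 : ℝ) / 3) : ℝ) : ℂ)) * V) := by
  have hWne : Wf f ≠ 0 := right_ne_zero_of_mul hW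
  have hc : c ≠ 0 := by rintro rfl; exact hd (by rw [hdW, zero_mul])
  rw [hU, hV, hdW, Df]
  have hb : betaM κ f z - betaP κ f z
      = (Ai (-ωc * (z - κ * f) * ((f ^ (-(2 : ℝ) / 3) : ℝ) : ℂ))
      - Ai (-ωc * (z + κ * f) * ((f ^ (-(2 : ℝ) / 3) : ℝ) : ℂ)))
        * Ai (-(z + κ * f) * ((f ^ (-(2 : ℝ) / 3) : ℝ) : ℂ))
      - Ai (-ωc * (z + κ * f) * ((f ^ (-(2 : ℝ) / 3) : ℝ) : ℂ)) *
      (Ai (-(z - κ * f) * ((f ^ (-(2 : ℝ) / 3) : ℝ) : ℂ))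
      - Ai (-(z + κ * f) * ((f ^ (-(2 : ℝ) / 3) : ℝ) : ℂ))) := by
    rw [betaM, betaP]; ring
  rw [hb]
  field_simp

/-- The determinant has no zeros on discs that are small compared to `f ^ (2 / 3)`. -/
theorem eventually_no_small_zero {κ η s : ℝ} (hκ : 0 < κ) (hη : 0 < η) (hs : 2 / 3 < s) :
    ∀ᶠ f in 𝓝[>] (0 : ℝ), ∀ z : ℂ, ‖z‖ < f ^ s → Df κ η f z ≠ 0 := by
  let l : Filter (ℝ × ℂ) := (𝓝[>] (0 : ℝ)) ×ˢ 𝓟 univ ⊓ 𝓟 {p | ‖p.2‖ < p.1 ^ s}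
  suffices h : ∀ᶠ p in l, Df κ η p.1 p.2 ≠ 0 by
    rw [eventually_inf_principal, eventually_prod_principal_iff] at h
    filter_upwards [h] with f hf z hz using hf z (mem_univ z) hz
  have hfst : Tendsto (Prod.fst : ℝ × ℂ → ℝ) l (𝓝[>] 0) := tendsto_fst.mono_left inf_le_left
  have hpos : ∀ᶠ p in l, 0 < p.1 := hfst.eventually self_mem_nhdsWithin
  have hlt : ∀ᶠ p in l, ‖p.2‖ < p.1 ^ s := mem_inf_of_right (mem_principal_self _)
  have hpow : ∀ t : ℝ, 0 < t → Tendsto (fun p : ℝ × ℂ => p.1 ^ t) l (𝓝 0) := fun t ht => by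
    have h := (Real.continuousAt_rpow_const 0 t (Or.inr ht.le)).tendsto
    rw [Real.zero_rpow ht.ne'] at h
    exact h.comp (hfst.mono_right nhdsWithin_le_nhds)
  have harg : ∀ (m : ℂ) (c : ℝ), ‖m‖ = 1 → |c| ≤ κ → Tendsto (fun p : ℝ × ℂ =>
      m * (p.2 + c * p.1) * ((p.1 ^ (-(2 : ℝ) / 3) : ℝ) : ℂ)) l (𝓝 0) := fun m c hm hc => by
    have hb : Tendsto (fun p : ℝ × ℂ => p.1 ^ (s - 2 / 3) + κ * p.1 ^ ((1 : ℝ) / 3)) l (𝓝 0) := by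
      simpa using (hpow _ (sub_pos.2 hs)).add ((hpow (1 / 3) (by norm_num)).const_mul κ)
    refine squeeze_zero_norm' ?_ hb
    filter_upwards [hpos, hlt] with p hp hl
    have h1 : ‖p.2 + c * p.1‖ ≤ p.1 ^ s + κ * p.1 := by
      refine (norm_add_le _ _).trans (add_le_add hl.le ?_)
      rw [norm_mul, Complex.norm_real, Complex.norm_real, Real.norm_eq_abs, Real.norm_eq_abs,
        abs_of_pos hp]
      gcongr
    rw [norm_mul, norm_mul, hm, one_mul, Complex.norm_real, Real.norm_eq_abs,
      abs_of_pos (by positivity)]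
    calc ‖p.2 + c * p.1‖ * p.1 ^ (-(2 : ℝ) / 3) ≤ (p.1 ^ s + κ * p.1) * p.1 ^ (-(2 : ℝ) / 3) := by
          gcongr
      _ = p.1 ^ s * p.1 ^ (-(2 : ℝ) / 3) + κ * (p.1 ^ (1 : ℝ) * p.1 ^ (-(2 : ℝ) / 3)) := by
          rw [Real.rpow_one]; ring
      _ = _ := by
          rw [← Real.rpow_add hp, ← Real.rpow_add hp]
          norm_num [sub_eq_add_neg]
  have hnω : ‖-ωc‖ = 1 := by rw [norm_neg, norm_ωc]
  have hn1 : ‖(-1 : ℂ)‖ = 1 := by simp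
  have hκa : |κ| ≤ κ := by rw [abs_of_pos hκ]
  have hκb : |-κ| ≤ κ := by rw [abs_neg, abs_of_pos hκ]
  have t1 : Tendsto (fun p : ℝ × ℂ => -ωc * (p.2 - κ * p.1) * ((p.1 ^ (-(2 : ℝ) / 3) : ℝ) : ℂ)) l
      (𝓝 0) := by simpa [sub_eq_add_neg] using harg (-ωc) (-κ) hnω hκb
  have t2 := harg (-ωc) κ hnω hκa
  have t3 : Tendsto (fun p : ℝ × ℂ => -(p.2 - κ * p.1) * ((p.1 ^ (-(2 : ℝ) / 3) : ℝ) : ℂ)) l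
      (𝓝 0) := by simpa [sub_eq_add_neg] using harg (-1) (-κ) hn1 hκb
  have t4 : Tendsto (fun p : ℝ × ℂ => -(p.2 + κ * p.1) * ((p.1 ^ (-(2 : ℝ) / 3) : ℝ) : ℂ)) l
      (𝓝 0) := by simpa using harg (-1) κ hn1 hκa
  have hdiff : Differentiable ℂ Ai := fun z => (hasDerivAt_Ai z).differentiableAt
  have hAi : Tendsto Ai (𝓝 0) (𝓝 (Ai 0)) := (hdiff 0).continuousAt.tendsto
  have hstrict : HasStrictDerivAt Ai (deriv Ai 0) 0 := (hdiff.analyticAt 0).hasStrictDerivAt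
  have hd : ∀ p : ℝ × ℂ, 0 < p.1 → -(p.2 - κ * p.1) * ((p.1 ^ (-(2 : ℝ) / 3) : ℝ) : ℂ)
      - -(p.2 + κ * p.1) * ((p.1 ^ (-(2 : ℝ) / 3) : ℝ) : ℂ)
      = 2 * κ * ((p.1 ^ ((1 : ℝ) / 3) : ℝ) : ℂ) := fun p hp => by
    have h3 : ((p.1 : ℝ) : ℂ) = ((p.1 ^ ((1 : ℝ) / 3) : ℝ) : ℂ) ^ 3 := by
      rw [← Complex.ofReal_pow, rpow_third_cube hp]
    have h0 : ((p.1 ^ ((1 : ℝ) / 3) : ℝ) : ℂ) ≠ 0 := by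
      exact_mod_cast (Real.rpow_pos_of_pos hp _).ne'
    rw [rpow_neg_two_thirds hp]
    generalize ((p.1 ^ ((1 : ℝ) / 3) : ℝ) : ℂ) = F at *
    rw [h3]
    field_simp
    ring
  have hdne : ∀ p : ℝ × ℂ, 0 < p.1 → 2 * (κ : ℂ) * ((p.1 ^ ((1 : ℝ) / 3) : ℝ) : ℂ) ≠ 0 :=
    fun p hp => by
      exact_mod_cast (show 2 * κ * p.1 ^ ((1 : ℝ) / 3) ≠ 0 by positivity)
  have hV := hstrict.tendsto_slope_pair t3 t4 (by
    filter_upwards [hpos] with p hp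
    rw [hd p hp]; exact hdne p hp)
  have hU := (hstrict.tendsto_slope_pair t1 t2 (by
    filter_upwards [hpos] with p hp
    have := mul_ne_zero ωc_ne_zero (hdne p hp)
    rw [← hd p hp] at this
    convert this using 1
    ring)).const_mul ωc
  have hK : Ai 0 * deriv Ai 0 ≠ 0 := by
    rw [Ai_zero_mul_deriv, neg_ne_zero]
    exact one_div_ne_zero (by
      exact_mod_cast (show 2 * π * √3 ≠ 0 by positivity))
  have hA0 := left_ne_zero_of_mul hK
  have hA1 := right_ne_zero_of_mul hK
  have hω1 : ωc - 1 ≠ 0 := sub_ne_zero.2 ωc_ne_one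
  obtain ⟨c, hc⟩ : ∃ c, c = 2 * κ / (Ai 0 * deriv Ai 0 * (ωc - 1)) := ⟨_, rfl⟩
  have hηc : (η : ℂ) ≠ 0 := by exact_mod_cast hη.ne'
  have hWt : Tendsto (fun p : ℝ × ℂ => (η : ℂ) * Wf p.1) l (𝓝 0) := by
    have h1 : Tendsto (fun p : ℝ × ℂ => ((p.1 ^ ((1 : ℝ) / 3) : ℝ) : ℂ)) l (𝓝 ((0 : ℝ) : ℂ)) :=
      (Complex.continuous_ofReal.tendsto 0).comp (hpow (1 / 3) (by norm_num))
    have h2 := (h1.const_mul (-(Ai 0 * deriv Ai 0 * (1 - ωc)))).const_mul (η : ℂ)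
    simp only [Complex.ofReal_zero, mul_zero] at h2
    refine h2.congr fun p => ?_
    rw [Wf_eq]
  have a1 := hAi.comp t1
  have a2 := hAi.comp t2
  have a3 := hAi.comp t3
  have a4 := hAi.comp t4
  have hlim := (hWt.add ((a1.mul a3).add (a2.mul a4))).add
    (((a2.mul a3).mul_const (c / η)).mul ((hU.mul a4).sub (a2.mul hV)))
  have hval : (0 : ℂ) + (Ai 0 * Ai 0 + Ai 0 * Ai 0)
      + Ai 0 * Ai 0 * (c / η) * (ωc * deriv Ai 0 * Ai 0 - Ai 0 * deriv Ai 0) ≠ 0 := by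
    have e : (0 : ℂ) + (Ai 0 * Ai 0 + Ai 0 * Ai 0)
        + Ai 0 * Ai 0 * (c / η) * (ωc * deriv Ai 0 * Ai 0 - Ai 0 * deriv Ai 0)
        = Ai 0 ^ 2 * ((2 + 2 * (κ / η) : ℝ) : ℂ) := by
      rw [hc]; push_cast; field_simp; ring
    rw [e]
    exact mul_ne_zero (pow_ne_zero 2 Ai_zero_ne)
      (by exact_mod_cast (show 2 + 2 * (κ / η) ≠ 0 by positivity))
  filter_upwards [hlim.eventually_ne hval, hpos] with p hp hp0 h0
  refine hp ?_
  have hW := mul_Wf_ne_zero hη hp0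
  have := mul_Df_eq (κ := κ) (z := p.2) (c := c) hW hηc (hdne p hp0) (by
    rw [hc, Wf_eq]; field_simp; ring) rfl rfl
  rw [h0, mul_zero] at this
  rw [this]
  simp only [Function.comp_apply, alphaP, alphaM, betaP]
  rw [hd p hp0]
  have e : -ωc * (p.2 - κ * p.1) * ((p.1 ^ (-(2 : ℝ) / 3) : ℝ) : ℂ)
      - -ωc * (p.2 + κ * p.1) * ((p.1 ^ (-(2 : ℝ) / 3) : ℝ) : ℂ)
      = ωc * (2 * κ * ((p.1 ^ ((1 : ℝ) / 3) : ℝ) : ℂ)) := by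
    rw [← hd p hp0]; ring
  rw [e]
  have := hdne p hp0
  have := ωc_ne_zero
  field_simp

/-- Disappearance of the shape resonances under a small electric field: for
small `f` all zeros of `D_f` in the closed lower half-plane either have modulus
between `f^{2/(3β)}` and `f^{β/2}`, or lie near the rays `arg z = −2π/3` or
`arg z = 0`. -/
theorem stmt7 (κ η : ℝ) (hκ : 0 < κ) (hη : 0 < η) (M β : ℝ)
    (hM : 20 < M) (hβ0 : 0 < β) (hβ1 : β < 1) :
    ∃ f₀ > (0 : ℝ), ∀ f : ℝ, 0 < f → f < f₀ → ∀ z : ℂ, z.im ≤ 0 → Df κ η f z = 0 →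
      (f ^ (2 / (3 * β)) ≤ ‖z‖ ∧ ‖z‖ ≤ f ^ (β / 2)) ∨
      (f ^ (β / 2) < ‖z‖ ∧
        |Complex.arg z + 2 * π / 3| <
          (‖z‖)⁻¹ * (1 + ‖z‖ ^ (-(1 : ℝ) / 2)) * M * f *
            Real.log (f⁻¹ + ‖z‖)) ∨
      (f ^ (β / 2) < ‖z‖ ∧
        |Complex.arg z| <
          ‖z‖ ^ (-(3 : ℝ) / 2) * M * f * Real.log (f⁻¹ + ‖z‖)) := by
  have hs : 2 / 3 < 2 / (3 * β) := by
    rw [div_lt_div_iff₀ (by norm_num) (by positivity)]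
    linarith
  have hlt : ∀ᶠ f in 𝓝[>] (0 : ℝ), f < 1 :=
    nhdsWithin_le_nhds (Iio_mem_nhds one_pos)
  obtain ⟨f₀, hf₀, h⟩ := mem_nhdsGT_iff_exists_Ioo_subset.1
    ((eventually_zero_near_rays hκ hη hM).and ((eventually_no_small_zero hκ hη hs).and hlt))
  refine ⟨f₀, hf₀, fun f hf0 hff z hz hD => ?_⟩
  obtain ⟨hrays, hsmall, hf1⟩ := h ⟨hf0, hff⟩
  rcases le_or_gt ‖z‖ (f ^ (β / 2)) with hle | hgt
  · exact Or.inl ⟨not_lt.1 fun hlt => hsmall z hlt hD, hle⟩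
  · have hsq : f ≤ ‖z‖ ^ 2 := by
      calc f = f ^ (1 : ℝ) := (Real.rpow_one f).symm
        _ ≤ f ^ β := Real.rpow_le_rpow_of_exponent_ge hf0 hf1.le hβ1.le
        _ = (f ^ (β / 2)) ^ 2 := by
          rw [← Real.rpow_natCast, ← Real.rpow_mul hf0.le]
          norm_num
        _ ≤ ‖z‖ ^ 2 := by gcongr
    exact Or.inr ((hrays z hz hsq hD).imp (fun h => ⟨hgt, h⟩) fun h => ⟨hgt, h⟩)
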